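/- Let U be a connected open set in ℂ^m and suppose F_j : B^m(0,r_j) → U, j = 1,…,N, are finitely many injective holomorphic maps whose images F_i(B^m(0,r_i)), i = 1,…,N, are pairwise disjoint. Let 0 < s < 1. Then there exists an injective holomorphic map F_0 : B^m(0,1) → U such that F_0(B^m(0,1)) ⊇ F_1(B^m(0, s·r_1)) ∪ ⋃_{j=2}^{N} F_j(B^m(0, s·r_j/32)). -/

import Mathlib

/-!
An injective holomorphic map of a ball is called an embedded ball here. The images of two disjoint
embedded balls in a connected open set `U`, slightly shrunk, are shown to lie in the image of a
single embedded ball (`BallEmb.merge_two`); an induction gives the same for finitely many balls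
(`exists_merge_all`). No factor `1/32` is lost on the way.

*Osgood's theorem* (`osgood`): an injective holomorphic map between spaces of equal dimension is an
immersion. Hence embedded balls have open images, and on compact sets both covering
(`stable_covering`) and injectivity (`eventually_injOn`) persist under small perturbations.

*The dumbbell* (`exists_dumbbell_map`). Any neighbourhood of two unit balls joined by a segment
along a unit vector `e` contains an embedded unit ball covering both balls shrunk a little. The map
`dumb` is the sum of the identity, a logarithmic multiple of `e`, and a ball automorphism which is
nearly constant except very near the boundary point `e`: most of the ball stays in place, a tiny
neighbourhood of `e` is blown up to the second ball, and the logarithm spreads out what is between.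

*Joining nearby balls* (`merge_close`). If two disjoint closed embedded balls are closer to each
other than the second is to the complement of `U`, a shortest segment between them lies in `U` and
meets both image spheres orthogonally. The map which is the first embedding on the left ball of a
dumbbell, affine on the stick, and the second embedding on the right ball is smoothed
holomorphically (`mergeMap`), with `√(z² + δ²)` in place of `|z|`. As `δ → 0` the smoothings
converge on the dumbbell to an injective map; orthogonality, and a generic unitary reparametrization
of the second ball, make their derivatives injective along the stick. For small `δ` they are
therefore injective near the dumbbell, and composing with a dumbbell map gives the embedded ball.

*Arbitrary balls.* Removing a compact embedded ball from `U` does not disconnect `U`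
(`BallEmb.isPreconnected_diff`). By connectedness, and merging with small round balls, the first
ball can be replaced, inside the complement of the second, by one which reaches any given point
(`BallEmb.exists_absorb`), in particular a point close to the second ball; then `merge_close`
applies.
-/

open Metric Set Filter Topology

/-! ### Regularity of holomorphic maps of several variables -/

section SCV
variable {E F : Type*} [NormedAddCommGroup E] [NormedSpace ℂ E] [NormedAddCommGroup F]
  [NormedSpace ℂ F]

lemma norm_fderiv_le_of_bound {f : E → F} {c : E} {R M : ℝ} (hR : 0 < R)
    (hd : DifferentiableOn ℂ f (ball c R)) (hM : ∀ z ∈ ball c R, ‖f z‖ ≤ M) :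
    ‖fderiv ℂ f c‖ ≤ 2 * M / R := by
  apply Complex.norm_fderiv_le_div_of_mapsTo_ball hd _ hR
  intro z hz
  rw [mem_closedBall, dist_eq_norm]
  have := norm_sub_le (f z) (f c)
  linarith [hM z hz, hM c (mem_ball_self hR)]

lemma exists_ball_lipschitz {f : E → F} {U : Set E} (hU : IsOpen U)
    (hf : DifferentiableOn ℂ f U) {x : E} (hx : x ∈ U) :
    ∃ r > 0, ∃ L ≥ 0, ball x r ⊆ U ∧ (∀ y ∈ ball x r, ‖fderiv ℂ f y‖ ≤ L) ∧
      ∀ y ∈ ball x r, ∀ z ∈ ball x r, ‖f y - f z‖ ≤ L * ‖y - z‖ := by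
  have hc : ContinuousAt f x := (hf.differentiableAt (hU.mem_nhds hx)).continuousAt
  have h1 : ∀ᶠ y in 𝓝 x, y ∈ U ∧ ‖f y‖ < ‖f x‖ + 1 :=
    (hU.eventually_mem hx).and (hc.norm.eventually_lt_const (by linarith))
  obtain ⟨R, hR, hb⟩ := Metric.eventually_nhds_iff_ball.1 h1
  have hfd : ∀ y ∈ ball x (R/2), ‖fderiv ℂ f y‖ ≤ 2 * (‖f x‖ + 1) / (R/2) := by
    intro y hy
    have hsub : ball y (R/2) ⊆ ball x R := by
      apply ball_subset_ball'; rw [mem_ball] at hy; linarith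
    exact norm_fderiv_le_of_bound (by linarith)
      (hf.mono fun z hz => (hb z (hsub hz)).1) fun z hz => (hb z (hsub hz)).2.le
  have hs2 : ball x (R/2) ⊆ U := fun z hz => (hb z (ball_subset_ball (by linarith) hz)).1
  refine ⟨R/2, by linarith, _, by positivity, hs2, hfd, ?_⟩
  intro y hy z hz
  exact (convex_ball x (R/2)).norm_image_sub_le_of_norm_fderiv_le
    (fun w hw => hf.differentiableAt (hU.mem_nhds (hs2 hw))) hfd hz hy

/-- Cauchy's estimate, applied to the difference of `f` and a translate of `f`. -/
lemma continuousOn_fderiv_of_holo {f : E → F} {U : Set E} (hU : IsOpen U)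
    (hf : DifferentiableOn ℂ f U) : ContinuousOn (fderiv ℂ f) U := by
  intro x hx
  apply ContinuousAt.continuousWithinAt
  obtain ⟨r, hr, L, hL, hsub, -, hlip⟩ := exists_ball_lipschitz hU hf hx
  have key : ∀ y ∈ ball x (r/2), ‖fderiv ℂ f y - fderiv ℂ f x‖ ≤ 2 * (L * ‖y - x‖) / (r/2) := by
    intro y hy
    rw [mem_ball, dist_eq_norm] at hy
    have hin : ∀ z ∈ ball x (r/2), z + (y - x) ∈ ball x r := by
      intro z hz
      rw [mem_ball, dist_eq_norm] at *
      calc ‖z + (y - x) - x‖ = ‖(z - x) + (y - x)‖ := by congr 1; abel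
        _ ≤ _ := norm_add_le _ _
        _ < r := by linarith
    have hin2 : ball x (r/2) ⊆ ball x r := ball_subset_ball (by linarith)
    have hdf : ∀ z ∈ ball x r, DifferentiableAt ℂ f z :=
      fun z hz => hf.differentiableAt (hU.mem_nhds (hsub hz))
    have hd : ∀ z ∈ ball x (r/2), DifferentiableAt ℂ (fun z => f (z + (y - x)) - f z) z := by
      intro z hz
      exact ((hdf _ (hin z hz)).comp z (differentiableAt_id.add_const _)).sub (hdf z (hin2 hz))
    have hest := norm_fderiv_le_of_bound (f := fun z => f (z + (y - x)) - f z)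
      (M := L * ‖y - x‖) (half_pos hr)
      (fun z hz => (hd z hz).differentiableWithinAt) (by
        intro z hz
        simpa using hlip _ (hin z hz) _ (hin2 hz))
    have hxx : x ∈ ball x (r/2) := mem_ball_self (half_pos hr)
    have : fderiv ℂ (fun z => f (z + (y - x)) - f z) x = fderiv ℂ f y - fderiv ℂ f x := by
      have h3 : HasFDerivAt f (fderiv ℂ f y) (x + (y - x)) := by
        have := (hdf _ (hin x hxx)).hasFDerivAt
        rwa [show x + (y - x) = y by abel] at this ⊢
      have h4 := h3.comp x ((hasFDerivAt_id x).add_const (y - x))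
      exact (h4.sub (hdf x (hin2 hxx)).hasFDerivAt).fderiv
    rwa [this] at hest
  rw [ContinuousAt, tendsto_iff_norm_sub_tendsto_zero]
  refine squeeze_zero' (Eventually.of_forall fun _ => norm_nonneg _)
    (g := fun y => 2 * (L * ‖y - x‖) / (r/2)) ?_ ?_
  · filter_upwards [ball_mem_nhds x (half_pos hr)] with y hy using key y hy
  · have : ContinuousAt (fun y => 2 * (L * ‖y - x‖) / (r/2)) x := by fun_prop
    simpa [ContinuousAt] using this

/-- The derivative in direction `v` is a Cauchy integral along a circle in that direction, and this
integral may be differentiated in the base point under the integral sign. -/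
lemma differentiableOn_fderiv_apply [CompleteSpace F] {f : E → F} {U : Set E} (hU : IsOpen U)
    (hf : DifferentiableOn ℂ f U) (v : E) :
    DifferentiableOn ℂ (fun x => fderiv ℂ f x v) U := by
  intro x hx
  apply DifferentiableAt.differentiableWithinAt
  obtain ⟨r, hr, L, hL, hsub, hfd, -⟩ := exists_ball_lipschitz hU hf hx
  obtain ⟨t, ht, htr⟩ : ∃ t > 0, t * ‖v‖ < r / 2 := by
    refine ⟨r / 2 / (‖v‖ + 1), by positivity, ?_⟩
    rw [div_mul_eq_mul_div, div_lt_iff₀ (by positivity)]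
    nlinarith [norm_nonneg v]
  have hdf : ∀ z ∈ ball x r, DifferentiableAt ℂ f z :=
    fun z hz => hf.differentiableAt (hU.mem_nhds (hsub hz))
  have hin : ∀ z ∈ ball x (r/2), ∀ a : ℂ, ‖a‖ ≤ t → z + a • v ∈ ball x r := by
    intro z hz a ha
    rw [mem_ball, dist_eq_norm] at *
    calc ‖z + a • v - x‖ = ‖(z - x) + a • v‖ := by congr 1; abel
      _ ≤ ‖z - x‖ + ‖a‖ * ‖v‖ := by rw [← norm_smul]; exact norm_add_le _ _
      _ ≤ ‖z - x‖ + t * ‖v‖ := by gcongr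
      _ < r := by linarith
  have hcm : ∀ θ : ℝ, ‖circleMap 0 t θ‖ ≤ t := fun θ => by simp [abs_of_pos ht]
  have hform : ∀ z ∈ ball x (r/2), fderiv ℂ f z v = (2 * Real.pi * Complex.I : ℂ)⁻¹ •
      ∫ θ in (0:ℝ)..2 * Real.pi,
        (deriv (circleMap 0 t) θ * (circleMap 0 t θ - 0)⁻¹ ^ 2) • f (z + circleMap 0 t θ • v) := by
    intro z hz
    have hd : ∀ a ∈ closedBall (0:ℂ) t, DifferentiableAt ℂ (fun a : ℂ => f (z + a • v)) a := by
      intro a ha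
      have := hin z hz a (by simpa using ha)
      exact (hdf _ this).comp a (by fun_prop)
    have h1 := DifferentiableOn.deriv_eq_smul_circleIntegral (f := fun a : ℂ => f (z + a • v)) ht
      (fun a ha => (hd a ha).differentiableWithinAt)
    have h2 : deriv (fun a : ℂ => f (z + a • v)) 0 = fderiv ℂ f z v := by
      have h3 : HasFDerivAt f (fderiv ℂ f z) (z + (0:ℂ) • v) := by
        have := (hdf z (ball_subset_ball (by linarith) hz)).hasFDerivAt
        simpa using this
      have h4 : HasDerivAt (fun a : ℂ => z + a • v) v 0 := by
        simpa using ((hasDerivAt_id (0:ℂ)).smul_const v).const_add z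
      exact (h3.comp_hasDerivAt (0:ℂ) h4).deriv
    rw [← h2, eq_inv_smul_iff₀ Complex.two_pi_I_ne_zero, ← h1]
    simp only [circleIntegral, smul_smul, one_div, inv_pow]
  have hcont : ∀ z ∈ ball x (r/2), Continuous fun θ : ℝ => f (z + circleMap 0 t θ • v) := by
    intro z hz
    rw [continuous_iff_continuousAt]
    intro θ
    exact (hdf _ (hin z hz _ (hcm θ))).continuousAt.comp (f := fun θ => z + circleMap 0 t θ • v) (by fun_prop)
  have hker : Continuous fun θ : ℝ => (deriv (circleMap 0 t) θ * (circleMap 0 t θ - 0)⁻¹ ^ 2) := by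
    have : ∀ θ, circleMap 0 t θ ≠ 0 := fun θ => circleMap_ne_center ht.ne'
    simp only [deriv_circleMap, sub_zero]
    fun_prop (disch := simpa using this _)
  have hintegral := intervalIntegral.hasFDerivAt_integral_of_dominated_of_fderiv_le
    (μ := MeasureTheory.volume) (a := 0) (b := 2 * Real.pi) (s := ball x (r/2)) (x₀ := x)
    (F := fun z θ => (deriv (circleMap 0 t) θ * (circleMap 0 t θ - 0)⁻¹ ^ 2) •
      f (z + circleMap 0 t θ • v))
    (F' := fun z θ => (deriv (circleMap 0 t) θ * (circleMap 0 t θ - 0)⁻¹ ^ 2) •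
      fderiv ℂ f (z + circleMap 0 t θ • v))
    (bound := fun θ => ‖(deriv (circleMap 0 t) θ * (circleMap 0 t θ - 0)⁻¹ ^ 2)‖ * L)
    (ball_mem_nhds x (half_pos hr))
    (by
      filter_upwards [ball_mem_nhds x (half_pos hr)] with z hz
      exact (hker.smul (hcont z hz)).aestronglyMeasurable)
    ((hker.smul (hcont x (mem_ball_self (half_pos hr)))).intervalIntegrable _ _)
    (by
      have : Continuous fun θ : ℝ => fderiv ℂ f (x + circleMap 0 t θ • v) := by
        rw [continuous_iff_continuousAt]
        intro θ
        have hm := hsub (hin x (mem_ball_self (half_pos hr)) _ (hcm θ))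
        exact ((continuousOn_fderiv_of_holo hU hf).continuousAt (hU.mem_nhds hm)).comp
          (f := fun θ => x + circleMap 0 t θ • v) (by fun_prop)
      exact (hker.smul this).aestronglyMeasurable)
    (by
      refine Eventually.of_forall fun θ _ z hz => ?_
      rw [norm_smul]
      gcongr
      exact hfd _ (hin z hz _ (hcm θ)))
    ((hker.norm.mul continuous_const).intervalIntegrable _ _)
    (by
      refine Eventually.of_forall fun θ _ z hz => ?_
      have h := (hdf _ (hin z hz _ (hcm θ))).hasFDerivAt
      have h2 := h.comp z ((hasFDerivAt_id z).add_const (circleMap 0 t θ • v))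
      exact h2.const_smul _)
  have := (hintegral.const_smul ((2 * Real.pi * Complex.I : ℂ)⁻¹)).differentiableAt
  refine this.congr_of_eventuallyEq ?_
  filter_upwards [ball_mem_nhds x (half_pos hr)] with z hz using hform z hz

lemma contDiffOn_of_holo [FiniteDimensional ℂ E] [CompleteSpace F] {f : E → F} {U : Set E}
    (hU : IsOpen U) (hf : DifferentiableOn ℂ f U) (n : ℕ) : ContDiffOn ℂ n f U := by
  induction n generalizing f with
  | zero => exact contDiffOn_zero.2 hf.continuousOn
  | succ n ih =>
    push_cast
    rw [contDiffOn_succ_iff_fderiv_of_isOpen hU]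
    refine ⟨hf, by simp, ?_⟩
    rw [contDiffOn_clm_apply]
    intro v
    exact ih (differentiableOn_fderiv_apply hU hf v)

lemma contDiffAt_of_holo [FiniteDimensional ℂ E] [CompleteSpace F] {f : E → F} {U : Set E}
    (hU : IsOpen U) (hf : DifferentiableOn ℂ f U) (n : ℕ) {x : E} (hx : x ∈ U) :
    ContDiffAt ℂ n f x :=
  (contDiffOn_of_holo hU hf n).contDiffAt (hU.mem_nhds hx)

lemma hasStrictFDerivAt_of_holo [FiniteDimensional ℂ E] [CompleteSpace F] {f : E → F} {U : Set E}
    (hU : IsOpen U) (hf : DifferentiableOn ℂ f U) {x : E} (hx : x ∈ U) :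
    HasStrictFDerivAt f (fderiv ℂ f x) x :=
  (contDiffAt_of_holo hU hf 1 hx).hasStrictFDerivAt (by simp)

end SCV

/-! ### Osgood's theorem -/

/-- If `f - f p` vanishes at `p` to order `k ≥ 2`, it is the `k`-th power of a local coordinate, so
that `f` takes nearby values `k` times. -/
lemma deriv_ne_zero_of_injOn {f : ℂ → ℂ} {U : Set ℂ} (hU : IsOpen U)
    (hf : DifferentiableOn ℂ f U) (hinj : InjOn f U) {p : ℂ} (hp : p ∈ U) : deriv f p ≠ 0 := by
  intro hd
  have han : AnalyticAt ℂ (fun z => f z - f p) p :=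
    (hf.analyticAt (hU.mem_nhds hp)).sub analyticAt_const
  have htop : analyticOrderAt (fun z => f z - f p) p ≠ ⊤ := by
    intro h
    rw [analyticOrderAt_eq_top] at h
    have h2 : ∀ᶠ z in 𝓝 p, z = p := by
      filter_upwards [h, hU.mem_nhds hp] with z hz hzU using hinj hzU hp (sub_eq_zero.1 hz)
    have h3 : ∀ᶠ z in 𝓝[≠] p, z = p := h2.filter_mono nhdsWithin_le_nhds
    obtain ⟨z, hz, hz'⟩ := (h3.and self_mem_nhdsWithin).exists
    exact hz' hz
  obtain ⟨k, hk⟩ := ENat.ne_top_iff_exists.1 htop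
  obtain ⟨g, hg, hgp, hfg⟩ := (han.analyticOrderAt_eq_natCast).1 hk.symm
  have hk0 : k ≠ 0 := by
    rintro rfl
    have := hfg.self_of_nhds
    simp at this
    exact hgp this.symm
  have hk1 : k ≠ 1 := by
    rintro rfl
    have h1 : HasDerivAt (fun z => (z - p) ^ 1 • g z) (g p) p := by
      have := ((hasDerivAt_id p).sub_const p).fun_mul hg.differentiableAt.hasDerivAt
      simpa using this
    have h2 : HasDerivAt (fun z => f z - f p) 0 p := by
      have := (hf.differentiableAt (hU.mem_nhds hp)).hasDerivAt.sub_const (f p)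
      rwa [hd] at this
    exact hgp ((h1.congr_of_eventuallyEq hfg).unique h2)
  -- a local `k`-th root `h` of `f - f p`
  set c : ℂ := (g p) ^ ((k : ℂ)⁻¹) with hc
  have hck : c ^ k = g p := by rw [hc, Complex.cpow_nat_inv_pow _ hk0]
  have hc0 : c ≠ 0 := by
    intro h; rw [h, zero_pow hk0] at hck; exact hgp hck.symm
  set q : ℂ → ℂ := fun z => c * (g z / g p) ^ ((k : ℂ)⁻¹) with hq
  have hqa : AnalyticAt ℂ q p := by
    refine analyticAt_const.mul ((hg.div analyticAt_const hgp).cpow analyticAt_const ?_)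
    simp [hgp]
  have hqk : ∀ z, q z ^ k = g z := by
    intro z
    simp only [hq, mul_pow, hck, Complex.cpow_nat_inv_pow _ hk0]
    field_simp
  have hqp : q p = c := by simp [hq, hgp]
  have hst : HasStrictDerivAt (fun z => (z - p) * q z) c p := by
    have h0 : HasStrictDerivAt (fun z => z - p) 1 p := (hasStrictDerivAt_id p).sub_const p
    have h1 := h0.fun_mul hqa.hasStrictDerivAt
    simpa [hqp] using h1
  have hmap := hst.map_nhds_eq hc0
  simp only [sub_self, zero_mul] at hmap
  have hV : {z | z ∈ U ∧ f z - f p = (z - p) ^ k • g z} ∈ 𝓝 p :=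
    (hU.eventually_mem hp).and hfg
  have himg : (fun z => (z - p) * q z) '' {z | z ∈ U ∧ f z - f p = (z - p) ^ k • g z} ∈ 𝓝 (0:ℂ) := by
    rw [← hmap]; exact image_mem_map hV
  obtain ⟨ζ, hζ⟩ : ∃ ζ : ℂ, IsPrimitiveRoot ζ k := ⟨_, Complex.isPrimitiveRoot_exp k hk0⟩
  have hζ1 : ζ ≠ 1 := hζ.ne_one (by omega)
  have himg2 : ∀ᶠ w in 𝓝 (0:ℂ), ζ * w ∈ (fun z => (z - p) * q z) ''
      {z | z ∈ U ∧ f z - f p = (z - p) ^ k • g z} := by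
    have : ContinuousAt (fun w : ℂ => ζ * w) 0 := by fun_prop
    exact this.eventually_mem (by simpa using himg)
  have h3 : ∀ᶠ w in 𝓝[≠] (0:ℂ), _ := (himg2.and himg).filter_mono nhdsWithin_le_nhds
  obtain ⟨w, ⟨⟨a, ⟨haU, ha⟩, ha'⟩, ⟨b, ⟨hbU, hb⟩, hb'⟩⟩, hw⟩ := (h3.and self_mem_nhdsWithin).exists
  simp only at ha' hb'
  have hab : f a = f b := by
    have e1 : f a - f p = (ζ * w) ^ k := by
      rw [ha, ← ha', mul_pow, hqk, smul_eq_mul]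
    have e2 : f b - f p = w ^ k := by
      rw [hb, ← hb', mul_pow, hqk, smul_eq_mul]
    rw [mul_pow, hζ.pow_eq_one, one_mul, ← e2] at e1
    linear_combination e1
  have := hinj haU hbU hab
  subst this
  rw [hb'] at ha'
  have : (ζ - 1) * w = 0 := by linear_combination -ha'
  rcases mul_eq_zero.1 this with h | h
  · exact hζ1 (sub_eq_zero.1 h)
  · exact hw h

section
variable {E F : Type*} [NormedAddCommGroup E] [NormedSpace ℂ E] [NormedAddCommGroup F]
  [NormedSpace ℂ F] [FiniteDimensional ℂ E] [FiniteDimensional ℂ F]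

lemma exists_equiv_of_injective (A : E →L[ℂ] F) (hA : Function.Injective A)
    (hdim : Module.finrank ℂ E = Module.finrank ℂ F) :
    ∃ B : E ≃L[ℂ] F, (B : E →L[ℂ] F) = A := by
  refine ⟨(LinearMap.linearEquivOfInjective (A : E →ₗ[ℂ] F) hA hdim).toContinuousLinearEquiv, ?_⟩
  ext x
  simp

lemma exists_holo_local_inverse {f : E → F} {U : Set E} (hU : IsOpen U)
    (hf : DifferentiableOn ℂ f U) {p : E} (hp : p ∈ U) (A : E ≃L[ℂ] F)
    (hA : (A : E →L[ℂ] F) = fderiv ℂ f p) :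
    ∃ g : F → E, HasFDerivAt g (A.symm : F →L[ℂ] E) (f p) ∧ g (f p) = p ∧
      (∀ᶠ y in 𝓝 (f p), DifferentiableAt ℂ g y) ∧ (∀ᶠ y in 𝓝 (f p), f (g y) = y) ∧
      (∀ᶠ x in 𝓝 p, g (f x) = x) ∧ Tendsto g (𝓝 (f p)) (𝓝 p) := by
  have : CompleteSpace E := FiniteDimensional.complete ℂ E
  have : CompleteSpace F := FiniteDimensional.complete ℂ F
  have hc : ContDiffAt ℂ ((1:ℕ)) f p := contDiffAt_of_holo hU hf 1 hp
  have hfd : HasFDerivAt f (A : E →L[ℂ] F) p := by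
    rw [hA]; exact (hf.differentiableAt (hU.mem_nhds hp)).hasFDerivAt
  have hst := hc.hasStrictFDerivAt' hfd (by simp)
  refine ⟨hst.localInverse f A p, hst.to_localInverse.hasFDerivAt, hst.localInverse_apply_image, ?_,
    hst.eventually_right_inverse, hst.eventually_left_inverse, hst.localInverse_tendsto⟩
  have h1 : ContDiffAt ℂ (1:ℕ) (hst.localInverse f A p) (f p) := hc.to_localInverse hfd (by simp)
  filter_upwards [h1.eventually (by simp)] with y hy using hy.differentiableAt (by simp)

end

/-- The derivative with respect to the second variable of a function on `ℂ × ℂ`. -/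
noncomputable def vderiv (J : ℂ × ℂ → ℂ) : ℂ × ℂ → ℂ := fun z => fderiv ℂ J z (0, 1)

lemma vderiv_iterate_holo {J : ℂ × ℂ → ℂ} {N : Set (ℂ × ℂ)} (hN : IsOpen N)
    (hJ : DifferentiableOn ℂ J N) (k : ℕ) : DifferentiableOn ℂ (vderiv^[k] J) N := by
  induction k with
  | zero => exact hJ
  | succ k ih =>
    rw [Function.iterate_succ_apply']
    exact differentiableOn_fderiv_apply hN ih _

lemma iteratedDeriv_slice {J : ℂ × ℂ → ℂ} {N : Set (ℂ × ℂ)} (hN : IsOpen N)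
    (hJ : DifferentiableOn ℂ J N) (k : ℕ) {z : ℂ × ℂ} (hz : z ∈ N) :
    iteratedDeriv k (fun μ => J (z.1, μ)) z.2 = vderiv^[k] J z := by
  induction k generalizing z with
  | zero => simp
  | succ k ih =>
    rw [iteratedDeriv_succ, Function.iterate_succ_apply']
    have hev : iteratedDeriv k (fun μ => J (z.1, μ)) =ᶠ[𝓝 z.2] fun μ => vderiv^[k] J (z.1, μ) := by
      have : ContinuousAt (fun μ : ℂ => (z.1, μ)) z.2 := by fun_prop
      filter_upwards [this.eventually_mem (hN.mem_nhds hz)] with μ hμ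
      exact ih hμ
    rw [hev.deriv_eq]
    have h1 : HasFDerivAt (vderiv^[k] J) (fderiv ℂ (vderiv^[k] J) z) z :=
      ((vderiv_iterate_holo hN hJ k).differentiableAt (hN.mem_nhds hz)).hasFDerivAt
    have h2 : HasDerivAt (fun μ : ℂ => (z.1, μ)) ((0:ℂ), (1:ℂ)) z.2 :=
      (hasDerivAt_const z.2 z.1).prodMk (hasDerivAt_id z.2)
    exact (HasFDerivAt.comp_hasDerivAt z.2 (f := fun μ : ℂ => (z.1, μ)) h1 h2).deriv

lemma slice_analyticAt {J : ℂ × ℂ → ℂ} {N : Set (ℂ × ℂ)} (hN : IsOpen N)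
    (hJ : DifferentiableOn ℂ J N) {a b : ℂ} (hz : (a, b) ∈ N) :
    AnalyticAt ℂ (fun μ => J (a, μ)) b := by
  have hc : Continuous (fun μ : ℂ => (a, μ)) := by fun_prop
  have hd : DifferentiableOn ℂ (fun μ => J (a, μ)) ((fun μ : ℂ => (a, μ)) ⁻¹' N) :=
    hJ.comp (by fun_prop) (fun _ h => h)
  exact hd.analyticAt ((hN.preimage hc).mem_nhds hz)

/-- Zeros persist on nearby parallel slices. -/
lemma hurwitz_slice {J : ℂ × ℂ → ℂ} {N : Set (ℂ × ℂ)} (hN : IsOpen N)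
    (hJ : DifferentiableOn ℂ J N) {a b : ℂ} (hz : (a, b) ∈ N) (h0 : J (a, b) = 0)
    (hne : ¬ ∀ᶠ μ in 𝓝 b, J (a, μ) = 0) {V : Set (ℂ × ℂ)} (hV : V ∈ 𝓝 (a, b)) :
    ∀ᶠ l in 𝓝 a, ∃ μ, (l, μ) ∈ V ∧ J (l, μ) = 0 := by
  have hiso := (slice_analyticAt hN hJ hz).eventually_eq_zero_or_eventually_ne_zero.resolve_left hne
  rw [eventually_nhdsWithin_iff] at hiso
  obtain ⟨ε, hε, hb⟩ := Metric.eventually_nhds_iff_ball.1 hiso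
  obtain ⟨δ, hδ, hVb⟩ := Metric.mem_nhds_iff.1 (inter_mem hV (hN.mem_nhds hz))
  obtain ⟨ρ, hρ, hρε, hρδ⟩ : ∃ ρ > 0, ρ < ε ∧ ρ < δ :=
    ⟨min ε δ / 2, by positivity, by linarith [min_le_left ε δ, lt_min hε hδ],
      by linarith [min_le_right ε δ, lt_min hε hδ]⟩
  have hsubset : ∀ l ∈ ball a δ, ∀ μ ∈ closedBall b ρ, (l, μ) ∈ V ∩ N := by
    intro l hl μ hμ
    apply hVb
    rw [← ball_prod_same]
    exact ⟨hl, closedBall_subset_ball hρδ hμ⟩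
  have haδ : a ∈ ball a δ := mem_ball_self hδ
  have hcont : ∀ l ∈ ball a δ, ∀ μ ∈ closedBall b ρ, ContinuousAt J (l, μ) := fun l hl μ hμ =>
    (hJ.differentiableAt (hN.mem_nhds (hsubset l hl μ hμ).2)).continuousAt
  have hsne : (sphere b ρ).Nonempty := NormedSpace.sphere_nonempty.2 hρ.le
  obtain ⟨μ1, hμ1, hmin⟩ := (isCompact_sphere b ρ).exists_isMinOn hsne
    (f := fun μ => ‖J (a, μ)‖) (by
      intro μ hμ
      exact ((hcont a haδ μ (sphere_subset_closedBall hμ)).comp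
        (f := fun μ => (a, μ)) (by fun_prop)).norm.continuousWithinAt)
  set m := ‖J (a, μ1)‖ with hm
  have hm0 : 0 < m := by
    rw [hm, norm_pos_iff]
    refine hb μ1 ?_ ?_
    · rw [mem_ball]; rw [mem_sphere] at hμ1; linarith
    · rintro rfl; simp at hμ1; linarith
  have hev1 : ∀ᶠ l in 𝓝 a, ∀ μ ∈ sphere b ρ, m / 2 < ‖J (l, μ)‖ := by
    apply (isCompact_sphere b ρ).eventually_forall_of_forall_eventually
    intro μ hμ
    have h1 : m / 2 < ‖J (a, μ)‖ := by
      have : m ≤ ‖J (a, μ)‖ := hmin hμ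
      linarith
    exact ((hcont a haδ μ (sphere_subset_closedBall hμ)).norm).eventually_const_lt h1
  have hev2 : ∀ᶠ l in 𝓝 a, ‖J (l, b)‖ < m / 8 := by
    have h1 : ContinuousAt (fun l => ‖J (l, b)‖) a :=
      ((hcont a haδ b (mem_closedBall_self hρ.le)).comp (f := fun l => (l, b)) (by fun_prop)).norm
    apply h1.eventually_lt_const
    simp [h0]; linarith
  filter_upwards [hev1, hev2, ball_mem_nhds a hδ] with l hl1 hl2 hl
  have han : AnalyticOnNhd ℂ (fun μ => J (l, μ)) (closedBall b ρ) := fun μ hμ =>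
    slice_analyticAt hN hJ (hsubset l hl μ hμ).2
  have hlow : ∀ μ ∈ sphere b ρ, m / 4 ≤ ‖J (l, μ) - J (l, b)‖ := by
    intro μ hμ
    have := norm_sub_norm_le (J (l, μ)) (J (l, b))
    linarith [hl1 μ hμ]
  have himg := DiffContOnCl.ball_subset_image_closedBall (f := fun μ => J (l, μ)) (z₀ := b)
    (r := ρ) (ε := m / 4) (by
      apply DifferentiableOn.diffContOnCl
      rw [closure_ball b hρ.ne']
      exact han.differentiableOn) hρ hlow (by
      intro hcon
      simp only [ne_eq, not_not] at hcon
      have := han.eqOn_of_preconnected_of_eventuallyEq (g := fun _ => J (l, b))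
        analyticOnNhd_const (convex_closedBall b ρ).isPreconnected (mem_closedBall_self hρ.le) hcon
      have h2 := this (sphere_subset_closedBall hμ1)
      have h3 := hlow μ1 hμ1
      simp only at h2
      rw [h2] at h3
      simp at h3
      linarith)
  obtain ⟨μ, hμ, hμ0⟩ := himg (show (0:ℂ) ∈ ball (J (l, b)) (m / 4 / 2) by
    rw [mem_ball, dist_eq_norm, zero_sub, norm_neg]; linarith)
  exact ⟨μ, (hsubset l hl μ hμ).1, hμ0⟩

/-- The zero set of a holomorphic function of two variables contains a holomorphic graph. The
order `k` of vanishing in the second variable is decreased until it is locally constant along the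
zero set, which then is the smooth zero set of the `(k-1)`-st derivative. -/
lemma exists_zero_curve {J : ℂ × ℂ → ℂ} {N : Set (ℂ × ℂ)} (hN : IsOpen N)
    (hJ : DifferentiableOn ℂ J N) (k : ℕ) : ∀ z ∈ N, J z = 0 → vderiv^[k] J z ≠ 0 →
    ∃ (l₀ : ℂ) (φ : ℂ → ℂ), ∀ᶠ l in 𝓝 l₀,
      (l, φ l) ∈ N ∧ J (l, φ l) = 0 ∧ DifferentiableAt ℂ φ l := by
  induction k using Nat.strong_induction_on with
  | _ k ih =>
    rintro ⟨a, b⟩ hz hz0 hzk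
    have hk : k ≠ 0 := by rintro rfl; exact hzk hz0
    obtain ⟨k, rfl⟩ := Nat.exists_eq_succ_of_ne_zero hk
    by_cases hcase : ∃ z ∈ N, J z = 0 ∧ vderiv^[k] J z ≠ 0
    · obtain ⟨z, hzN, hz1, hz2⟩ := hcase
      exact ih k (Nat.lt_succ_self k) z hzN hz1 hz2
    push Not at hcase
    set g := vderiv^[k] J with hg
    have hgd : DifferentiableOn ℂ g N := vderiv_iterate_holo hN hJ k
    have hgv : fderiv ℂ g (a, b) (0, 1) ≠ 0 := by
      rw [Function.iterate_succ_apply'] at hzk; exact hzk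
    have hgab : g (a, b) = 0 := hcase _ hz hz0
    have hΘ : DifferentiableOn ℂ (fun z : ℂ × ℂ => (z.1, g z)) N := by fun_prop
    have hΘd : fderiv ℂ (fun z : ℂ × ℂ => (z.1, g z)) (a, b) =
        (ContinuousLinearMap.fst ℂ ℂ ℂ).prod (fderiv ℂ g (a, b)) :=
      (hasFDerivAt_fst.prodMk (hgd.differentiableAt (hN.mem_nhds hz)).hasFDerivAt).fderiv
    have hinj : Function.Injective (fderiv ℂ (fun z : ℂ × ℂ => (z.1, g z)) (a, b)) := by
      rw [hΘd, injective_iff_map_eq_zero]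
      rintro ⟨x, y⟩ hxy
      simp only [ContinuousLinearMap.prod_apply, ContinuousLinearMap.coe_fst', Prod.mk_eq_zero] at hxy
      obtain ⟨rfl, h2⟩ := hxy
      have h3 : ((0:ℂ), y) = y • ((0:ℂ), (1:ℂ)) := by simp
      rw [h3, map_smul, smul_eq_mul, mul_eq_zero] at h2
      simp [h2.resolve_right hgv]
    obtain ⟨A, hA⟩ := exists_equiv_of_injective _ hinj rfl
    obtain ⟨σ, -, hσ0, hσd, hσr, hσl, hσt⟩ := exists_holo_local_inverse hN hΘ hz A hA
    simp only [hgab] at hσ0 hσd hσr hσt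
    have hcp : ContinuousAt (fun l : ℂ => (l, (0:ℂ))) a := by fun_prop
    refine ⟨a, fun l => (σ (l, 0)).2, ?_⟩
    have hne : ¬ ∀ᶠ μ in 𝓝 b, J (a, μ) = 0 := by
      intro h
      apply hzk
      rw [← iteratedDeriv_slice hN hJ (k+1) hz]
      have : (fun μ => J (a, μ)) =ᶠ[𝓝 b] fun _ => 0 := h
      simp only
      rw [this.iteratedDeriv_eq]
      simp
    have hH := hurwitz_slice hN hJ hz hz0 hne (V := {z | σ (z.1, g z) = z} ∩ N)
      (inter_mem hσl (hN.mem_nhds hz))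
    filter_upwards [hH, hcp.eventually hσd] with l hl hl2
    obtain ⟨μ, ⟨hμ1, hμN⟩, hμ0⟩ := hl
    have : g (l, μ) = 0 := hcase _ hμN hμ0
    simp only [mem_ofPred_eq, this] at hμ1
    rw [hμ1]
    refine ⟨hμN, hμ0, ?_⟩
    exact (differentiableAt_snd).comp l (DifferentiableAt.comp (f := fun l : ℂ => (l, (0:ℂ))) l hl2 (by fun_prop))

universe u v

lemma differentiableOn_finsetProd_complex {E : Type*} [NormedAddCommGroup E]
    [NormedSpace ℂ E] {ι : Type*} (s : Finset ι) {g : ι → E → ℂ} {U : Set E}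
    (hg : ∀ i ∈ s, DifferentiableOn ℂ (g i) U) :
    DifferentiableOn ℂ (fun x => ∏ i ∈ s, g i x) U := by
  classical
  induction s using Finset.induction_on with
  | empty => simp
  | insert a s ha ih =>
    simp only [Finset.prod_insert ha]
    exact (hg a (Finset.mem_insert_self a s)).mul
      (ih fun i hi => hg i (Finset.mem_insert_of_mem hi))

section
variable {E : Type u} {F : Type v} [NormedAddCommGroup E] [NormedSpace ℂ E] [NormedAddCommGroup F]
  [NormedSpace ℂ F] [FiniteDimensional ℂ E] [FiniteDimensional ℂ F]

/-- A holomorphic function on `U` detecting the points where the derivative is not injective. -/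
lemma exists_jacobian {f : E → F} {U : Set E} (hU : IsOpen U)
    (hf : DifferentiableOn ℂ f U) (hdim : Module.finrank ℂ E = Module.finrank ℂ F) :
    ∃ J : E → ℂ, DifferentiableOn ℂ J U ∧
      ∀ x, J x ≠ 0 ↔ Function.Injective (fderiv ℂ f x) := by
  have : CompleteSpace F := FiniteDimensional.complete ℂ F
  obtain ⟨e⟩ : Nonempty (F ≃L[ℂ] E) := ⟨ContinuousLinearEquiv.ofFinrankEq hdim.symm⟩
  set b := Module.finBasis ℂ E
  refine ⟨fun x => (LinearMap.toMatrix b b (e.toLinearMap ∘ₗ (fderiv ℂ f x).toLinearMap)).det, ?_, ?_⟩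
  · simp only [Matrix.det_apply]
    apply DifferentiableOn.fun_sum
    intro σ _
    apply DifferentiableOn.const_smul
    apply differentiableOn_finsetProd_complex
    intro i _
    have h1 := differentiableOn_fderiv_apply hU hf (b i)
    have h2 : DifferentiableOn ℂ
        (((b.coord (σ i)).toContinuousLinearMap ∘L (e : F →L[ℂ] E)) ∘ fun x => fderiv ℂ f x (b i)) U :=
      (ContinuousLinearMap.differentiable _).comp_differentiableOn h1
    refine h2.congr fun x _ => ?_
    simp [LinearMap.toMatrix_apply]
  · intro x
    simp only [LinearMap.det_toMatrix]
    have h1 : Function.Injective (fderiv ℂ f x) ↔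
        Function.Injective (e.toLinearMap ∘ₗ (fderiv ℂ f x).toLinearMap) := by
      rw [LinearMap.coe_comp]
      exact (Function.Injective.of_comp_iff e.injective _).symm
    rw [h1, ← LinearMap.ker_eq_bot, ne_eq, LinearMap.det_eq_zero_iff_ker_ne_bot, not_not]

end

/-- If the derivative at `p` vanishes and the derivative is nowhere of intermediate rank, a
holomorphic map in at least two variables cannot be injective: it is constant along a holomorphic
curve in the zero set of the Jacobian. -/
lemma osgood_aux {E : Type u} {F : Type v} [NormedAddCommGroup E] [NormedSpace ℂ E] [NormedAddCommGroup F]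
    [NormedSpace ℂ F] [FiniteDimensional ℂ E] [FiniteDimensional ℂ F]
    {f : E → F} {U : Set E} (hU : IsOpen U)
    (hf : DifferentiableOn ℂ f U) (hinj : InjOn f U)
    (hdim : Module.finrank ℂ E = Module.finrank ℂ F) (hn : 2 ≤ Module.finrank ℂ E)
    (hdich : ∀ x ∈ U, fderiv ℂ f x = 0 ∨ Function.Injective (fderiv ℂ f x))
    {p : E} (hp : p ∈ U) : fderiv ℂ f p ≠ 0 := by
  intro hp0
  obtain ⟨J, hJ, hJi⟩ := exists_jacobian hU hf hdim
  have hnt : Nontrivial E := Module.nontrivial_of_finrank_pos (R := ℂ) (by omega)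
  have hJ0 : ∀ x ∈ U, J x = 0 → fderiv ℂ f x = 0 := by
    intro x hx h
    refine (hdich x hx).resolve_right fun hi => (hJi x).2 hi h
  have hJp : J p = 0 := by
    by_contra h
    have h1 := (hJi p).1 h
    obtain ⟨w, hw⟩ := exists_ne (0:E)
    apply hw
    apply h1
    simp [hp0]
  obtain ⟨ε, hε, hball⟩ := Metric.isOpen_iff.1 hU p hp
  -- otherwise `f` would be constant near `p`
  obtain ⟨q, hq, hJq⟩ : ∃ q ∈ ball p ε, J q ≠ 0 := by
    by_contra! hcon
    obtain ⟨w, hw⟩ := exists_ne (0:E)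
    have hmem : p + ((ε / 2 / ‖w‖ : ℝ) : ℂ) • w ∈ ball p ε := by
      rw [mem_ball, dist_eq_norm, add_sub_cancel_left, norm_smul, Complex.norm_real, norm_div,
        norm_norm, div_mul_cancel₀ _ (norm_ne_zero_iff.2 hw), Real.norm_of_nonneg (by positivity)]
      linarith
    have hconst := (convex_ball p ε).is_const_of_fderivWithin_eq_zero (𝕜 := ℂ) (f := f)
      (hf.mono hball) (by
        intro x hx
        rw [fderivWithin_of_isOpen isOpen_ball hx]
        exact hJ0 x (hball hx) (hcon x hx)) (mem_ball_self hε) hmem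
    have := hinj hp (hball hmem) hconst
    simp [hw, hε.ne'] at this
  set v := q - p with hv
  have hv0 : v ≠ 0 := by
    intro h
    rw [hv, sub_eq_zero] at h
    exact hJq (h ▸ hJp)
  obtain ⟨w, hw⟩ : ∃ w : E, ∀ c : ℂ, c • v ≠ w := by
    by_contra! hcon
    have : Module.finrank ℂ E ≤ 1 := finrank_le_one v hcon
    omega
  -- reduction to two variables
  set L : ℂ × ℂ → E := fun z => p + z.1 • w + z.2 • v with hL
  have hLc : Continuous L := by fun_prop
  have hLd : Differentiable ℂ L := by fun_prop
  have hN : IsOpen (L ⁻¹' U) := hU.preimage hLc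
  have hJL : DifferentiableOn ℂ (J ∘ L) (L ⁻¹' U) := hJ.comp hLd.differentiableOn (fun _ h => h)
  have h00 : ((0:ℂ), (0:ℂ)) ∈ L ⁻¹' U := by simp [hL, hp]
  obtain ⟨k, hk⟩ : ∃ k, vderiv^[k] (J ∘ L) (0, 0) ≠ 0 := by
    by_contra! hcon
    have hline : ContinuousOn (fun μ : ℂ => p + μ • v) univ := by fun_prop
    have han : AnalyticOnNhd ℂ (fun μ => (J ∘ L) (0, μ)) {μ : ℂ | p + μ • v ∈ ball p ε} := by
      intro μ hμ
      refine slice_analyticAt hN hJL ?_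
      simpa [hL] using hball hμ
    have hpre : IsPreconnected {μ : ℂ | p + μ • v ∈ ball p ε} := by
      apply Convex.isPreconnected
      intro x hx y hy s t hs ht hst
      have := convex_ball p ε hx hy hs ht hst
      simp only [mem_ofPred_eq]
      convert this using 1
      rw [smul_add, smul_add, add_smul, smul_assoc, smul_assoc]
      have : p = s • p + t • p := by rw [← add_smul, hst, one_smul]
      nth_rewrite 1 [this]
      abel
    have hev : (fun μ => (J ∘ L) (0, μ)) =ᶠ[𝓝 0] 0 := by
      have h1 := slice_analyticAt hN hJL h00
      have h2 : analyticOrderAt (fun μ => (J ∘ L) (0, μ)) 0 = ⊤ := by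
        rw [ENat.eq_top_iff_forall_ge]
        intro n
        rw [natCast_le_analyticOrderAt_iff_iteratedDeriv_eq_zero h1]
        intro i _
        exact (iteratedDeriv_slice hN hJL i h00).trans (hcon i)
      exact analyticOrderAt_eq_top.1 h2
    have := han.eqOn_zero_of_preconnected_of_eventuallyEq_zero hpre (by simp [hε]) hev
      (show (1:ℂ) ∈ _ by simpa [hv, dist_eq_norm] using hq)
    apply hJq
    simpa [hL, hv] using this
  obtain ⟨l₀, φ, hφ⟩ := exists_zero_curve hN hJL k _ h00 (by simpa [hL] using hJp) hk
  obtain ⟨δ, hδ, hφδ⟩ := Metric.eventually_nhds_iff_ball.1 hφ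
  have hder : ∀ l ∈ ball l₀ δ, HasFDerivAt (fun l => f (L (l, φ l))) (0 : ℂ →L[ℂ] F) l := by
    intro l hl
    obtain ⟨h1, h2, h3⟩ := hφδ l hl
    have h4 : HasFDerivAt f (0 : E →L[ℂ] F) (L (l, φ l)) := by
      have := (hf.differentiableAt (hU.mem_nhds h1)).hasFDerivAt
      rwa [hJ0 _ h1 h2] at this
    have h5 : DifferentiableAt ℂ (fun l => L (l, φ l)) l :=
      (hLd _).comp l (differentiableAt_id.prodMk h3)
    have h6 := h4.comp l h5.hasFDerivAt
    rwa [ContinuousLinearMap.zero_comp] at h6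
  obtain ⟨l₁, hl₁, hne⟩ : ∃ l₁ ∈ ball l₀ δ, l₁ ≠ l₀ := by
    refine ⟨l₀ + ((δ / 2 : ℝ) : ℂ), ?_, ?_⟩
    · rw [mem_ball, dist_eq_norm, add_sub_cancel_left, Complex.norm_real, Real.norm_of_nonneg (by positivity)]
      linarith
    · simp [hδ.ne']
  have hconst := (convex_ball l₀ δ).is_const_of_fderivWithin_eq_zero (𝕜 := ℂ)
    (f := fun l => f (L (l, φ l)))
    (fun l hl => (hder l hl).differentiableAt.differentiableWithinAt) (by
      intro x hx
      rw [fderivWithin_of_isOpen isOpen_ball hx]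
      exact (hder x hx).fderiv) (mem_ball_self hδ) hl₁
  have h6 := hinj (hφδ _ (mem_ball_self hδ)).1 (hφδ _ hl₁).1 hconst
  simp only [hL] at h6
  have hsub : l₁ - l₀ ≠ 0 := sub_ne_zero.2 hne
  apply hw ((l₁ - l₀)⁻¹ * (φ l₀ - φ l₁))
  have h7 : (φ l₀ - φ l₁) • v = (l₁ - l₀) • w := by
    rw [sub_smul, sub_smul, sub_eq_sub_iff_add_eq_add]
    have h8 : p + (l₀ • w + φ l₀ • v) = p + (l₁ • w + φ l₁ • v) := by
      simpa [add_assoc] using h6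
    have h9 := add_left_cancel h8
    rw [add_comm, h9]
  rw [mul_smul, h7, smul_smul, inv_mul_cancel₀ hsub, one_smul]

/-- **Osgood's theorem**: an injective holomorphic map between spaces of equal dimension is an
immersion. The proof is by induction on the dimension: at a point where the derivative does not
vanish, `f` maps a smooth level set of `ℓ ∘ f`, for a suitable linear form `ℓ`, injectively into a
hyperplane, so that the derivative is injective there; `osgood_aux` excludes the zeros of the
derivative. -/
theorem osgood (n : ℕ) : ∀ (E : Type u) (F : Type v) [NormedAddCommGroup E] [NormedSpace ℂ E]
    [NormedAddCommGroup F] [NormedSpace ℂ F] [FiniteDimensional ℂ E] [FiniteDimensional ℂ F]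
    (f : E → F) (U : Set E), IsOpen U → DifferentiableOn ℂ f U → InjOn f U →
    Module.finrank ℂ E = n → Module.finrank ℂ F = n → ∀ p ∈ U,
    Function.Injective (fderiv ℂ f p) := by
  induction n with
  | zero =>
    intro E F _ _ _ _ _ _ f U _ _ _ hE _ p _ x y _
    have := Module.finrank_zero_iff.1 hE
    exact Subsingleton.elim x y
  | succ n ih =>
    intro E F _ _ _ _ _ _ f U hU hf hinj hE hF
    have hCE : CompleteSpace E := FiniteDimensional.complete ℂ E
    -- if the derivative does not vanish, split off one dimension
    have hdich : ∀ x ∈ U, fderiv ℂ f x = 0 ∨ Function.Injective (fderiv ℂ f x) := by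
      intro p hp
      by_cases hA0 : fderiv ℂ f p = 0
      · exact Or.inl hA0
      right
      set A := fderiv ℂ f p with hA
      obtain ⟨v, hv⟩ : ∃ v, A v ≠ 0 := by
        by_contra! h
        exact hA0 (ContinuousLinearMap.ext h)
      obtain ⟨ℓ, hℓ⟩ : ∃ ℓ : F →L[ℂ] ℂ, ℓ (A v) = 1 := by
        obtain ⟨g, hg⟩ := SeparatingDual.exists_eq_one (R := ℂ) hv
        exact ⟨g, hg⟩
      have hfp : HasFDerivAt f A p := (hf.differentiableAt (hU.mem_nhds hp)).hasFDerivAt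
      -- straightening of the level sets of `ℓ ∘ f`
      set Θ : E → E := fun x => x + (ℓ (f x) - ℓ (f p) - ℓ (A (x - p))) • v with hΘ
      have hΘd : DifferentiableOn ℂ Θ U := by
        have h1 : DifferentiableOn ℂ (fun x => ℓ (f x)) U :=
          ℓ.differentiable.comp_differentiableOn hf
        have h2 : Differentiable ℂ (fun x => ℓ (A (x - p))) := by fun_prop
        exact differentiableOn_id.add (((h1.sub_const _).sub h2.differentiableOn).smul_const v)
      have hΘp : Θ p = p := by simp [hΘ]
      have hΘ' : fderiv ℂ Θ p = ((ContinuousLinearEquiv.refl ℂ E : E ≃L[ℂ] E) : E →L[ℂ] E) := by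
        have h1 : HasFDerivAt (fun x => ℓ (f x)) (ℓ.comp A) p := ℓ.hasFDerivAt.comp p hfp
        have h2 : HasFDerivAt (fun x => ℓ (A (x - p))) (ℓ.comp A) p :=
          (ℓ.comp A).hasFDerivAt.comp p ((hasFDerivAt_id p).sub_const p)
        have h3 := (hasFDerivAt_id p).add (((h1.sub_const (ℓ (f p))).sub h2).smul_const v)
        refine (HasFDerivAt.fderiv h3).trans ?_
        ext x
        simp
      obtain ⟨σ, hσ', hσp, hσd, hσr, -, hσt⟩ := exists_holo_local_inverse hU hΘd hp _ hΘ'.symm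
      rw [hΘp] at hσ' hσp hσd hσr hσt
      let K : Submodule ℂ E := LinearMap.ker (ℓ.comp A : E →L[ℂ] ℂ).toLinearMap
      let K' : Submodule ℂ F := LinearMap.ker ℓ.toLinearMap
      have hKdim : Module.finrank ℂ K = n := by
        have h1 := Module.Dual.finrank_ker_add_one_of_ne_zero (V₁ := E)
          (f := (ℓ.comp A : E →L[ℂ] ℂ).toLinearMap) (by
            intro h
            have : (ℓ.comp A) v = 0 := DFunLike.congr_fun h v
            simp [hℓ] at this)
        have h2 : Module.finrank ℂ K + 1 = Module.finrank ℂ E := h1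
        omega
      have hK'dim : Module.finrank ℂ K' = n := by
        have h1 := Module.Dual.finrank_ker_add_one_of_ne_zero (V₁ := F)
          (f := ℓ.toLinearMap) (by
            intro h
            have : ℓ (A v) = 0 := DFunLike.congr_fun h (A v)
            simp [hℓ] at this)
        have h2 : Module.finrank ℂ K' + 1 = Module.finrank ℂ F := h1
        omega
      let P : F →L[ℂ] K' := LinearMap.toContinuousLinearMap
        (LinearMap.codRestrict K' ((ContinuousLinearMap.id ℂ F - ℓ.smulRight (A v)).toLinearMap) (by
          intro c
          simp [K', hℓ]))
      have hP : ∀ w, (P w : F) = w - ℓ w • A v := fun w => rfl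
      have hκ : ContinuousAt (fun k : K => p + (k : E)) 0 := by fun_prop
      have hev : ∀ᶠ k : K in 𝓝 0, DifferentiableAt ℂ σ (p + k) ∧ Θ (σ (p + k)) = p + k ∧
          σ (p + k) ∈ U := by
        have h1 := (hσd.and (hσr.and (hσt.eventually_mem (hU.mem_nhds hp))))
        have h2 : Tendsto (fun k : K => p + (k : E)) (𝓝 0) (𝓝 p) := by simpa [ContinuousAt] using hκ
        exact h2.eventually h1
      obtain ⟨ε, hε, hball⟩ := Metric.eventually_nhds_iff_ball.1 hev
      set R : K → K' := fun k => P (f (σ (p + k))) with hR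
      have hRd : DifferentiableOn ℂ R (ball 0 ε) := by
        intro k hk
        obtain ⟨h1, h2, h3⟩ := hball k hk
        have h4 : DifferentiableAt ℂ (fun k : K => p + (k : E)) k :=
          (differentiableAt_const p).add K.subtypeL.differentiableAt
        have h5 : DifferentiableAt ℂ (fun k : K => σ (p + k)) k :=
          DifferentiableAt.comp (f := fun k : K => p + (k : E)) k h1 h4
        have h6 : DifferentiableAt ℂ (fun k : K => f (σ (p + k))) k :=
          DifferentiableAt.comp (f := fun k : K => σ (p + k)) k (hf.differentiableAt (hU.mem_nhds h3)) h5
        exact (P.differentiableAt.comp k h6).differentiableWithinAt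
      have hlev : ∀ k ∈ ball (0:K) ε, ℓ (f (σ (p + k))) = ℓ (f p) := by
        intro k hk
        obtain ⟨h1, h2, h3⟩ := hball k hk
        have h4 := congrArg (fun x => ℓ (A (x - p))) h2
        have hk0 : ℓ (A k) = 0 := k.2
        simp only [hΘ, add_sub_cancel_left, hk0] at h4
        rw [add_sub_right_comm] at h4
        simp only [map_add, map_smul, hℓ, smul_eq_mul, mul_one] at h4
        linear_combination h4
      have hRinj : InjOn R (ball 0 ε) := by
        intro k hk k' hk' hkk
        have h1 : (P (f (σ (p + k))) : F) = P (f (σ (p + k'))) := congrArg Subtype.val hkk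
        rw [hP, hP, hlev k hk, hlev k' hk'] at h1
        have h2 := hinj (hball k hk).2.2 (hball k' hk').2.2 (sub_left_injective h1)
        have h3 := congrArg Θ h2
        rw [(hball k hk).2.1, (hball k' hk').2.1] at h3
        exact Subtype.ext (add_left_cancel h3)
      have hRi := ih K K' R (ball 0 ε) isOpen_ball hRd hRinj hKdim hK'dim 0 (mem_ball_self hε)
      have hR' : HasFDerivAt R (P.comp (A.comp K.subtypeL)) 0 := by
        have h1 : HasFDerivAt (fun k : K => p + (k : E)) K.subtypeL 0 :=
          K.subtypeL.hasFDerivAt.const_add p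
        have h2 : HasFDerivAt σ (ContinuousLinearMap.id ℂ E) (p + ((0 : K) : E)) := by
          simpa using hσ'
        have h3 := HasFDerivAt.comp (f := fun k : K => p + (k : E)) (0:K) h2 h1
        have h4 : HasFDerivAt f A (σ (p + ((0 : K) : E))) := by simpa [hσp] using hfp
        have h5 := HasFDerivAt.comp (f := σ ∘ fun k : K => p + (k : E)) (0:K) h4 h3
        exact P.hasFDerivAt.comp (0:K) h5
      rw [hR'.fderiv] at hRi
      rw [injective_iff_map_eq_zero]
      intro x hx
      have hxK : x ∈ K := by simp [K, hx]
      have : (⟨x, hxK⟩ : K) = 0 := by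
        apply hRi
        simp [hx]
      exact congrArg Subtype.val this
    intro p hp
    refine (hdich p hp).resolve_left ?_
    -- dimension one is the classical theorem, `osgood_aux` needs at least two variables
    rcases Nat.lt_or_ge n 1 with hn | hn
    · have hn0 : n = 0 := by omega
      subst hn0
      intro h0
      have : Nontrivial E := Module.nontrivial_of_finrank_pos (R := ℂ) (by omega)
      obtain ⟨w, hw⟩ := exists_ne (0:E)
      obtain ⟨e⟩ : Nonempty (F ≃L[ℂ] ℂ) :=
        ⟨ContinuousLinearEquiv.ofFinrankEq (by simp [hF])⟩
      have hLc : Continuous fun μ : ℂ => p + μ • w := by fun_prop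
      have hd := deriv_ne_zero_of_injOn (f := fun μ : ℂ => e (f (p + μ • w)))
        (U := (fun μ : ℂ => p + μ • w) ⁻¹' U) (hU.preimage hLc)
        (by
          have : DifferentiableOn ℂ (fun μ : ℂ => f (p + μ • w)) ((fun μ : ℂ => p + μ • w) ⁻¹' U) :=
            hf.comp (by fun_prop) (fun _ h => h)
          exact e.differentiable.comp_differentiableOn this)
        (by
          intro a ha b hb hab
          have := hinj ha hb (e.injective hab)
          exact smul_left_injective ℂ hw (add_left_cancel this)) (p := 0) (by simpa using hp)
      apply hd
      have h1 : HasFDerivAt f (0 : E →L[ℂ] F) (p + (0:ℂ) • w) := by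
        have := (hf.differentiableAt (hU.mem_nhds hp)).hasFDerivAt
        rw [h0] at this
        simpa using this
      have h2 : HasDerivAt (fun μ : ℂ => p + μ • w) w 0 := by
        simpa using ((hasDerivAt_id (0:ℂ)).smul_const w).const_add p
      have h3 := HasFDerivAt.comp_hasDerivAt (0:ℂ) (f := fun μ : ℂ => p + μ • w) h1 h2
      have h4 := (e : F →L[ℂ] ℂ).hasFDerivAt.comp_hasDerivAt (0:ℂ) h3
      exact h4.deriv.trans (by simp)
    · exact osgood_aux hU hf hinj (hE.trans hF.symm) (by omega) hdich hp

/-- Injective holomorphic maps are open. -/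
lemma image_mem_nhds_of_injOn {E : Type u} [NormedAddCommGroup E] [NormedSpace ℂ E]
    [FiniteDimensional ℂ E] {f : E → E} {U : Set E} (hU : IsOpen U)
    (hf : DifferentiableOn ℂ f U) (hinj : InjOn f U) {V : Set E} {p : E} (hp : p ∈ U)
    (hV : V ∈ 𝓝 p) : f '' V ∈ 𝓝 (f p) := by
  have : CompleteSpace E := FiniteDimensional.complete ℂ E
  obtain ⟨A, hA⟩ := exists_equiv_of_injective _ (osgood _ E E f U hU hf hinj rfl rfl p hp) rfl
  have hst := hasStrictFDerivAt_of_holo hU hf hp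
  rw [← hA] at hst
  rw [← hst.map_nhds_eq_of_equiv]
  exact image_mem_map hV

lemma isOpen_image_of_injOn {E : Type u} [NormedAddCommGroup E] [NormedSpace ℂ E]
    [FiniteDimensional ℂ E] {f : E → E} {U : Set E} (hU : IsOpen U)
    (hf : DifferentiableOn ℂ f U) (hinj : InjOn f U) {V : Set E} (hV : IsOpen V) (hVU : V ⊆ U) :
    IsOpen (f '' V) := by
  rw [isOpen_iff_mem_nhds]
  rintro _ ⟨x, hx, rfl⟩
  exact image_mem_nhds_of_injOn hU hf hinj (hVU hx) (hV.mem_nhds hx)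

/-! ### Stability of covering -/

/-- Stable covering: the image of a compact set under an immersion is eventually covered by the
images of locally uniform approximations. -/
lemma stable_covering {E : Type*} [NormedAddCommGroup E] [NormedSpace ℂ E]
    [FiniteDimensional ℂ E] {ι : Type*} {l : Filter ι} {W : Set E} (hW : IsOpen W) {f : E → E}
    (hf : DifferentiableOn ℂ f W) {C : Set E} (hC : IsCompact C) (hCW : C ⊆ W)
    (himm : ∀ x ∈ C, Function.Injective (fderiv ℂ f x)) {g : ι → E → E}
    (hg : ∀ᶠ i in l, DifferentiableOn ℂ (g i) W) (hlim : TendstoLocallyUniformlyOn g f l W) :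
    ∀ᶠ i in l, f '' C ⊆ g i '' W := by
  have : CompleteSpace E := FiniteDimensional.complete ℂ E
  refine hC.induction_on (p := fun s => ∀ᶠ i in l, f '' s ⊆ g i '' W) (by simp)
    (fun s t hst ht => ht.mono fun i hi => (image_mono hst).trans hi)
    (fun s t hs ht => (hs.and ht).mono fun i hi => by
      rw [image_union]; exact union_subset hi.1 hi.2) ?_
  intro x hx
  obtain ⟨A, hA⟩ := exists_equiv_of_injective _ (himm x hx) rfl
  have hst := hasStrictFDerivAt_of_holo hW hf (hCW hx)
  rw [← hA] at hst
  let S : (A : E →L[ℂ] E).NonlinearRightInverse :=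
    { toFun := A.symm
      nnnorm := ‖(A.symm : E →L[ℂ] E)‖₊ + 1
      bound' := fun y => by
        refine ((A.symm : E →L[ℂ] E).le_opNorm y).trans ?_
        gcongr
        simp
      right_inv' := A.apply_symm_apply }
  set c : NNReal := S.nnnorm⁻¹ / 2 with hc
  have hS : 0 < S.nnnorm := by positivity
  have hc0 : 0 < c := by positivity
  obtain ⟨s, hs, hsA⟩ := hst.approximates_deriv_on_nhds (c := c / 2) (Or.inr (by positivity))
  obtain ⟨t, ht, hlt⟩ : ∃ t ∈ 𝓝 x, TendstoUniformlyOn g f l t := by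
    have : ProperSpace E := FiniteDimensional.proper ℂ E
    obtain ⟨K, hK, hKW, hKc⟩ := local_compact_nhds (hW.mem_nhds (hCW hx))
    exact ⟨K, hK, (tendstoLocallyUniformlyOn_iff_forall_isCompact hW).1 hlim K hKW hKc⟩
  obtain ⟨R, hR, hRs⟩ := Metric.mem_nhds_iff.1 (inter_mem (inter_mem hs ht) (hW.mem_nhds (hCW hx)))
  set r := R / 3 with hr
  have hr0 : 0 < r := by positivity
  set d : ℝ := ((S.nnnorm : ℝ)⁻¹ - c) * r with hd
  have hd0 : 0 < d := by
    have : (c : ℝ) = (S.nnnorm : ℝ)⁻¹ / 2 := by simp [hc]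
    have h2 : 0 < (S.nnnorm : ℝ)⁻¹ := by positivity
    rw [hd, this]; apply mul_pos _ hr0; linarith
  set η : ℝ := min (c / 2 * r / 2) (d / 2) with hη
  have hη0 : 0 < η := by
    apply lt_min
    · have : (0:ℝ) < c := hc0
      positivity
    · positivity
  have hfc : ContinuousAt f x := hst.hasFDerivAt.continuousAt
  refine ⟨f ⁻¹' (ball (f x) (d / 2)), mem_nhdsWithin_of_mem_nhds
    (hfc.preimage_mem_nhds (ball_mem_nhds _ (by positivity))), ?_⟩
  rw [Metric.tendstoUniformlyOn_iff] at hlt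
  filter_upwards [hlt η hη0, hg] with i hi hgi
  have hsub : ∀ y ∈ ball x (2 * r), ball y r ⊆ ball x R := fun y hy => by
    apply ball_subset_ball'; rw [mem_ball] at hy; linarith
  have hderiv : ∀ y ∈ ball x (2 * r), ‖fderiv ℂ (fun z => g i z - f z) y‖ ≤ c / 2 := by
    intro y hy
    have h1 := norm_fderiv_le_of_bound (f := fun z => g i z - f z) (M := η) hr0
      ((hgi.sub hf).mono fun z hz => (hRs (hsub y hy hz)).2) (by
        intro z hz
        have := hi z (hRs (hsub y hy hz)).1.2
        rw [dist_comm, dist_eq_norm] at this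
        exact this.le)
    refine h1.trans ?_
    rw [div_le_iff₀ hr0]
    have := min_le_left ((c:ℝ) / 2 * r / 2) (d / 2)
    linarith
  have hsub2 : closedBall x r ⊆ ball x (2 * r) := closedBall_subset_ball (by linarith)
  have hsub3 : ball x (2 * r) ⊆ ball x R := ball_subset_ball (by linarith)
  have happ : ApproximatesLinearOn (g i) (A : E →L[ℂ] E) (closedBall x r) c := by
    intro y hy z hz
    have h1 : ‖f y - f z - A (y - z)‖ ≤ (c / 2 : NNReal) * ‖y - z‖ :=
      hsA _ (hRs (hsub3 (hsub2 hy))).1.1 _ (hRs (hsub3 (hsub2 hz))).1.1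
    have h2 := (convex_ball x (2 * r)).norm_image_sub_le_of_norm_fderiv_le (𝕜 := ℂ)
      (f := fun z => g i z - f z) (fun w hw => ((hgi.sub hf).differentiableAt
        (hW.mem_nhds (hRs (hsub3 hw)).2))) hderiv (hsub2 hz) (hsub2 hy)
    have h3 : g i y - g i z - (A : E →L[ℂ] E) (y - z) =
      (f y - f z - A (y - z)) + ((g i y - f y) - (g i z - f z)) := by
      simp only [ContinuousLinearEquiv.coe_coe]; abel
    rw [h3]
    refine (norm_add_le _ _).trans ?_
    push_cast at h1
    linarith
  have hsurj := happ.surjOn_closedBall_of_nonlinearRightInverse S hr0.le subset_rfl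
  rintro _ ⟨y, hy, rfl⟩
  obtain ⟨z, hz, hzy⟩ := hsurj (show f y ∈ closedBall (g i x) (((S.nnnorm : ℝ)⁻¹ - c) * r) by
    have h1 : dist (f y) (f x) < d / 2 := hy
    have h2 := hi x (hRs (mem_ball_self hR)).1.2
    have h3 := min_le_right ((c:ℝ) / 2 * r / 2) (d / 2)
    rw [mem_closedBall, ← hd]
    linarith [dist_triangle (f y) (f x) (g i x)])
  exact ⟨z, (hRs (hsub3 (hsub2 hz))).2, hzy⟩

/-! ### Automorphisms of the ball -/

section
variable {E : Type*} [NormedAddCommGroup E] [InnerProductSpace ℂ E]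

/-- The automorphism of the unit ball which in the direction `e` is `ζ ↦ (ζ - b) / (1 - b ζ)`. -/
noncomputable def mob (e : E) (b : ℝ) (z : E) : E :=
  (1 - b * inner ℂ e z)⁻¹ • ((inner ℂ e z - b) • e +
    ((√(1 - b ^ 2) : ℝ) : ℂ) • (z - inner ℂ e z • e))

lemma inner_perp {e : E} (he : ‖e‖ = 1) (z : E) : inner ℂ e (z - inner ℂ e z • e) = 0 := by
  rw [inner_sub_right, inner_smul_right, inner_self_eq_norm_sq_to_K, he]; simp

lemma norm_sq_smul_add {e : E} (he : ‖e‖ = 1) (p : ℂ) {v : E} (hv : inner ℂ e v = 0) :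
    ‖p • e + v‖ ^ 2 = ‖p‖ ^ 2 + ‖v‖ ^ 2 := by
  have := norm_add_sq_eq_norm_sq_add_norm_sq_of_inner_eq_zero (𝕜 := ℂ) (p • e) v
    (by rw [inner_smul_left, hv, mul_zero])
  rw [norm_smul, he, mul_one] at this
  linarith

lemma inner_smul_add {e : E} (he : ‖e‖ = 1) (p : ℂ) {v : E} (hv : inner ℂ e v = 0) :
    inner ℂ e (p • e + v) = p := by
  rw [inner_add_right, inner_smul_right, inner_self_eq_norm_sq_to_K, he, hv]; simp

lemma norm_sq_decomp {e : E} (he : ‖e‖ = 1) (z : E) :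
    ‖z‖ ^ 2 = ‖inner ℂ e z‖ ^ 2 + ‖z - inner ℂ e z • e‖ ^ 2 := by
  have := norm_sq_smul_add he (inner ℂ e z) (inner_perp he z)
  rw [← this]; congr 2; abel

lemma norm_inner_le_unit {e : E} (he : ‖e‖ = 1) (z : E) : ‖inner ℂ e z‖ ≤ ‖z‖ := by
  simpa [he] using norm_inner_le_norm (𝕜 := ℂ) e z

lemma re_one_sub_pos {e : E} (he : ‖e‖ = 1) {b : ℝ} {z : E} (hz : ‖z‖ ≤ 1) :
    1 - |b| ≤ (1 - (b : ℂ) * inner ℂ e z).re := by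
  have h1 : ((b : ℂ) * inner ℂ e z).re ≤ |b| := by
    refine (Complex.re_le_norm _).trans ?_
    rw [norm_mul, Complex.norm_real, Real.norm_eq_abs]
    exact mul_le_of_le_one_right (abs_nonneg _) ((norm_inner_le_unit he z).trans hz)
  simp only [Complex.sub_re, Complex.one_re]; linarith

lemma one_sub_ne_zero {e : E} (he : ‖e‖ = 1) {b : ℝ} (hb : |b| < 1) {z : E} (hz : ‖z‖ ≤ 1) :
    (1 - (b : ℂ) * inner ℂ e z) ≠ 0 := by
  intro h
  have := re_one_sub_pos he (b := b) hz
  rw [h, Complex.zero_re] at this; linarith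

lemma inner_mob {e : E} (he : ‖e‖ = 1) (b : ℝ) (z : E) :
    inner ℂ e (mob e b z) = (1 - b * inner ℂ e z)⁻¹ * (inner ℂ e z - b) := by
  rw [mob, inner_smul_right, inner_smul_add he]
  rw [inner_smul_right, inner_perp he, mul_zero]

lemma norm_mob {e : E} (he : ‖e‖ = 1) {b : ℝ} (hb : |b| < 1) {z : E} (hz : ‖z‖ ≤ 1) :
    ‖1 - (b : ℂ) * inner ℂ e z‖ ^ 2 * (1 - ‖mob e b z‖ ^ 2) = (1 - b ^ 2) * (1 - ‖z‖ ^ 2) := by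
  have h0 := one_sub_ne_zero he hb hz
  have h0' : ‖1 - (b : ℂ) * inner ℂ e z‖ ≠ 0 := norm_ne_zero_iff.2 h0
  have hb2 : 0 ≤ 1 - b ^ 2 := by nlinarith [abs_lt.1 hb]
  have h1 : ‖mob e b z‖ ^ 2 = (‖1 - (b : ℂ) * inner ℂ e z‖ ^ 2)⁻¹ *
      (‖inner ℂ e z - b‖ ^ 2 + (1 - b ^ 2) * ‖z - inner ℂ e z • e‖ ^ 2) := by
    rw [mob, norm_smul, mul_pow, norm_sq_smul_add he, norm_smul, mul_pow, norm_inv, inv_pow,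
      Complex.norm_real, Real.norm_eq_abs, sq_abs, Real.sq_sqrt hb2]
    rw [inner_smul_right, inner_perp he, mul_zero]
  rw [h1, norm_sq_decomp he z]
  field_simp
  rw [← Complex.normSq_eq_norm_sq, ← Complex.normSq_eq_norm_sq, ← Complex.normSq_eq_norm_sq]
  simp only [Complex.normSq_apply, Complex.sub_re, Complex.sub_im, Complex.one_re, Complex.one_im,
    Complex.mul_re, Complex.mul_im, Complex.ofReal_re, Complex.ofReal_im]
  ring

lemma mob_mem_ball {e : E} (he : ‖e‖ = 1) {b : ℝ} (hb : |b| < 1) {z : E} (hz : ‖z‖ < 1) :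
    ‖mob e b z‖ < 1 := by
  have h := norm_mob he hb hz.le
  have h0 := one_sub_ne_zero he hb hz.le
  have h0' : 0 < ‖1 - (b : ℂ) * inner ℂ e z‖ := norm_pos_iff.2 h0
  have hb2 : 0 < 1 - b ^ 2 := by nlinarith [abs_lt.1 hb]
  have h3 : 0 < 1 - ‖z‖ ^ 2 := by nlinarith [norm_nonneg z]
  have h4 : 0 < ‖1 - (b : ℂ) * inner ℂ e z‖ ^ 2 * (1 - ‖mob e b z‖ ^ 2) := by
    rw [h]; positivity
  have h5 := pos_of_mul_pos_right h4 (by positivity)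
  nlinarith [norm_nonneg (mob e b z)]

lemma one_add_inner_mob {e : E} (he : ‖e‖ = 1) {b : ℝ} (hb : |b| < 1) {z : E} (hz : ‖z‖ ≤ 1) :
    1 + b * inner ℂ e (mob e b z) = (1 - b ^ 2) / (1 - b * inner ℂ e z) := by
  have h0 := one_sub_ne_zero he hb hz
  rw [inner_mob he]
  field_simp
  ring

lemma mob_neg_mob {e : E} (he : ‖e‖ = 1) {b : ℝ} (hb : |b| < 1) {z : E} (hz : ‖z‖ ≤ 1) :
    mob e (-b) (mob e b z) = z := by
  have h0 := one_sub_ne_zero he hb hz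
  have hb2 : 0 < 1 - b ^ 2 := by nlinarith [abs_lt.1 hb]
  have hb3 : (1 - (b : ℂ) ^ 2) ≠ 0 := by exact_mod_cast hb2.ne'
  have h1 : mob e b z - inner ℂ e (mob e b z) • e =
      ((1 - b * inner ℂ e z)⁻¹ * ((√(1 - b ^ 2) : ℝ) : ℂ)) • (z - inner ℂ e z • e) := by
    rw [inner_mob he, mob]; module
  have h2 : ((√(1 - b ^ 2) : ℝ) : ℂ) * ((√(1 - b ^ 2) : ℝ) : ℂ) = 1 - (b : ℂ) ^ 2 := by
    rw [← Complex.ofReal_mul, Real.mul_self_sqrt hb2.le]; push_cast; ring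
  have h3 := one_add_inner_mob he hb hz
  rw [mob, h1]
  have h4 : (1 - ((-b : ℝ) : ℂ) * inner ℂ e (mob e b z)) =
      (1 - b ^ 2) / (1 - b * inner ℂ e z) := by rw [← h3]; push_cast; ring
  rw [h4, inner_mob he, neg_sq, smul_smul]
  have h5 : ((√(1 - b ^ 2) : ℝ) : ℂ) * ((1 - b * inner ℂ e z)⁻¹ * ((√(1 - b ^ 2) : ℝ) : ℂ)) =
    (1 - b * inner ℂ e z)⁻¹ * (1 - (b : ℂ) ^ 2) := by rw [← h2]; ring
  rw [h5, smul_add, smul_smul, smul_smul]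
  have h6 : ((1 - (b : ℂ) ^ 2) / (1 - b * inner ℂ e z))⁻¹ *
      ((1 - b * inner ℂ e z)⁻¹ * (1 - (b : ℂ) ^ 2)) = 1 := by field_simp
  have h7 : ((1 - (b : ℂ) ^ 2) / (1 - b * inner ℂ e z))⁻¹ *
      ((1 - b * inner ℂ e z)⁻¹ * (inner ℂ e z - b) - ((-b : ℝ) : ℂ)) = inner ℂ e z := by
    push_cast
    field_simp
    ring
  rw [h6, h7]; module

lemma norm_sub_sq_le {e : E} (he : ‖e‖ = 1) {b : ℝ} (hb0 : 0 ≤ b) (hb : b < 1) {z : E}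
    (hz : ‖z‖ ≤ 1) : ‖z - e‖ ^ 2 ≤ 4 * ‖1 - (b : ℂ) * inner ℂ e z‖ := by
  have h1 := norm_sub_sq (𝕜 := ℂ) z e
  have h2 : RCLike.re (inner ℂ z e) = (inner ℂ e z).re := by
    rw [inner_re_symm]; rfl
  rw [h2, he] at h1
  have h3 := Complex.re_le_norm (1 - (b : ℂ) * inner ℂ e z)
  simp only [Complex.sub_re, Complex.one_re, Complex.re_ofReal_mul] at h3
  have h4 : |(inner ℂ e z).re| ≤ 1 :=
    (Complex.abs_re_le_norm _).trans ((norm_inner_le_unit he z).trans hz)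
  obtain ⟨h5, h6⟩ := abs_le.1 h4
  rcases le_total 0 (inner ℂ e z).re with h | h
  · nlinarith [norm_nonneg z]
  · nlinarith [norm_nonneg z]

lemma norm_mob_add_sq_le {e : E} (he : ‖e‖ = 1) {b : ℝ} (hb0 : 0 ≤ b) (hb : b < 1) {z : E}
    (hz : ‖z‖ < 1) : ‖mob e b z + e‖ ^ 2 ≤ 8 * ((1 - b) / ‖1 - (b : ℂ) * inner ℂ e z‖) := by
  have hb' : |b| < 1 := by rwa [abs_of_nonneg hb0]
  have h1 := norm_sub_sq_le he hb0 hb (z := -mob e b z)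
    (by rw [norm_neg]; exact (mob_mem_ball he hb' hz).le)
  rw [inner_neg_right, mul_neg, sub_neg_eq_add, one_add_inner_mob he hb' hz.le, norm_div,
    ← neg_add', norm_neg] at h1
  refine h1.trans ?_
  have h2 : ‖(1 - (b : ℂ) ^ 2)‖ ≤ 2 * (1 - b) := by
    have : (1 - (b : ℂ) ^ 2) = ((1 - b ^ 2 : ℝ) : ℂ) := by push_cast; ring
    rw [this, Complex.norm_real, Real.norm_eq_abs, abs_of_nonneg (by nlinarith)]
    nlinarith
  calc _ ≤ 4 * (2 * (1 - b) / ‖1 - (b : ℂ) * inner ℂ e z‖) := by gcongr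
    _ = _ := by ring

lemma differentiableAt_mob {e : E} (he : ‖e‖ = 1) {b : ℝ} (hb : |b| < 1) {z : E}
    (hz : ‖z‖ ≤ 1) : DifferentiableAt ℂ (mob e b) z := by
  have h0 := one_sub_ne_zero he hb hz
  have h1 : DifferentiableAt ℂ (fun z : E => inner ℂ e z) z := (innerSL ℂ e).differentiableAt
  unfold mob
  exact (((differentiableAt_const _).sub (h1.const_mul _)).inv h0).smul
    (((h1.sub_const _).smul_const _).add ((differentiableAt_id.sub (h1.smul_const _)).const_smul _))

end

/-! ### The dumbbell map -/

/-- A function on a convex set whose derivative has negative real part is injective. -/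
lemma injOn_of_re_deriv_neg {S : Set ℂ} (hS : Convex ℝ S) {h h' : ℂ → ℂ}
    (hd : ∀ u ∈ S, HasDerivAt h (h' u) u) (hneg : ∀ u ∈ S, (h' u).re < 0) : InjOn h S := by
  intro u hu v hv huv
  by_contra hne
  let γ : ℝ → ℂ := fun t => u + t * (v - u)
  have hγS : ∀ t ∈ Icc (0:ℝ) 1, γ t ∈ S := by
    intro t ht
    have := hS.add_smul_sub_mem hu hv ht
    simpa [γ] using this
  have hγ : ∀ t, HasDerivAt γ (v - u) t := fun t => by
    exact (((Complex.ofRealCLM.hasDerivAt (x := t)).mul_const (v - u)).const_add u).congr_deriv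
      (by simp)
  let φ : ℝ → ℝ := fun t => (starRingEnd ℂ (v - u) * h (γ t)).re
  have hφ : ∀ t ∈ Icc (0:ℝ) 1,
      HasDerivAt φ ((starRingEnd ℂ (v - u) * (h' (γ t) * (v - u))).re) t := by
    intro t ht
    have h1 : HasDerivAt (fun t => h (γ t)) (h' (γ t) * (v - u)) t :=
      HasDerivAt.comp (𝕜' := ℂ) t (hd _ (hγS t ht)) (hγ t)
    have h2 := h1.const_mul (starRingEnd ℂ (v - u))
    exact Complex.reCLM.hasFDerivAt.comp_hasDerivAt t h2
  obtain ⟨c, hc, hc'⟩ := exists_hasDerivAt_eq_slope φ _ zero_lt_one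
    (fun t ht => (hφ t ht).continuousAt.continuousWithinAt)
    (fun t ht => hφ t (Ioo_subset_Icc_self ht))
  have h0 : φ 1 - φ 0 = 0 := by simp [φ, γ, huv]
  rw [h0, zero_div] at hc'
  have h3 : (starRingEnd ℂ (v - u) * (h' (γ c) * (v - u))).re =
      Complex.normSq (v - u) * (h' (γ c)).re := by
    rw [show starRingEnd ℂ (v - u) * (h' (γ c) * (v - u)) =
      (starRingEnd ℂ (v - u) * (v - u)) * h' (γ c) by ring, ← Complex.normSq_eq_conj_mul_self,
      Complex.re_ofReal_mul]
  rw [h3] at hc'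
  have h4 : 0 < Complex.normSq (v - u) := Complex.normSq_pos.2 (sub_ne_zero.2 (Ne.symm hne))
  have h5 := hneg _ (hγS c (Ioo_subset_Icc_self hc))
  nlinarith

section
variable {E : Type*} [NormedAddCommGroup E] [InnerProductSpace ℂ E]

/-- The dumbbell map: close to the identity away from `e`, close to a translate of the
automorphism `mob e b` very near `e`, and sweeping along a segment in between. -/
noncomputable def dumb (e : E) (ℓ b : ℝ) (z : E) : E :=
  z + (1 - ((ℓ / (-Real.log (1 - b)) : ℝ) : ℂ) * Complex.log (1 - b * inner ℂ e z)) • e +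
    mob e b z

lemma differentiableAt_dumb {e : E} (he : ‖e‖ = 1) {ℓ b : ℝ} (hb : |b| < 1) {z : E}
    (hz : ‖z‖ ≤ 1) : DifferentiableAt ℂ (dumb e ℓ b) z := by
  have h1 : DifferentiableAt ℂ (fun z : E => inner ℂ e z) z := (innerSL ℂ e).differentiableAt
  have h2 := re_one_sub_pos he (b := b) hz
  unfold dumb
  refine (differentiableAt_id.add (DifferentiableAt.smul_const ?_ _)).add
    (differentiableAt_mob he hb hz)
  refine (DifferentiableAt.const_mul ?_ _).const_sub _
  exact ((h1.const_mul _).const_sub _).clog (Or.inl (by linarith))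

lemma injOn_dumb {e : E} (he : ‖e‖ = 1) {ℓ b : ℝ} (hℓ : 0 < ℓ) (hb0 : 0 < b) (hb : b < 1) :
    InjOn (dumb e ℓ b) (ball 0 1) := by
  have hb' : |b| < 1 := by rwa [abs_of_pos hb0]
  have hb2 : 0 < 1 - b ^ 2 := by nlinarith
  set a : ℝ := ℓ / (-Real.log (1 - b)) with ha
  have ha0 : 0 < a := div_pos hℓ (neg_pos.2 (Real.log_neg (by linarith) (by linarith)))
  intro x hx y hy hxy
  rw [mem_ball_zero_iff] at hx hy
  have hform : ∀ z : E, dumb e ℓ b z = (inner ℂ e z + 1 - a * Complex.log (1 - b * inner ℂ e z)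
      + (1 - b * inner ℂ e z)⁻¹ * (inner ℂ e z - b)) • e +
      (1 + (1 - b * inner ℂ e z)⁻¹ * ((√(1 - b ^ 2) : ℝ) : ℂ)) • (z - inner ℂ e z • e) := by
    intro z
    unfold dumb mob
    rw [← ha]
    module
  have hin : ∀ z : E, inner ℂ e (dumb e ℓ b z) = inner ℂ e z + 1 -
      a * Complex.log (1 - b * inner ℂ e z) + (1 - b * inner ℂ e z)⁻¹ * (inner ℂ e z - b) := by
    intro z
    rw [hform, inner_smul_add he]
    rw [inner_smul_right, inner_perp he, mul_zero]
  have hre : ∀ z : E, ‖z‖ < 1 → 0 < (1 - b * inner ℂ e z).re := fun z hz => by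
    linarith [re_one_sub_pos he (b := b) hz.le]
  have hbC : (b : ℂ) ≠ 0 := by exact_mod_cast hb0.ne'
  -- the first coordinate in the variable `u = log (1 - b z₁)`
  let h : ℂ → ℂ := fun u => -Complex.exp u + ((1 - b ^ 2 : ℝ) : ℂ) * Complex.exp (-u) -
    ((a * b : ℝ) : ℂ) * u
  let h' : ℂ → ℂ := fun u => -Complex.exp u + ((1 - b ^ 2 : ℝ) : ℂ) * (Complex.exp (-u) * (-1)) -
    ((a * b : ℝ) : ℂ) * 1
  let S : Set ℂ := {u | |u.im| < Real.pi / 2}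
  have hS : Convex ℝ S := by
    have : S = Complex.im ⁻¹' Ioo (-(Real.pi / 2)) (Real.pi / 2) := by
      ext u; simp [S, abs_lt]
    rw [this]
    exact (convex_Ioo _ _).is_linear_preimage ⟨Complex.add_im, fun c x => by simp⟩
  have hinj : InjOn h S := by
    refine injOn_of_re_deriv_neg (h' := h') hS (fun u _ => ?_) (fun u hu => ?_)
    · exact (((Complex.hasDerivAt_exp u).neg).add (((hasDerivAt_neg u).cexp).const_mul _)).sub
        ((hasDerivAt_id u).const_mul _)
    · have hcos : 0 < Real.cos u.im := Real.cos_pos_of_mem_Ioo (abs_lt.1 hu)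
      have : (h' u).re = -(Real.exp u.re * Real.cos u.im) -
          (1 - b ^ 2) * (Real.exp (-u.re) * Real.cos u.im) - a * b := by
        simp only [h', Complex.sub_re, Complex.add_re, Complex.neg_re, Complex.exp_re,
          Complex.re_ofReal_mul, mul_neg, mul_one, Complex.neg_im, Real.cos_neg,
          Complex.ofReal_re]
        ring
      rw [this]
      have h1 : 0 < Real.exp u.re * Real.cos u.im := by positivity
      have h2 : 0 < (1 - b ^ 2) * (Real.exp (-u.re) * Real.cos u.im) := by positivity
      have h3 : 0 < a * b := by positivity
      linarith
  have hlogS : ∀ z : E, ‖z‖ < 1 → Complex.log (1 - b * inner ℂ e z) ∈ S := fun z hz => by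
    have := hre z hz
    simp only [S, mem_ofPred_eq, Complex.log_im]
    exact Complex.abs_arg_lt_pi_div_two_iff.2 (Or.inl this)
  have hval : ∀ z : E, ‖z‖ < 1 → h (Complex.log (1 - b * inner ℂ e z)) =
      b * inner ℂ e (dumb e ℓ b z) - b := by
    intro z hz
    have h0 := one_sub_ne_zero he hb' hz.le
    simp only [h]
    rw [hin, Complex.exp_neg, Complex.exp_log h0]
    push_cast
    field_simp
    ring
  have h1 : inner ℂ e x = inner ℂ e y := by
    have := hinj (hlogS x hx) (hlogS y hy) (by rw [hval x hx, hval y hy, hxy])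
    have h2 := congrArg Complex.exp this
    rw [Complex.exp_log (one_sub_ne_zero he hb' hx.le),
      Complex.exp_log (one_sub_ne_zero he hb' hy.le)] at h2
    exact mul_left_cancel₀ hbC (by linear_combination -h2)
  have h2 := hform x
  rw [hxy, hform y, h1] at h2
  have h3 := add_left_cancel h2
  have h4 : (1 + (1 - b * inner ℂ e y)⁻¹ * ((√(1 - b ^ 2) : ℝ) : ℂ)) ≠ 0 := by
    intro h
    have h5 := congrArg Complex.re h
    rw [Complex.add_re, mul_comm, Complex.re_ofReal_mul, Complex.inv_re, Complex.one_re,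
      Complex.zero_re] at h5
    have h6 : 0 < (1 - (b : ℂ) * inner ℂ e y).re := hre y hy
    have h7 := Complex.normSq_nonneg (1 - (b : ℂ) * inner ℂ e y)
    have : 0 ≤ √(1 - b ^ 2) * ((1 - (b : ℂ) * inner ℂ e y).re /
      Complex.normSq (1 - (b : ℂ) * inner ℂ e y)) := by positivity
    linarith
  have h5 := smul_right_injective E h4 h3
  exact (sub_left_inj.1 h5).symm

end

section
variable {E : Type*} [NormedAddCommGroup E] [InnerProductSpace ℂ E]

/-- Error term of the asymptotics of the dumbbell map. -/
noncomputable def dumbErr (ℓ b η : ℝ) : ℝ :=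
  ℓ / (-Real.log (1 - b)) * (-Real.log η + 1 + Real.pi / 2) + √(8 * ((1 - b) / η))

lemma tendsto_dumbErr (ℓ η : ℝ) : Tendsto (fun b => dumbErr ℓ b η) (𝓝[<] 1) (𝓝 0) := by
  have h0 : Tendsto (fun b : ℝ => 1 - b) (𝓝[<] 1) (𝓝[>] 0) := by
    rw [tendsto_nhdsWithin_iff]
    constructor
    · have : Tendsto (fun b : ℝ => 1 - b) (𝓝 1) (𝓝 (1 - 1)) := by
        exact (continuous_const.sub continuous_id).tendsto _
      rw [sub_self] at this
      exact this.mono_left nhdsWithin_le_nhds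
    · filter_upwards [self_mem_nhdsWithin] with b hb
      simpa using hb
  have h1 : Tendsto (fun b : ℝ => -Real.log (1 - b)) (𝓝[<] 1) atTop :=
    tendsto_neg_atBot_atTop.comp (Real.tendsto_log_nhdsGT_zero.comp h0)
  have h2 := (h1.const_div_atTop ℓ).mul_const (-Real.log η + 1 + Real.pi / 2)
  have h3 : Tendsto (fun b : ℝ => √(8 * ((1 - b) / η))) (𝓝[<] 1) (𝓝 (√(8 * (0 / η)))) := by
    exact (((h0.mono_right nhdsWithin_le_nhds).div_const η).const_mul 8).sqrt
  simpa [dumbErr] using h2.add h3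

lemma norm_smul_unit {e : E} (he : ‖e‖ = 1) (c : ℂ) : ‖c • e‖ = ‖c‖ := by
  rw [norm_smul, he, mul_one]

lemma dumb_aux {e : E} (he : ‖e‖ = 1) {ℓ b : ℝ} (hℓ : 0 < ℓ) (hb0 : 0 < b) (hb : b < 1) {z : E}
    (hz : ‖z‖ < 1) : 0 < ℓ / (-Real.log (1 - b)) ∧ 1 - b ≤ ‖1 - (b : ℂ) * inner ℂ e z‖ ∧
    ‖1 - (b : ℂ) * inner ℂ e z‖ ≤ 2 ∧
    |(Complex.log (1 - (b : ℂ) * inner ℂ e z)).im| ≤ Real.pi / 2 := by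
  have h1 := re_one_sub_pos he (b := b) hz.le
  rw [abs_of_pos hb0] at h1
  refine ⟨div_pos hℓ (neg_pos.2 (Real.log_neg (by linarith) (by linarith))), 
    h1.trans (Complex.re_le_norm _), ?_, ?_⟩
  · refine (norm_sub_le _ _).trans ?_
    rw [norm_one, norm_mul, Complex.norm_real, Real.norm_eq_abs, abs_of_pos hb0]
    nlinarith [norm_inner_le_unit he z, norm_nonneg (inner ℂ e z)]
  · rw [Complex.log_im]
    exact Complex.abs_arg_le_pi_div_two_iff.2 (by linarith)

/-- Away from `e` the dumbbell map is close to the identity. -/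
lemma dumb_est_left {e : E} (he : ‖e‖ = 1) {ℓ b η : ℝ} (hℓ : 0 < ℓ) (hb0 : 0 < b) (hb : b < 1)
    (hη : 0 < η) (hη1 : η ≤ 1) {z : E} (hz : ‖z‖ < 1)
    (hw : η ≤ ‖1 - (b : ℂ) * inner ℂ e z‖) : ‖dumb e ℓ b z - z‖ ≤ dumbErr ℓ b η := by
  obtain ⟨ha, h1, h2, h3⟩ := dumb_aux he hℓ hb0 hb hz
  set W := 1 - (b : ℂ) * inner ℂ e z with hW
  set a := ℓ / (-Real.log (1 - b)) with hadef
  have hW0 : 0 < ‖W‖ := by linarith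
  have h4 : dumb e ℓ b z - z = (-((a : ℂ) * Complex.log W)) • e + (mob e b z + e) := by
    unfold dumb; rw [← hW, ← hadef]; module
  have h5 : ‖mob e b z + e‖ ≤ √(8 * ((1 - b) / η)) := by
    apply Real.le_sqrt_of_sq_le
    refine (norm_mob_add_sq_le he hb0.le hb hz).trans ?_
    rw [← hW]
    have : 0 ≤ 1 - b := by linarith
    gcongr
  have hl0 : Real.log η ≤ 0 := Real.log_nonpos hη.le hη1
  have h6 : ‖Complex.log W‖ ≤ -Real.log η + 1 + Real.pi / 2 := by
    refine (Complex.norm_le_abs_re_add_abs_im _).trans (add_le_add ?_ h3)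
    rw [Complex.log_re, abs_le]
    have := Real.log_le_log hη hw
    have h7 := Real.log_le_sub_one_of_pos hW0
    constructor <;> linarith
  rw [h4]
  refine (norm_add_le _ _).trans (add_le_add ?_ h5)
  rw [norm_smul_unit he, norm_neg, norm_mul, Complex.norm_real, Real.norm_eq_abs, abs_of_pos ha]
  gcongr

/-- Very near `e` the dumbbell map is close to a translate of `mob e b`. -/
lemma dumb_est_right {e : E} (he : ‖e‖ = 1) {ℓ b η : ℝ} (hℓ : 0 < ℓ) (hb0 : 0 < b) (hb : b < 1)
    (hη : 0 < η) (hη1 : η ≤ 1) {z : E} (hz : ‖z‖ < 1)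
    (hw : ‖1 - (b : ℂ) * inner ℂ e z‖ ≤ (1 - b) / η) :
    ‖dumb e ℓ b z - (((2 + ℓ : ℝ) : ℂ) • e + mob e b z)‖ ≤ dumbErr ℓ b η := by
  obtain ⟨ha, h1, h2, h3⟩ := dumb_aux he hℓ hb0 hb hz
  set W := 1 - (b : ℂ) * inner ℂ e z with hW
  set a := ℓ / (-Real.log (1 - b)) with hadef
  have hb1 : 0 < 1 - b := by linarith
  have hW0 : 0 < ‖W‖ := by linarith
  have hL : Real.log (1 - b) < 0 := Real.log_neg (by linarith) (by linarith)
  have hℓa : ℓ = a * (-Real.log (1 - b)) := by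
    rw [hadef]; exact (div_mul_cancel₀ _ (neg_pos.2 hL).ne').symm
  have h4 : dumb e ℓ b z - (((2 + ℓ : ℝ) : ℂ) • e + mob e b z) =
      ((a : ℂ) * ((Real.log (1 - b) : ℝ) - Complex.log W)) • e + (z - e) := by
    unfold dumb; rw [← hW, ← hadef, hℓa]; push_cast; module
  have h5 : ‖z - e‖ ≤ √(8 * ((1 - b) / η)) := by
    apply Real.le_sqrt_of_sq_le
    refine (norm_sub_sq_le he hb0.le hb hz.le).trans ?_
    rw [← hW]
    have : 0 ≤ (1 - b) / η := by positivity
    linarith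
  have h6 : ‖(Real.log (1 - b) : ℝ) - Complex.log W‖ ≤ -Real.log η + 1 + Real.pi / 2 := by
    refine (Complex.norm_le_abs_re_add_abs_im _).trans (add_le_add ?_ ?_)
    · rw [Complex.sub_re, Complex.log_re, Complex.ofReal_re, abs_le]
      have := Real.log_le_log hW0 hw
      rw [Real.log_div hb1.ne' hη.ne'] at this
      have h7 := Real.log_le_log hb1 h1
      have := Real.log_nonpos hη.le hη1
      constructor <;> linarith
    · rwa [Complex.sub_im, Complex.ofReal_im, zero_sub, abs_neg]
  rw [h4]
  refine (norm_add_le _ _).trans (add_le_add ?_ h5)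
  rw [norm_smul_unit he, norm_mul, Complex.norm_real, Real.norm_eq_abs, abs_of_pos ha]
  gcongr

/-- In the intermediate region the dumbbell map is close to the stick. -/
lemma dumb_est_mid {e : E} (he : ‖e‖ = 1) {ℓ b η : ℝ} (hℓ : 0 < ℓ) (hb0 : 0 < b) (hb : b < 1)
    (hη : 0 < η) (hη1 : η ≤ 1) {z : E} (hz : ‖z‖ < 1)
    (hw : ‖1 - (b : ℂ) * inner ℂ e z‖ ≤ η) (hw' : (1 - b) / η ≤ ‖1 - (b : ℂ) * inner ℂ e z‖) :
    ∃ x : ℝ, 1 ≤ x ∧ x ≤ 1 + ℓ ∧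
      ‖dumb e ℓ b z - (x : ℂ) • e‖ ≤ dumbErr ℓ b η + 2 * √(8 * η) := by
  obtain ⟨ha, h1, h2, h3⟩ := dumb_aux he hℓ hb0 hb hz
  set W := 1 - (b : ℂ) * inner ℂ e z with hW
  set a := ℓ / (-Real.log (1 - b)) with hadef
  have hb1 : 0 < 1 - b := by linarith
  have hW0 : 0 < ‖W‖ := by linarith
  have hL : Real.log (1 - b) < 0 := Real.log_neg (by linarith) (by linarith)
  have hℓa : ℓ = a * (-Real.log (1 - b)) := by
    rw [hadef]; exact (div_mul_cancel₀ _ (neg_pos.2 hL).ne').symm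
  have hlW : Real.log ‖W‖ ≤ 0 := Real.log_nonpos hW0.le (hw.trans hη1)
  have hlW' := Real.log_le_log hb1 h1
  refine ⟨1 - a * Real.log ‖W‖, by nlinarith, by nlinarith, ?_⟩
  have h4 : dumb e ℓ b z - ((1 - a * Real.log ‖W‖ : ℝ) : ℂ) • e =
      ((a : ℂ) * (Real.log ‖W‖ - Complex.log W)) • e + ((z - e) + (mob e b z + e)) := by
    unfold dumb; rw [← hW, ← hadef]; push_cast; module
  have h5 : ‖z - e‖ ≤ √(8 * η) := by
    apply Real.le_sqrt_of_sq_le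
    refine (norm_sub_sq_le he hb0.le hb hz.le).trans ?_
    rw [← hW]; linarith
  have h5' : ‖mob e b z + e‖ ≤ √(8 * η) := by
    apply Real.le_sqrt_of_sq_le
    refine (norm_mob_add_sq_le he hb0.le hb hz).trans ?_
    rw [← hW]
    rw [div_le_iff₀ hη] at hw'
    have : (1 - b) / ‖W‖ ≤ η := by rw [div_le_iff₀ hW0]; linarith
    linarith
  have h6 : ‖(Real.log ‖W‖ : ℂ) - Complex.log W‖ ≤ -Real.log η + 1 + Real.pi / 2 := by
    have hlη := Real.log_nonpos hη.le hη1
    refine (Complex.norm_le_abs_re_add_abs_im _).trans (add_le_add ?_ ?_)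
    · rw [Complex.sub_re, Complex.log_re, Complex.ofReal_re, sub_self, abs_zero]
      linarith
    · rwa [Complex.sub_im, Complex.ofReal_im, zero_sub, abs_neg]
  have h7 : ‖((a : ℂ) * (Real.log ‖W‖ - Complex.log W)) • e‖ ≤ dumbErr ℓ b η := by
    rw [norm_smul_unit he, norm_mul, Complex.norm_real, Real.norm_eq_abs, abs_of_pos ha, dumbErr,
      ← hadef]
    have : 0 ≤ √(8 * ((1 - b) / η)) := Real.sqrt_nonneg _
    have : a * ‖(Real.log ‖W‖ : ℂ) - Complex.log W‖ ≤ a * (-Real.log η + 1 + Real.pi / 2) := by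
      gcongr
    linarith
  rw [h4]
  have h8 := norm_add_le (z - e) (mob e b z + e)
  refine (norm_add_le _ _).trans ?_
  linarith

/-- Two unit balls joined by a segment of length `ℓ`. -/
def dumbbell (e : E) (ℓ : ℝ) : Set E :=
  closedBall 0 1 ∪ (fun x : ℝ => (x : ℂ) • e) '' Icc 1 (1 + ℓ) ∪
    closedBall (((2 + ℓ : ℝ) : ℂ) • e) 1

lemma isCompact_dumbbell [FiniteDimensional ℂ E] (e : E) (ℓ : ℝ) : IsCompact (dumbbell e ℓ) := by
  have : ProperSpace E := FiniteDimensional.proper ℂ E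
  refine ((isCompact_closedBall _ _).union (isCompact_Icc.image ?_)).union (isCompact_closedBall _ _)
  fun_prop

/-- Any neighbourhood of a dumbbell contains an injective holomorphic image of the unit ball
which covers the two (slightly shrunken) balls of the dumbbell. -/
lemma exists_dumbbell_map [FiniteDimensional ℂ E] {e : E} (he : ‖e‖ = 1) {ℓ : ℝ} (hℓ : 0 < ℓ)
    {N : Set E} (hN : IsOpen N) (hKN : dumbbell e ℓ ⊆ N) {t : ℝ} (ht : t < 1) :
    ∃ D : E → E, DifferentiableOn ℂ D (ball 0 1) ∧ InjOn D (ball 0 1) ∧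
      MapsTo D (ball 0 1) N ∧ closedBall 0 t ⊆ D '' ball 0 1 ∧
      closedBall (((2 + ℓ : ℝ) : ℂ) • e) t ⊆ D '' ball 0 1 := by
  have : ProperSpace E := FiniteDimensional.proper ℂ E
  have hev : ∀ᶠ b : ℝ in 𝓝[<] 1, 0 < b ∧ b < 1 := by
    filter_upwards [Ioo_mem_nhdsLT (zero_lt_one (α := ℝ))] with b hb using hb
  obtain ⟨ε, hε, hεN⟩ := (isCompact_dumbbell e ℓ).exists_thickening_subset_open hN hKN
  -- the image stays in the neighbourhood
  have hmaps : ∀ᶠ b : ℝ in 𝓝[<] 1, MapsTo (dumb e ℓ b) (ball 0 1) N := by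
    obtain ⟨η, hη0, hη1, hη⟩ : ∃ η : ℝ, 0 < η ∧ η ≤ 1 ∧ 2 * √(8 * η) < ε / 2 := by
      have h1 : Tendsto (fun η : ℝ => 2 * √(8 * η)) (𝓝[>] 0) (𝓝 0) := by
        have : Tendsto (fun η : ℝ => 2 * √(8 * η)) (𝓝 0) (𝓝 (2 * √(8 * 0))) :=
          Continuous.tendsto (by fun_prop) _
        simp only [mul_zero, Real.sqrt_zero] at this
        exact this.mono_left nhdsWithin_le_nhds
      obtain ⟨η, h2, h3⟩ := ((h1.eventually_lt_const (half_pos hε)).and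
        (Ioo_mem_nhdsGT (zero_lt_one (α := ℝ)))).exists
      exact ⟨η, h3.1, h3.2.le, h2⟩
    filter_upwards [hev, (tendsto_dumbErr ℓ η).eventually_lt_const (half_pos hε)] with b hb hbε
    intro z hz
    rw [mem_ball_zero_iff] at hz
    apply hεN
    rw [mem_thickening_iff]
    rcases le_total η ‖1 - (b : ℂ) * inner ℂ e z‖ with hw | hw
    · refine ⟨z, Or.inl (Or.inl (by simpa using hz.le)), ?_⟩
      rw [dist_eq_norm]
      linarith [dumb_est_left he hℓ hb.1 hb.2 hη0 hη1 hz hw]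
    rcases le_total ((1 - b) / η) ‖1 - (b : ℂ) * inner ℂ e z‖ with hw' | hw'
    · obtain ⟨x, hx1, hx2, hx3⟩ := dumb_est_mid he hℓ hb.1 hb.2 hη0 hη1 hz hw hw'
      refine ⟨(x : ℂ) • e, Or.inl (Or.inr ⟨x, ⟨hx1, hx2⟩, rfl⟩), ?_⟩
      rw [dist_eq_norm]
      linarith
    · refine ⟨((2 + ℓ : ℝ) : ℂ) • e + mob e b z, Or.inr ?_, ?_⟩
      · rw [mem_closedBall, dist_eq_norm, add_sub_cancel_left]
        exact (mob_mem_ball he (by rw [abs_of_pos hb.1]; exact hb.2) hz).le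
      · rw [dist_eq_norm]
        linarith [dumb_est_right he hℓ hb.1 hb.2 hη0 hη1 hz hw']
  have hdiff : ∀ b : ℝ, 0 < b ∧ b < 1 → DifferentiableOn ℂ (dumb e ℓ b) (ball 0 1) :=
    fun b hb z hz => (differentiableAt_dumb he (by rw [abs_of_pos hb.1]; exact hb.2)
      (mem_ball_zero_iff.1 hz).le).differentiableWithinAt
  have htb : closedBall (0 : E) t ⊆ ball 0 1 := closedBall_subset_ball ht
  -- compact subsets of the ball lie in smaller balls
  have hcpt : ∀ K ⊆ ball (0 : E) 1, IsCompact K → ∃ η : ℝ, 0 < η ∧ η ≤ 1 ∧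
      ∀ z ∈ K, ‖z‖ ≤ 1 - η := by
    intro K hK hKc
    rcases K.eq_empty_or_nonempty with rfl | hne
    · exact ⟨1, one_pos, le_rfl, by simp⟩
    obtain ⟨x, hx, hmax⟩ := hKc.exists_isMaxOn hne continuous_norm.continuousOn
    have := hK hx
    rw [mem_ball_zero_iff] at this
    refine ⟨1 - ‖x‖, by linarith, by linarith [norm_nonneg x], fun z hz => ?_⟩
    have := hmax hz
    simp only [mem_ofPred_eq] at this
    linarith
  have hlow : ∀ b : ℝ, 0 < b ∧ b < 1 → ∀ η : ℝ, ∀ z : E, ‖z‖ ≤ 1 - η →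
      η ≤ ‖1 - (b : ℂ) * inner ℂ e z‖ := by
    intro b hb η z hz
    have h1 := norm_sub_norm_le 1 ((b : ℂ) * inner ℂ e z)
    rw [norm_one, norm_mul, Complex.norm_real, Real.norm_eq_abs, abs_of_pos hb.1] at h1
    have h2 := norm_inner_le_unit he z
    nlinarith [norm_nonneg (inner ℂ e z)]
  have hcov1 : ∀ᶠ b : ℝ in 𝓝[<] 1, id '' closedBall 0 t ⊆ dumb e ℓ b '' ball 0 1 := by
    refine stable_covering isOpen_ball differentiableOn_id (isCompact_closedBall _ _) htb ?_
      (hev.mono hdiff) ?_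
    · intro x _
      rw [fderiv_id]; exact Function.injective_id
    · rw [tendstoLocallyUniformlyOn_iff_forall_isCompact isOpen_ball]
      intro K hK hKc
      obtain ⟨η, hη0, hη1, hηK⟩ := hcpt K hK hKc
      rw [Metric.tendstoUniformlyOn_iff]
      intro ε' hε'
      filter_upwards [hev, (tendsto_dumbErr ℓ η).eventually_lt_const hε'] with b hb hbε z hz
      rw [dist_comm, dist_eq_norm, id]
      exact (dumb_est_left he hℓ hb.1 hb.2 hη0 hη1 (by linarith [hηK z hz])
        (hlow b hb η z (hηK z hz))).trans_lt hbε
  have hcov2 : ∀ᶠ b : ℝ in 𝓝[<] 1, (fun y => ((2 + ℓ : ℝ) : ℂ) • e + y) '' closedBall 0 t ⊆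
      (fun y => dumb e ℓ b (mob e (-b) y)) '' ball 0 1 := by
    have hmb : ∀ b : ℝ, 0 < b ∧ b < 1 → |(-b)| < 1 := fun b hb => by
      rw [abs_neg, abs_of_pos hb.1]; exact hb.2
    refine stable_covering isOpen_ball (by fun_prop) (isCompact_closedBall _ _) htb ?_
      (hev.mono fun b hb => ?_) ?_
    · intro x _
      rw [fderiv_const_add]; simp only [fderiv_fun_id]; exact Function.injective_id
    · refine (hdiff b hb).comp (fun z hz => (differentiableAt_mob he (hmb b hb)
        (mem_ball_zero_iff.1 hz).le).differentiableWithinAt) (fun z hz => ?_)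
      rw [mem_ball_zero_iff] at hz ⊢
      exact mob_mem_ball he (hmb b hb) hz
    · rw [tendstoLocallyUniformlyOn_iff_forall_isCompact isOpen_ball]
      intro K hK hKc
      obtain ⟨η, hη0, hη1, hηK⟩ := hcpt K hK hKc
      rw [Metric.tendstoUniformlyOn_iff]
      intro ε' hε'
      filter_upwards [hev, (tendsto_dumbErr ℓ (η / 2)).eventually_lt_const hε'] with b hb hbε y hy
      have hy1 : ‖y‖ < 1 := by linarith [hηK y hy]
      have hmm : mob e b (mob e (-b) y) = y := by
        have := mob_neg_mob he (hmb b hb) hy1.le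
        rwa [neg_neg] at this
      have h1 := one_add_inner_mob he (hmb b hb) hy1.le
      have h2 : ‖1 - (b : ℂ) * inner ℂ e (mob e (-b) y)‖ ≤ (1 - b) / (η / 2) := by
        have h3 : 1 - (b : ℂ) * inner ℂ e (mob e (-b) y) =
            (1 - (b : ℂ) ^ 2) / (1 - (b : ℂ) * inner ℂ e (-y)) := by
          rw [inner_neg_right]
          push_cast at h1
          rw [neg_sq] at h1
          simpa [sub_eq_add_neg] using h1
        have h4 := hlow b hb η (-y) (by rw [norm_neg]; exact hηK y hy)
        have h5 : ‖(1 - (b : ℂ) ^ 2)‖ ≤ 2 * (1 - b) := by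
          have : (1 - (b : ℂ) ^ 2) = ((1 - b ^ 2 : ℝ) : ℂ) := by push_cast; ring
          rw [this, Complex.norm_real, Real.norm_eq_abs, abs_of_nonneg (by nlinarith)]
          nlinarith
        have : 0 < 1 - b := by linarith [hb.2]
        rw [h3, norm_div]
        calc _ ≤ (2 * (1 - b)) / η := by gcongr
          _ = _ := by field_simp
      have h6 := dumb_est_right he hℓ hb.1 hb.2 (half_pos hη0) (by linarith)
        (mob_mem_ball he (hmb b hb) hy1) h2
      rw [hmm] at h6
      rw [dist_comm, dist_eq_norm]
      exact h6.trans_lt hbε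
  obtain ⟨b, ⟨hb0, hb1⟩, h1, h2, h3⟩ := (hev.and (hmaps.and (hcov1.and hcov2))).exists
  refine ⟨dumb e ℓ b, hdiff b ⟨hb0, hb1⟩, injOn_dumb he hℓ hb0 hb1, h1, by simpa using h2, ?_⟩
  intro y hy
  obtain ⟨w, hw, hwy⟩ := h3 ⟨y - ((2 + ℓ : ℝ) : ℂ) • e, by simpa [dist_eq_norm] using hy,
    add_sub_cancel _ _⟩
  rw [mem_ball_zero_iff] at hw
  exact ⟨_, by simpa using mob_mem_ball he (by rw [abs_neg, abs_of_pos hb0]; exact hb1) hw, hwy⟩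

end

/-! ### A holomorphic smoothing of the positive part -/

/-- Principal branch of `√(z² + δ²)`. -/
noncomputable def csq (δ : ℝ) (z : ℂ) : ℂ := (z ^ 2 + (δ : ℂ) ^ 2) ^ (1 / 2 : ℂ)

/-- A holomorphic smoothing of `z ↦ max z 0`. -/
noncomputable def csp (δ : ℝ) (z : ℂ) : ℂ := (z + csq δ z) / 2

/-- The derivative of `csp δ`, a smoothing of the Heaviside function. -/
noncomputable def cspd (δ : ℝ) (z : ℂ) : ℂ := (1 + z / csq δ z) / 2

lemma csq_neg (δ : ℝ) (z : ℂ) : csq δ (-z) = csq δ z := by simp [csq]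

lemma csp_neg (δ : ℝ) (z : ℂ) : csp δ (-z) = csp δ z - z := by
  simp only [csp, csq_neg]; ring

lemma cspd_neg (δ : ℝ) (z : ℂ) : cspd δ (-z) = 1 - cspd δ z := by
  simp only [cspd, csq_neg]; ring

lemma csq_mul_self (δ : ℝ) (z : ℂ) : csq δ z * csq δ z = z ^ 2 + (δ : ℂ) ^ 2 := by
  have := Complex.cpow_nat_inv_pow (z ^ 2 + (δ : ℂ) ^ 2) (n := 2) two_ne_zero
  rw [← sq, ← this, csq]; norm_num

lemma csq_re_nonneg (δ : ℝ) (z : ℂ) : 0 ≤ (csq δ z).re := by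
  rcases eq_or_ne (z ^ 2 + (δ : ℂ) ^ 2) 0 with h | h
  · simp [csq, h]
  · rw [csq, Complex.cpow_def_of_ne_zero h, Complex.exp_re]
    refine mul_nonneg (Real.exp_pos _).le (Real.cos_nonneg_of_mem_Icc ?_)
    have h1 : (Complex.log (z ^ 2 + (δ : ℂ) ^ 2) * (1 / 2 : ℂ)).im =
        Complex.arg (z ^ 2 + (δ : ℂ) ^ 2) / 2 := by
      rw [show (1 / 2 : ℂ) = ((1 / 2 : ℝ) : ℂ) by push_cast; ring, Complex.im_mul_ofReal,
        Complex.log_im]; ring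
    rw [h1]
    have h2 := Complex.neg_pi_lt_arg (z ^ 2 + (δ : ℂ) ^ 2)
    have h3 := Complex.arg_le_pi (z ^ 2 + (δ : ℂ) ^ 2)
    constructor <;> linarith

lemma slit_of_re_ne {δ : ℝ} {z : ℂ} (hz : z.re ≠ 0) :
    z ^ 2 + (δ : ℂ) ^ 2 ∈ Complex.slitPlane := by
  rw [Complex.mem_slitPlane_iff]
  by_cases hi : z.im = 0
  · left
    have : (z ^ 2 + (δ : ℂ) ^ 2).re = z.re ^ 2 + δ ^ 2 := by
      simp [sq, hi]
    rw [this]; positivity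
  · right
    have : (z ^ 2 + (δ : ℂ) ^ 2).im = 2 * (z.re * z.im) := by
      simp [sq]; ring
    rw [this]
    simp [hz, hi]

lemma slit_ofReal {δ : ℝ} (hδ : 0 < δ) (x : ℝ) : (x : ℂ) ^ 2 + (δ : ℂ) ^ 2 ∈ Complex.slitPlane := by
  have : (x : ℂ) ^ 2 + (δ : ℂ) ^ 2 = ((x ^ 2 + δ ^ 2 : ℝ) : ℂ) := by push_cast; rfl
  rw [this, Complex.ofReal_mem_slitPlane]; positivity

lemma csq_ofReal (δ x : ℝ) : csq δ x = ((√(x ^ 2 + δ ^ 2) : ℝ) : ℂ) := by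
  have : (x : ℂ) ^ 2 + (δ : ℂ) ^ 2 = ((x ^ 2 + δ ^ 2 : ℝ) : ℂ) := by push_cast; rfl
  rw [csq, this, Real.sqrt_eq_rpow, Complex.ofReal_cpow (by positivity)]
  push_cast; rfl

lemma csq_ne_zero {δ : ℝ} {z : ℂ} (h : z ^ 2 + (δ : ℂ) ^ 2 ∈ Complex.slitPlane) :
    csq δ z ≠ 0 := by
  intro h0
  have := csq_mul_self δ z
  rw [h0, zero_mul] at this
  exact Complex.slitPlane_ne_zero h this.symm

lemma hasDerivAt_csq {δ : ℝ} {z : ℂ} (h : z ^ 2 + (δ : ℂ) ^ 2 ∈ Complex.slitPlane) :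
    HasDerivAt (csq δ) (z / csq δ z) z := by
  have h0 := csq_ne_zero h
  have h1 : HasDerivAt (fun z : ℂ => z ^ 2 + (δ : ℂ) ^ 2) (2 * z) z := by
    simpa using (hasDerivAt_pow 2 z).add_const ((δ : ℂ) ^ 2)
  have h2 := h1.cpow_const (c := 1 / 2) h
  refine h2.congr_deriv ?_
  have h3 : (z ^ 2 + (δ : ℂ) ^ 2) ^ (1 / 2 - 1 : ℂ) = (csq δ z)⁻¹ := by
    rw [csq, ← Complex.cpow_neg]; norm_num
  rw [h3]; field_simp

lemma hasDerivAt_csp {δ : ℝ} {z : ℂ} (h : z ^ 2 + (δ : ℂ) ^ 2 ∈ Complex.slitPlane) :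
    HasDerivAt (csp δ) (cspd δ z) z :=
  ((hasDerivAt_id z).add (hasDerivAt_csq h)).div_const 2

lemma differentiableAt_cspd {δ : ℝ} {z : ℂ} (h : z ^ 2 + (δ : ℂ) ^ 2 ∈ Complex.slitPlane) :
    DifferentiableAt ℂ (cspd δ) z :=
  ((differentiableAt_const 1).add (differentiableAt_id.div (hasDerivAt_csq h).differentiableAt
    (csq_ne_zero h))).div_const 2

lemma norm_csp_le {δ c : ℝ} (hc : 0 < c) {z : ℂ} (hz : z.re ≤ -c) :
    ‖csp δ z‖ ≤ δ ^ 2 / c := by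
  have h1 : (csq δ z - z) * (csq δ z + z) = (δ : ℂ) ^ 2 := by
    linear_combination csq_mul_self δ z
  have h2 : c ≤ ‖csq δ z - z‖ := by
    refine le_trans ?_ (Complex.re_le_norm _)
    rw [Complex.sub_re]; linarith [csq_re_nonneg δ z]
  have h3 := congrArg norm h1
  rw [norm_mul, norm_pow, Complex.norm_real, Real.norm_eq_abs, sq_abs] at h3
  rw [le_div_iff₀ hc, csp, norm_div, add_comm]
  simp only [Complex.norm_ofNat]
  nlinarith [norm_nonneg (csq δ z + z)]

lemma norm_cspd_le {δ c : ℝ} (hc : 0 < c) (hδ : δ ^ 2 ≤ c ^ 2 / 4) {z : ℂ} (hz : z.re ≤ -c) :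
    ‖cspd δ z‖ ≤ 2 * δ ^ 2 / c ^ 2 := by
  have h1 := norm_csp_le (δ := δ) hc hz
  have h2 : c / 2 ≤ ‖csq δ z‖ := by
    have h3 : csq δ z = 2 * csp δ z - z := by simp only [csp]; ring
    have h4 : c ≤ ‖z‖ := by
      have := (abs_le.1 (Complex.abs_re_le_norm z)).1
      linarith
    have h5 := norm_sub_norm_le z (2 * csp δ z)
    rw [norm_sub_rev, ← h3, norm_mul, Complex.norm_ofNat] at h5
    have h6 : δ ^ 2 / c ≤ c / 4 := by rw [div_le_iff₀ hc]; nlinarith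
    linarith
  have h0 : csq δ z ≠ 0 := norm_pos_iff.1 (by linarith)
  have h3 : cspd δ z = csp δ z / csq δ z := by simp only [cspd, csp]; field_simp; ring
  rw [h3, norm_div, div_le_iff₀ (by linarith)]
  have h4 : δ ^ 2 / c = 2 * δ ^ 2 / c ^ 2 * (c / 2) := by field_simp
  calc _ ≤ _ := h1
    _ = _ := h4
    _ ≤ _ := by gcongr

/-- Real version of `cspd`. -/
noncomputable def rspd (δ x : ℝ) : ℝ := (1 + x / √(x ^ 2 + δ ^ 2)) / 2

lemma cspd_ofReal (δ x : ℝ) : cspd δ x = (rspd δ x : ℂ) := by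
  rw [cspd, csq_ofReal, rspd]; push_cast; ring

lemma rspd_pos {δ : ℝ} (hδ : 0 < δ) (x : ℝ) : 0 < rspd δ x := by
  have h1 : |x| < √(x ^ 2 + δ ^ 2) := by
    rw [← Real.sqrt_sq_eq_abs]; apply Real.sqrt_lt_sqrt <;> nlinarith
  have h2 : 0 < √(x ^ 2 + δ ^ 2) := (abs_nonneg x).trans_lt h1
  have h3 : -1 < x / √(x ^ 2 + δ ^ 2) := by
    rw [lt_div_iff₀ h2]; linarith [(abs_lt.1 h1).1]
  rw [rspd]; linarith

lemma rspd_neg (δ x : ℝ) : rspd δ (-x) = 1 - rspd δ x := by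
  simp only [rspd, neg_sq]; ring

lemma rspd_mono {δ : ℝ} (hδ : 0 < δ) : Monotone (rspd δ) := by
  intro x y hxy
  have hx : 0 < √(x ^ 2 + δ ^ 2) := Real.sqrt_pos.2 (by positivity)
  have hy : 0 < √(y ^ 2 + δ ^ 2) := Real.sqrt_pos.2 (by positivity)
  have key : x / √(x ^ 2 + δ ^ 2) ≤ y / √(y ^ 2 + δ ^ 2) := by
    rw [div_le_div_iff₀ hx hy]
    by_cases h0 : 0 ≤ x
    · rw [← Real.sqrt_sq h0, ← Real.sqrt_sq (h0.trans hxy), ← Real.sqrt_mul (by positivity),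
        ← Real.sqrt_mul (by positivity)]
      apply Real.sqrt_le_sqrt
      rw [Real.sqrt_sq h0, Real.sqrt_sq (h0.trans hxy)]
      have : x ^ 2 ≤ y ^ 2 := by nlinarith
      nlinarith [sq_nonneg δ]
    by_cases h1 : 0 ≤ y
    · nlinarith
    · have : -y * √(x ^ 2 + δ ^ 2) ≤ -x * √(y ^ 2 + δ ^ 2) := by
        rw [← Real.sqrt_sq (show 0 ≤ -x by linarith), ← Real.sqrt_sq (show 0 ≤ -y by linarith),
          ← Real.sqrt_mul (by positivity), ← Real.sqrt_mul (by positivity)]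
        apply Real.sqrt_le_sqrt
        have : y ^ 2 ≤ x ^ 2 := by nlinarith
        nlinarith [sq_nonneg δ]
      linarith
  simp only [rspd]; linarith

/-! ### Stability of injectivity -/

/-- Near a point where the limit is an immersion, uniform approximations are eventually injective
immersions on a fixed neighbourhood. -/
lemma stable_local {E : Type*} [NormedAddCommGroup E] [NormedSpace ℂ E]
    [FiniteDimensional ℂ E] {ι : Type*} {l : Filter ι} {W : Set E} (hW : IsOpen W) {f : E → E}
    (hf : DifferentiableOn ℂ f W) {x : E} (hx : x ∈ W)
    (himm : Function.Injective (fderiv ℂ f x)) {g : ι → E → E}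
    (hg : ∀ᶠ i in l, DifferentiableOn ℂ (g i) W) (hlim : TendstoUniformlyOn g f l W) :
    ∃ V ∈ 𝓝 x, ∀ᶠ i in l, InjOn (g i) V ∧ ∀ y ∈ V, Function.Injective (fderiv ℂ (g i) y) := by
  have : CompleteSpace E := FiniteDimensional.complete ℂ E
  obtain ⟨A, hA⟩ := exists_equiv_of_injective _ himm rfl
  set M : ℝ := ‖(A.symm : E →L[ℂ] E)‖ + 1 with hM
  have hM0 : 0 < M := by positivity
  have hAM : ∀ v, ‖v‖ ≤ M * ‖A v‖ := fun v => by
    have h1 := (A.symm : E →L[ℂ] E).le_opNorm (A v)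
    simp only [ContinuousLinearEquiv.coe_coe, A.symm_apply_apply] at h1
    nlinarith [norm_nonneg (A v)]
  set c : ℝ := 1 / (4 * M) with hc
  have hc0 : 0 < c := by positivity
  have hcM : M * (2 * c) < 1 := by rw [hc]; field_simp; norm_num
  have hcont : ContinuousAt (fderiv ℂ f) x :=
    (continuousOn_fderiv_of_holo hW hf).continuousAt (hW.mem_nhds hx)
  obtain ⟨R, hR, hRs⟩ := Metric.mem_nhds_iff.1 (inter_mem
    (hcont.preimage_mem_nhds (ball_mem_nhds _ hc0)) (hW.mem_nhds hx))
  set r := R / 2 with hr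
  have hr0 : 0 < r := by positivity
  refine ⟨ball x r, ball_mem_nhds _ hr0, ?_⟩
  rw [Metric.tendstoUniformlyOn_iff] at hlim
  filter_upwards [hlim (c * r / 2) (by positivity), hg] with i hi hgi
  have hsub : ∀ y ∈ ball x r, ball y r ⊆ ball x R := fun y hy => by
    apply ball_subset_ball'; rw [mem_ball] at hy; linarith
  have hyW : ∀ y ∈ ball x r, y ∈ W := fun y hy => (hRs (ball_subset_ball (by linarith) hy)).2
  have hder : ∀ y ∈ ball x r, ‖fderiv ℂ (g i) y - (A : E →L[ℂ] E)‖ ≤ 2 * c := by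
    intro y hy
    have h1 := norm_fderiv_le_of_bound (f := fun z => g i z - f z) (M := c * r / 2) hr0
      ((hgi.sub hf).mono fun z hz => (hRs (hsub y hy hz)).2) (by
        intro z hz
        have := hi z (hRs (hsub y hy hz)).2
        rw [dist_comm, dist_eq_norm] at this
        exact this.le)
    rw [fderiv_fun_sub (hgi.differentiableAt (hW.mem_nhds (hyW y hy)))
      (hf.differentiableAt (hW.mem_nhds (hyW y hy)))] at h1
    have h2 : ‖fderiv ℂ f y - fderiv ℂ f x‖ < c := by
      have := (hRs (ball_subset_ball (by linarith) hy : y ∈ ball x R)).1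
      rwa [mem_preimage, mem_ball, dist_eq_norm] at this
    have h3 : 2 * (c * r / 2) / r = c := by field_simp
    rw [h3] at h1
    rw [hA]
    have h4 := norm_add_le (fderiv ℂ (g i) y - fderiv ℂ f y) (fderiv ℂ f y - fderiv ℂ f x)
    rw [sub_add_sub_cancel] at h4
    linarith
  constructor
  · intro y hy z hz hyz
    have h1 := (convex_ball x r).norm_image_sub_le_of_norm_fderiv_le' (𝕜 := ℂ) (f := g i)
      (φ := (A : E →L[ℂ] E)) (fun w hw => hgi.differentiableAt (hW.mem_nhds (hyW w hw))) hder hz hy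
    rw [hyz, sub_self, zero_sub, norm_neg] at h1
    have h2 := hAM (y - z)
    simp only [ContinuousLinearEquiv.coe_coe] at h1
    have h3 : ‖y - z‖ ≤ M * (2 * c) * ‖y - z‖ := by
      calc _ ≤ _ := h2
        _ ≤ M * (2 * c * ‖y - z‖) := by gcongr
        _ = _ := by ring
    have h4 : ‖y - z‖ = 0 := by nlinarith [norm_nonneg (y - z)]
    exact sub_eq_zero.1 (norm_eq_zero.1 h4)
  · intro y hy
    rw [injective_iff_map_eq_zero]
    intro v hv
    have h1 := (fderiv ℂ (g i) y - (A : E →L[ℂ] E)).le_opNorm v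
    simp only [sub_apply, hv, zero_sub, norm_neg,
      ContinuousLinearEquiv.coe_coe] at h1
    have h2 := hAM v
    have h3 : ‖v‖ ≤ M * (2 * c) * ‖v‖ := by
      calc _ ≤ _ := h2
        _ ≤ M * (‖fderiv ℂ (g i) y - (A : E →L[ℂ] E)‖ * ‖v‖) := by gcongr
        _ ≤ M * (2 * c * ‖v‖) := by gcongr; exact hder y hy
        _ = _ := by ring
    have h4 : ‖v‖ = 0 := by nlinarith [norm_nonneg v]
    exact norm_eq_zero.1 h4

lemma eventually_forall_compact {X ι : Type*} [TopologicalSpace X] {l : Filter ι} {K : Set X}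
    (hK : IsCompact K) {P : ι → X → Prop}
    (h : ∀ x ∈ K, ∀ᶠ p in l ×ˢ 𝓝[K] x, P p.1 p.2) : ∀ᶠ i in l, ∀ x ∈ K, P i x := by
  refine hK.induction_on (p := fun s => ∀ᶠ i in l, ∀ x ∈ s, P i x) (by simp)
    (fun s t hst ht => ht.mono fun i hi x hx => hi x (hst hx))
    (fun s t hs ht => (hs.and ht).mono fun i hi x hx => hx.elim (hi.1 x) (hi.2 x)) ?_
  intro x hx
  obtain ⟨pa, hpa, pb, hpb, hab⟩ := eventually_prod_iff.1 (h x hx)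
  exact ⟨{y | pb y}, hpb, hpa.mono fun i hi y hy => hab hi hy⟩

/-- A family converging to an injective limit on a compact set, and uniformly locally injective, is
eventually injective on it. -/
lemma eventually_injOn {X Y ι : Type*} [TopologicalSpace X] [TopologicalSpace Y] [T2Space Y]
    {l : Filter ι} {K : Set X} (hK : IsCompact K) {g : ι → X → Y} {g₀ : X → Y}
    (hc : ∀ x ∈ K, Tendsto (fun p : ι × X => g p.1 p.2) (l ×ˢ 𝓝[K] x) (𝓝 (g₀ x)))
    (hinj : InjOn g₀ K)
    (hloc : ∀ x ∈ K, ∃ V ∈ 𝓝[K] x, ∀ᶠ i in l, InjOn (g i) V) :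
    ∀ᶠ i in l, InjOn (g i) K := by
  have : ∀ᶠ i in l, ∀ p ∈ K ×ˢ K, g i p.1 = g i p.2 → p.1 = p.2 := by
    refine eventually_forall_compact (P := fun i p => g i p.1 = g i p.2 → p.1 = p.2)
      (hK.prod hK) ?_
    rintro ⟨x, y⟩ ⟨hx, hy⟩
    simp only at hx hy
    rw [nhdsWithin_prod_eq]
    by_cases hxy : x = y
    · subst hxy
      obtain ⟨V, hV, hVi⟩ := hloc x hx
      filter_upwards [hVi.prod_mk (prod_mem_prod hV hV)] with p hp h
      exact hp.1 hp.2.1 hp.2.2 h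
    · obtain ⟨u, v, hu, hv, hxu, hyv, huv⟩ := t2_separation (fun h => hxy (hinj hx hy h))
      have h1 : Tendsto (fun p : ι × X × X => g p.1 p.2.1) (l ×ˢ (𝓝[K] x ×ˢ 𝓝[K] y))
          (𝓝 (g₀ x)) := (hc x hx).comp (tendsto_fst.prodMk (tendsto_fst.comp tendsto_snd))
      have h2 : Tendsto (fun p : ι × X × X => g p.1 p.2.2) (l ×ˢ (𝓝[K] x ×ˢ 𝓝[K] y))
          (𝓝 (g₀ y)) := (hc y hy).comp (tendsto_fst.prodMk (tendsto_snd.comp tendsto_snd))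
      filter_upwards [h1 (hu.mem_nhds hxu), h2 (hv.mem_nhds hyv)] with p hp1 hp2 h
      have hp1' : g p.1 p.2.1 ∈ u := hp1
      have hp2' : g p.1 p.2.2 ∈ v := hp2
      rw [← h] at hp2'
      exact absurd hp2' (disjoint_left.1 huv hp1')
  filter_upwards [this] with i hi x hx y hy hxy
  exact hi (x, y) ⟨hx, hy⟩ hxy

/-! ### The merge map -/

section
variable {E : Type*} [NormedAddCommGroup E] [InnerProductSpace ℂ E]

/-- A smoothing of the retraction which is the identity for `Re z₁ < ρ` and maps everything with
`Re z₁ > ρ` to `ρ e`. -/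
noncomputable def alp (e : E) (ρ δ : ℝ) (z : E) : E :=
  z - csp δ (inner ℂ e z - ρ) • e - cspd δ (inner ℂ e z - ρ) • (z - inner ℂ e z • e)

/-- The smoothing of the map which is `G₁` on the left, `G₂` on the right and affine on the stick
of the dumbbell. -/
noncomputable def mergeMap (e : E) (ρ : ℝ) (G₁ G₂ : E → E) (n q : E) (δ : ℝ) (z : E) : E :=
  G₁ (alp e ρ δ z) + (csp δ (inner ℂ e z - ρ) - csp δ (inner ℂ e z - ρ - 1)) • n +
    G₂ (-alp e ρ δ (((2 * ρ + 1 : ℝ) : ℂ) • e - z)) - q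

lemma differentiableAt_alp {e : E} {ρ δ : ℝ} {z : E}
    (h : (inner ℂ e z - ρ) ^ 2 + (δ : ℂ) ^ 2 ∈ Complex.slitPlane) :
    DifferentiableAt ℂ (alp e ρ δ) z := by
  have h1 : DifferentiableAt ℂ (fun z : E => inner ℂ e z) z := (innerSL ℂ e).differentiableAt
  have h2 : DifferentiableAt ℂ (fun z : E => csp δ (inner ℂ e z - ρ)) z :=
    DifferentiableAt.comp (g := csp δ) z (hasDerivAt_csp h).differentiableAt (h1.sub_const _)
  have h3 : DifferentiableAt ℂ (fun z : E => cspd δ (inner ℂ e z - ρ)) z :=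
    DifferentiableAt.comp (g := cspd δ) z (differentiableAt_cspd h) (h1.sub_const _)
  unfold alp
  exact (differentiableAt_id.sub (h2.smul_const e)).sub
    (h3.smul (differentiableAt_id.sub (h1.smul_const e)))

lemma inner_center_sub {e : E} (he : ‖e‖ = 1) (c : ℝ) (z : E) :
    inner ℂ e ((c : ℂ) • e - z) = c - inner ℂ e z := by
  rw [inner_sub_right, inner_smul_right, inner_self_eq_norm_sq_to_K, he]; simp

lemma alp_reflect {e : E} (he : ‖e‖ = 1) (ρ δ : ℝ) (z : E) :
    alp e ρ δ (((2 * ρ + 1 : ℝ) : ℂ) • e - z) = (ρ : ℂ) • e -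
      csp δ (inner ℂ e z - ρ - 1) • e - cspd δ (inner ℂ e z - ρ - 1) • (z - inner ℂ e z • e) := by
  rw [alp, inner_center_sub he]
  have h1 : (((2 * ρ + 1 : ℝ) : ℂ) - inner ℂ e z - ρ) = -(inner ℂ e z - ρ - 1) := by
    push_cast; ring
  rw [h1, csp_neg, cspd_neg]
  push_cast
  module

lemma mergeMap_reflect {e : E} (he : ‖e‖ = 1) (ρ : ℝ) (G₁ G₂ : E → E) (p q : E) (δ : ℝ) (z : E) :
    mergeMap e ρ G₁ G₂ (q - p) q δ (((2 * ρ + 1 : ℝ) : ℂ) • e - z) =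
      mergeMap e ρ (fun w => G₂ (-w)) (fun w => G₁ (-w)) (p - q) p δ z := by
  simp only [mergeMap]
  rw [sub_sub_cancel, neg_neg, inner_center_sub he]
  have h1 : (((2 * ρ + 1 : ℝ) : ℂ) - inner ℂ e z - ρ) = -(inner ℂ e z - ρ - 1) := by
    push_cast; ring
  have h2 : (-(inner ℂ e z - ρ - 1) - 1 : ℂ) = -(inner ℂ e z - ρ) := by ring
  rw [h1, h2, csp_neg, csp_neg]
  module

lemma alp_left_estimates {e : E} (he : ‖e‖ = 1) {ρ ρ' : ℝ} (hρ : 0 < ρ) (hρ' : ρ' < ρ) {ε : ℝ}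
    (hε : 0 < ε) : ∀ᶠ δ : ℝ in 𝓝[>] 0, ∀ z ∈ ball (0 : E) ρ',
      ‖alp e ρ δ z - z‖ < ε ∧
      ‖alp e ρ δ (((2 * ρ + 1 : ℝ) : ℂ) • e - z) - (ρ : ℂ) • e‖ < ε ∧
      ‖csp δ (inner ℂ e z - ρ) - csp δ (inner ℂ e z - ρ - 1)‖ < ε := by
  set c := ρ - ρ' with hc
  have hc0 : 0 < c := by linarith
  have ht1 : Tendsto (fun δ : ℝ => δ ^ 2) (𝓝[>] 0) (𝓝 0) := by
    have : Tendsto (fun δ : ℝ => δ ^ 2) (𝓝 0) (𝓝 (0 ^ 2)) := (continuous_pow 2).tendsto _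
    rw [zero_pow two_ne_zero] at this
    exact this.mono_left nhdsWithin_le_nhds
  have ht2 : Tendsto (fun δ : ℝ => δ ^ 2 / c) (𝓝[>] 0) (𝓝 0) := by simpa using ht1.div_const c
  have ht3 : Tendsto (fun δ : ℝ => δ ^ 2 / c + 2 * δ ^ 2 / c ^ 2 * (2 * ρ)) (𝓝[>] 0) (𝓝 0) := by
    simpa using ht2.add (((ht1.const_mul 2).div_const (c ^ 2)).mul_const (2 * ρ))
  filter_upwards [ht1.eventually_le_const (show 0 < c ^ 2 / 4 by positivity),
    ht3.eventually_lt_const hε, ht2.eventually_lt_const (half_pos hε)] with δ h1 h2 h3 z hz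
  rw [mem_ball_zero_iff] at hz
  have hz1 := norm_inner_le_unit he z
  have hre := (Complex.re_le_norm (inner ℂ e z))
  have hre1 : (inner ℂ e z - (ρ : ℂ)).re ≤ -c := by
    rw [Complex.sub_re, Complex.ofReal_re]; linarith
  have hre2 : (inner ℂ e z - (ρ : ℂ) - 1).re ≤ -c := by
    rw [Complex.sub_re, Complex.one_re]; linarith
  have hperp : ‖z - inner ℂ e z • e‖ ≤ 2 * ρ := by
    refine (norm_sub_le _ _).trans ?_
    rw [norm_smul_unit he]; linarith
  have key : ∀ w : ℂ, w.re ≤ -c →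
      ‖csp δ w • e + cspd δ w • (z - inner ℂ e z • e)‖ < ε := fun w hw => by
    refine lt_of_le_of_lt ((norm_add_le _ _).trans ?_) h2
    rw [norm_smul_unit he, norm_smul]
    have h4 := norm_cspd_le hc0 h1 hw
    refine add_le_add (norm_csp_le hc0 hw) ?_
    gcongr
  refine ⟨?_, ?_, ?_⟩
  · rw [← norm_neg]
    refine lt_of_eq_of_lt (congrArg norm ?_) (key _ hre1)
    rw [alp]; abel
  · rw [← norm_neg, alp_reflect he]
    refine lt_of_eq_of_lt (congrArg norm ?_) (key _ hre2)
    abel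
  · refine (norm_sub_le _ _).trans_lt ?_
    linarith [norm_csp_le (δ := δ) hc0 hre1, norm_csp_le (δ := δ) hc0 hre2]

lemma slit_reflect {e : E} (he : ‖e‖ = 1) {ρ δ : ℝ} {z : E}
    (hs2 : (inner ℂ e z - ρ - 1) ^ 2 + (δ : ℂ) ^ 2 ∈ Complex.slitPlane) :
    (inner ℂ e (((2 * ρ + 1 : ℝ) : ℂ) • e - z) - ρ) ^ 2 + (δ : ℂ) ^ 2 ∈ Complex.slitPlane := by
  rw [inner_center_sub he]
  convert hs2 using 2
  push_cast; ring

lemma differentiableAt_mergeMap {e : E} (he : ‖e‖ = 1) {ρ R δ : ℝ} {G₁ G₂ : E → E}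
    (hG₁ : DifferentiableOn ℂ G₁ (ball 0 R)) (hG₂ : DifferentiableOn ℂ G₂ (ball 0 R)) {n q z : E}
    (hs1 : (inner ℂ e z - ρ) ^ 2 + (δ : ℂ) ^ 2 ∈ Complex.slitPlane)
    (hs2 : (inner ℂ e z - ρ - 1) ^ 2 + (δ : ℂ) ^ 2 ∈ Complex.slitPlane)
    (hm1 : alp e ρ δ z ∈ ball (0 : E) R)
    (hm2 : -alp e ρ δ (((2 * ρ + 1 : ℝ) : ℂ) • e - z) ∈ ball (0 : E) R) :
    DifferentiableAt ℂ (mergeMap e ρ G₁ G₂ n q δ) z := by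
  have hi : DifferentiableAt ℂ (fun z : E => inner ℂ e z) z := (innerSL ℂ e).differentiableAt
  unfold mergeMap
  refine (((DifferentiableAt.comp z (hG₁.differentiableAt (isOpen_ball.mem_nhds hm1))
    (differentiableAt_alp hs1)).add (DifferentiableAt.smul_const (DifferentiableAt.sub ?_ ?_)
      _)).add ?_).sub_const _
  · exact DifferentiableAt.comp (g := csp δ) z (hasDerivAt_csp hs1).differentiableAt
      (hi.sub_const _)
  · exact DifferentiableAt.comp (g := csp δ) z (hasDerivAt_csp hs2).differentiableAt
      ((hi.sub_const _).sub_const _)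
  · refine DifferentiableAt.comp z (hG₂.differentiableAt (isOpen_ball.mem_nhds hm2)) ?_
    exact (DifferentiableAt.comp z (differentiableAt_alp (slit_reflect he hs2))
      ((differentiableAt_const _).sub differentiableAt_id)).neg

lemma eventually_differentiableAt_mergeMap {e : E} (he : ‖e‖ = 1) {ρ R δ : ℝ} {G₁ G₂ : E → E}
    (hG₁ : DifferentiableOn ℂ G₁ (ball 0 R)) (hG₂ : DifferentiableOn ℂ G₂ (ball 0 R)) {n q z : E}
    (hs1 : (inner ℂ e z - ρ) ^ 2 + (δ : ℂ) ^ 2 ∈ Complex.slitPlane)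
    (hs2 : (inner ℂ e z - ρ - 1) ^ 2 + (δ : ℂ) ^ 2 ∈ Complex.slitPlane)
    (hm1 : alp e ρ δ z ∈ ball (0 : E) R)
    (hm2 : -alp e ρ δ (((2 * ρ + 1 : ℝ) : ℂ) • e - z) ∈ ball (0 : E) R) :
    ∀ᶠ y in 𝓝 z, DifferentiableAt ℂ (mergeMap e ρ G₁ G₂ n q δ) y := by
  have hi : Continuous (fun z : E => inner ℂ e z) := (innerSL ℂ e).continuous
  have c1 : ContinuousAt (fun y : E => (inner ℂ e y - (ρ : ℂ)) ^ 2 + (δ : ℂ) ^ 2) z := by fun_prop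
  have c2 : ContinuousAt (fun y : E => (inner ℂ e y - (ρ : ℂ) - 1) ^ 2 + (δ : ℂ) ^ 2) z := by
    fun_prop
  have c3 : ContinuousAt (alp e ρ δ) z := (differentiableAt_alp hs1).continuousAt
  have c4 : ContinuousAt (fun y => -alp e ρ δ (((2 * ρ + 1 : ℝ) : ℂ) • e - y)) z :=
    (ContinuousAt.comp (f := fun y => ((2 * ρ + 1 : ℝ) : ℂ) • e - y)
      (differentiableAt_alp (slit_reflect he hs2)).continuousAt (by fun_prop)).neg
  filter_upwards [c1 (Complex.isOpen_slitPlane.mem_nhds hs1),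
    c2 (Complex.isOpen_slitPlane.mem_nhds hs2), c3 (isOpen_ball.mem_nhds hm1),
    c4 (isOpen_ball.mem_nhds hm2)] with y h1 h2 h3 h4
  exact differentiableAt_mergeMap he hG₁ hG₂ h1 h2 h3 h4

/-- On the left part the merge map is holomorphic and converges to `G₁`. -/
lemma mergeMap_left [FiniteDimensional ℂ E] {e : E} (he : ‖e‖ = 1) {ρ R ρ' : ℝ} (hρ : 0 < ρ)
    (hρR : ρ < R) (hρ' : ρ' < ρ) {G₁ G₂ : E → E} (hG₁ : DifferentiableOn ℂ G₁ (ball 0 R))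
    (hG₂ : DifferentiableOn ℂ G₂ (ball 0 R)) (n : E) :
    (∀ᶠ δ : ℝ in 𝓝[>] 0,
      DifferentiableOn ℂ (mergeMap e ρ G₁ G₂ n (G₂ (-((ρ : ℂ) • e))) δ) (ball 0 ρ')) ∧
    TendstoUniformlyOn (mergeMap e ρ G₁ G₂ n (G₂ (-((ρ : ℂ) • e)))) G₁ (𝓝[>] (0 : ℝ))
      (ball 0 ρ') := by
  have : ProperSpace E := FiniteDimensional.proper ℂ E
  have hρe : ‖(ρ : ℂ) • e‖ = ρ := by
    rw [norm_smul_unit he, Complex.norm_real, Real.norm_eq_abs, abs_of_pos hρ]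
  constructor
  · filter_upwards [alp_left_estimates he hρ hρ' (show 0 < R - ρ by linarith)] with δ hδ z hz
    obtain ⟨h1, h2, -⟩ := hδ z hz
    rw [mem_ball_zero_iff] at hz
    have hre := (Complex.re_le_norm (inner ℂ e z)).trans (norm_inner_le_unit he z)
    have hs1 : (inner ℂ e z - ρ) ^ 2 + (δ : ℂ) ^ 2 ∈ Complex.slitPlane :=
      slit_of_re_ne (by rw [Complex.sub_re, Complex.ofReal_re]; linarith)
    have hs2 : (inner ℂ e z - ρ - 1) ^ 2 + (δ : ℂ) ^ 2 ∈ Complex.slitPlane :=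
      slit_of_re_ne (by rw [Complex.sub_re, Complex.sub_re, Complex.ofReal_re, Complex.one_re]
                        linarith)
    have hm1 : alp e ρ δ z ∈ ball (0 : E) R := by
      rw [mem_ball_zero_iff]
      linarith [norm_sub_norm_le (alp e ρ δ z) z]
    have hm2 : -alp e ρ δ (((2 * ρ + 1 : ℝ) : ℂ) • e - z) ∈ ball (0 : E) R := by
      rw [mem_ball_zero_iff, norm_neg]
      linarith [norm_sub_norm_le (alp e ρ δ (((2 * ρ + 1 : ℝ) : ℂ) • e - z)) ((ρ : ℂ) • e)]
    exact (differentiableAt_mergeMap he hG₁ hG₂ hs1 hs2 hm1 hm2).differentiableWithinAt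
  · rw [Metric.tendstoUniformlyOn_iff]
    intro ε hε
    have hu : UniformContinuousOn G₁ (closedBall 0 ρ) :=
      (isCompact_closedBall _ _).uniformContinuousOn_of_continuous
        (hG₁.continuousOn.mono (closedBall_subset_ball hρR))
    rw [Metric.uniformContinuousOn_iff] at hu
    obtain ⟨η, hη, hu⟩ := hu (ε / 3) (by positivity)
    have hq : ContinuousAt G₂ (-((ρ : ℂ) • e)) :=
      hG₂.continuousOn.continuousAt (isOpen_ball.mem_nhds (by
        rw [mem_ball_zero_iff, norm_neg, hρe]; exact hρR))
    rw [Metric.continuousAt_iff] at hq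
    obtain ⟨η₂, hη₂, hq⟩ := hq (ε / 3) (by positivity)
    filter_upwards [alp_left_estimates he hρ hρ' (ε := min (min η (ρ - ρ')) (min η₂
      (ε / (3 * (‖n‖ + 1))))) (by
        refine lt_min (lt_min hη (by linarith)) (lt_min hη₂ (by positivity)))] with δ hδ z hz
    obtain ⟨h1, h2, h3⟩ := hδ z hz
    simp only [lt_min_iff] at h1 h2 h3
    rw [mem_ball_zero_iff] at hz
    have k1 : ‖G₁ (alp e ρ δ z) - G₁ z‖ < ε / 3 := by
      rw [← dist_eq_norm]
      refine hu _ ?_ _ ?_ (by rw [dist_eq_norm]; exact h1.1.1)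
      · rw [mem_closedBall_zero_iff]
        linarith [norm_sub_norm_le (alp e ρ δ z) z, h1.1.2]
      · rw [mem_closedBall_zero_iff]; linarith
    have k2 : ‖G₂ (-alp e ρ δ (((2 * ρ + 1 : ℝ) : ℂ) • e - z)) - G₂ (-((ρ : ℂ) • e))‖ < ε / 3 := by
      rw [← dist_eq_norm]
      apply hq
      rw [dist_neg_neg, dist_eq_norm]; exact h2.2.1
    have k3 : ‖(csp δ (inner ℂ e z - ρ) - csp δ (inner ℂ e z - ρ - 1)) • n‖ < ε / 3 := by
      rw [norm_smul]
      have h4 := h3.2.2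
      rw [lt_div_iff₀ (by positivity)] at h4
      nlinarith [norm_nonneg (csp δ (inner ℂ e z - ρ) - csp δ (inner ℂ e z - ρ - 1)), norm_nonneg n]
    rw [dist_comm, dist_eq_norm, mergeMap]
    have h5 : ∀ a b c d f : E, a + b + c - d - f = (a - f) + b + (c - d) := by intros; abel
    rw [h5]
    linarith [norm_add₃_le (a := G₁ (alp e ρ δ z) - G₁ z)
      (b := (csp δ (inner ℂ e z - ρ) - csp δ (inner ℂ e z - ρ - 1)) • n)
      (c := G₂ (-alp e ρ δ (((2 * ρ + 1 : ℝ) : ℂ) • e - z)) - G₂ (-((ρ : ℂ) • e)))]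

end

/-- Real version of `csp`. -/
noncomputable def rsp (δ x : ℝ) : ℝ := (x + √(x ^ 2 + δ ^ 2)) / 2

lemma csp_ofReal (δ x : ℝ) : csp δ x = (rsp δ x : ℂ) := by
  rw [csp, csq_ofReal, rsp]; push_cast; ring

lemma tendsto_rsp (c x₀ : ℝ) :
    Tendsto (fun p : ℝ × ℝ => rsp p.1 (p.2 - c)) (𝓝[>] 0 ×ˢ 𝓝 x₀) (𝓝 (max (x₀ - c) 0)) := by
  have h1 : Continuous (fun p : ℝ × ℝ => rsp p.1 (p.2 - c)) := by unfold rsp; fun_prop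
  have h2 := h1.tendsto ((0 : ℝ), x₀)
  have h3 : rsp 0 (x₀ - c) = max (x₀ - c) 0 := by
    rw [rsp, zero_pow two_ne_zero, add_zero, Real.sqrt_sq_eq_abs]
    rcases le_total 0 (x₀ - c) with h | h
    · rw [abs_of_nonneg h, max_eq_left h]; ring
    · rw [abs_of_nonpos h, max_eq_right h]; ring
  simp only [h3] at h2
  rw [nhds_prod_eq] at h2
  exact h2.mono_left (prod_mono_left _ nhdsWithin_le_nhds)

section
variable {E : Type*} [NormedAddCommGroup E] [InnerProductSpace ℂ E]

lemma inner_smul_self {e : E} (he : ‖e‖ = 1) (c : ℂ) : inner ℂ e (c • e) = c := by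
  rw [inner_smul_right, inner_self_eq_norm_sq_to_K, he]; simp

lemma alp_stick {e : E} (he : ‖e‖ = 1) (ρ δ x : ℝ) :
    alp e ρ δ ((x : ℂ) • e) = ((x - rsp δ (x - ρ) : ℝ) : ℂ) • e := by
  rw [alp, inner_smul_self he, sub_self, smul_zero, sub_zero, ← Complex.ofReal_sub, csp_ofReal]
  push_cast; module

lemma hasFDerivAt_alp_stick {e : E} (he : ‖e‖ = 1) (ρ : ℝ) {δ : ℝ} (hδ : 0 < δ) (x : ℝ) :
    HasFDerivAt (alp e ρ δ)
      (((1 - rspd δ (x - ρ) : ℝ) : ℂ) • ContinuousLinearMap.id ℂ E) ((x : ℂ) • e) := by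
  set z : E := (x : ℂ) • e with hz
  have hzi : inner ℂ e z = x := inner_smul_self he _
  have hs : ((x - ρ : ℝ) : ℂ) ^ 2 + (δ : ℂ) ^ 2 ∈ Complex.slitPlane := slit_ofReal hδ _
  have h1 : HasFDerivAt (fun z : E => inner ℂ e z) (innerSL ℂ e) z := (innerSL ℂ e).hasFDerivAt
  have h1' := h1.sub_const (ρ : ℂ)
  have heq : inner ℂ e z - ρ = ((x - ρ : ℝ) : ℂ) := by rw [hzi]; push_cast; rfl
  have h2 : HasFDerivAt (fun z : E => csp δ (inner ℂ e z - ρ))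
      (cspd δ ((x - ρ : ℝ) : ℂ) • innerSL ℂ e) z :=
    HasDerivAt.comp_hasFDerivAt (h₂ := csp δ) z (by rw [heq]; exact hasDerivAt_csp hs) h1'
  obtain ⟨d, h3⟩ : ∃ d : ℂ, HasFDerivAt (fun z : E => cspd δ (inner ℂ e z - ρ))
      (d • innerSL ℂ e) z :=
    ⟨_, HasDerivAt.comp_hasFDerivAt (h₂ := cspd δ) z (by
      rw [heq]; exact (differentiableAt_cspd hs).hasDerivAt) h1'⟩
  have h4 := ((hasFDerivAt_id z).sub (h2.smul_const e)).sub
    (h3.smul ((hasFDerivAt_id z).sub (h1.smul_const e)))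
  refine h4.congr_fderiv ?_
  ext v
  have hz0 : z - inner ℂ e z • e = 0 := by rw [hzi, hz, sub_self]
  simp only [sub_apply, ContinuousLinearMap.id_apply, add_apply,
    ContinuousLinearMap.smulRight_apply, smul_apply, innerSL_apply_apply, id, hz0, smul_zero,
    add_zero, smul_eq_mul, heq, cspd_ofReal, Pi.sub_apply]
  push_cast
  module

end

section
variable {E : Type*} [NormedAddCommGroup E] [InnerProductSpace ℂ E]

lemma center_sub_stick (e : E) (ρ x : ℝ) :
    ((2 * ρ + 1 : ℝ) : ℂ) • e - (x : ℂ) • e = ((2 * ρ + 1 - x : ℝ) : ℂ) • e := by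
  push_cast; module

lemma hasFDerivAt_mergeMap_stick {e : E} (he : ‖e‖ = 1) {ρ δ : ℝ} (hδ : 0 < δ) {G₁ G₂ : E → E}
    {n q : E} (x : ℝ) {B₁ B₂ : E →L[ℂ] E} (hB₁ : HasFDerivAt G₁ B₁ (alp e ρ δ ((x : ℂ) • e)))
    (hB₂ : HasFDerivAt G₂ B₂ (-alp e ρ δ (((2 * ρ + 1 : ℝ) : ℂ) • e - (x : ℂ) • e))) :
    HasFDerivAt (mergeMap e ρ G₁ G₂ n q δ)
      (((1 - rspd δ (x - ρ) : ℝ) : ℂ) • B₁ +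
        ((rspd δ (x - ρ) - rspd δ (x - ρ - 1) : ℝ) : ℂ) • (innerSL ℂ e).smulRight n +
        ((rspd δ (x - ρ - 1) : ℝ) : ℂ) • B₂) ((x : ℂ) • e) := by
  set z : E := (x : ℂ) • e with hz
  have hzi : inner ℂ e z = x := inner_smul_self he _
  have heq : inner ℂ e z - ρ = ((x - ρ : ℝ) : ℂ) := by rw [hzi]; push_cast; rfl
  have heq1 : inner ℂ e z - ρ - 1 = ((x - ρ - 1 : ℝ) : ℂ) := by rw [hzi]; push_cast; rfl
  have h1 : HasFDerivAt (fun z : E => inner ℂ e z) (innerSL ℂ e) z := (innerSL ℂ e).hasFDerivAt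
  have h1' := h1.sub_const (ρ : ℂ)
  have h1'' := h1'.sub_const (1 : ℂ)
  have h2 : HasFDerivAt (fun z : E => csp δ (inner ℂ e z - ρ))
      (cspd δ ((x - ρ : ℝ) : ℂ) • innerSL ℂ e) z :=
    HasDerivAt.comp_hasFDerivAt (h₂ := csp δ) z
      (by rw [heq]; exact hasDerivAt_csp (slit_ofReal hδ _)) h1'
  have h3 : HasFDerivAt (fun z : E => csp δ (inner ℂ e z - ρ - 1))
      (cspd δ ((x - ρ - 1 : ℝ) : ℂ) • innerSL ℂ e) z :=
    HasDerivAt.comp_hasFDerivAt (h₂ := csp δ) z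
      (by rw [heq1]; exact hasDerivAt_csp (slit_ofReal hδ _)) h1''
  have h4 : HasFDerivAt (fun z => G₁ (alp e ρ δ z)) _ z :=
    HasFDerivAt.comp z hB₁ (hasFDerivAt_alp_stick he ρ hδ x)
  have h5' : HasFDerivAt (alp e ρ δ) (((1 - rspd δ (2 * ρ + 1 - x - ρ) : ℝ) : ℂ) •
      ContinuousLinearMap.id ℂ E) (((2 * ρ + 1 : ℝ) : ℂ) • e - z) := by
    rw [hz, center_sub_stick]; exact hasFDerivAt_alp_stick he ρ hδ (2 * ρ + 1 - x)
  have h5'' : HasFDerivAt (fun z : E => ((2 * ρ + 1 : ℝ) : ℂ) • e - z)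
      (-ContinuousLinearMap.id ℂ E) z := (hasFDerivAt_id z).const_sub _
  have h5 : HasFDerivAt (fun z => alp e ρ δ (((2 * ρ + 1 : ℝ) : ℂ) • e - z)) _ z :=
    HasFDerivAt.comp (f := fun z => ((2 * ρ + 1 : ℝ) : ℂ) • e - z) z h5' h5''
  have h6 : HasFDerivAt (fun z => G₂ (-alp e ρ δ (((2 * ρ + 1 : ℝ) : ℂ) • e - z))) _ z :=
    HasFDerivAt.comp z hB₂ h5.neg
  have h7 := ((h4.add ((h2.sub h3).smul_const n)).add h6).sub_const q
  refine h7.congr_fderiv ?_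
  have h8 : rspd δ (2 * ρ + 1 - x - ρ) = 1 - rspd δ (x - ρ - 1) := by
    rw [← rspd_neg]; congr 1; ring
  ext v
  simp only [h8, cspd_ofReal, add_apply, ContinuousLinearMap.smulRight_apply, smul_apply,
    innerSL_apply_apply, sub_apply, neg_apply, ContinuousLinearMap.comp_apply,
    ContinuousLinearMap.id_apply, map_neg, map_smul, smul_neg, neg_neg, smul_eq_mul]
  push_cast
  module

/-- The derivative along the stick is injective, robustly under perturbation of the two linear
parts. -/
lemma stick_linear {e n : E} {A₁ A₂ B₁ B₂ : E →L[ℂ] E} {c ε l₁ l₂ : ℝ} (hl₁ : 0 ≤ l₁)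
    (hl₂ : 0 ≤ l₂) (h₁ : ∀ v, inner ℂ n (A₁ v) = l₁ * inner ℂ e v)
    (h₂ : ∀ v, inner ℂ n (A₂ v) = l₂ * inner ℂ e v)
    (hc : ∀ s t : ℝ, 0 ≤ s → 0 ≤ t → ∀ v, (s + t) * c * ‖v‖ ≤ ‖(s : ℂ) • A₁ v + (t : ℂ) • A₂ v‖)
    (hε : 2 * ε < c) (hB₁ : ‖B₁ - A₁‖ ≤ ε) (hB₂ : ‖B₂ - A₂‖ ≤ ε) {s t r : ℝ} (hs : 0 < s)
    (ht : 0 < t) (hr : 0 ≤ r) {v : E}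
    (h : (s : ℂ) • B₁ v + (r : ℂ) • (inner ℂ e v • n) + (t : ℂ) • B₂ v = 0) : v = 0 := by
  set Θ : E := (s : ℂ) • (B₁ - A₁) v + (t : ℂ) • (B₂ - A₂) v with hΘ
  have hΘn : ‖Θ‖ ≤ (s + t) * ε * ‖v‖ := by
    refine (norm_add_le _ _).trans ?_
    rw [norm_smul, norm_smul, Complex.norm_real, Complex.norm_real, Real.norm_eq_abs,
      Real.norm_eq_abs, abs_of_pos hs, abs_of_pos ht]
    have k1 := (B₁ - A₁).le_of_opNorm_le hB₁ v
    have k2 := (B₂ - A₂).le_of_opNorm_le hB₂ v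
    nlinarith
  have hT : (s : ℂ) • A₁ v + (t : ℂ) • A₂ v = -Θ - (r : ℂ) • (inner ℂ e v • n) := by
    have : (s : ℂ) • A₁ v + (t : ℂ) • A₂ v + Θ + (r : ℂ) • (inner ℂ e v • n) = 0 := by
      rw [hΘ, ← h]
      simp only [sub_apply]
      module
    rw [eq_sub_iff_add_eq, eq_neg_iff_add_eq_zero, ← this]; abel
  have hin := congrArg (fun w => inner ℂ n w) hT
  simp only [inner_add_right, inner_sub_right, inner_neg_right, inner_smul_right, h₁, h₂,
    inner_self_eq_norm_sq_to_K] at hin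
  have hin2 : ((s * l₁ + t * l₂ + r * ‖n‖ ^ 2 : ℝ) : ℂ) * inner ℂ e v = -inner ℂ n Θ := by
    push_cast
    simp only [Complex.coe_algebraMap] at hin
    linear_combination hin
  have hin3 : (s * l₁ + t * l₂ + r * ‖n‖ ^ 2) * ‖inner ℂ e v‖ ≤ ‖n‖ * ‖Θ‖ := by
    have h9 := congrArg norm hin2
    have hnn : 0 ≤ s * l₁ + t * l₂ + r * ‖n‖ ^ 2 := by positivity
    rw [norm_mul, Complex.norm_real, Real.norm_eq_abs, abs_of_nonneg hnn, norm_neg] at h9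
    rw [h9]; exact norm_inner_le_norm _ _
  have hin4 : r * ‖inner ℂ e v‖ * ‖n‖ ≤ ‖Θ‖ := by
    rcases (norm_nonneg n).eq_or_lt with h0 | h0
    · rw [← h0, mul_zero]; exact norm_nonneg _
    · refine le_of_mul_le_mul_left ?_ h0
      have : 0 ≤ (s * l₁ + t * l₂) * ‖inner ℂ e v‖ := by positivity
      nlinarith
  have h10 := hc s t hs.le ht.le v
  rw [hT] at h10
  have h11 : ‖-Θ - (r : ℂ) • (inner ℂ e v • n)‖ ≤ ‖Θ‖ + r * ‖inner ℂ e v‖ * ‖n‖ := by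
    refine (norm_sub_le _ _).trans ?_
    rw [norm_neg, norm_smul, norm_smul, Complex.norm_real, Real.norm_eq_abs, abs_of_nonneg hr]
    linarith
  have h12 : (s + t) * (c - 2 * ε) * ‖v‖ ≤ 0 := by nlinarith
  have h13 : 0 < (s + t) * (c - 2 * ε) := mul_pos (by linarith) (by linarith)
  have h14 : ‖v‖ = 0 := le_antisymm (by nlinarith [norm_nonneg v]) (norm_nonneg v)
  exact norm_eq_zero.1 h14

/-- Compactness of the set of convex combinations and of the unit sphere makes the injectivity of
the convex combinations quantitative. -/
lemma exists_lower_bound [FiniteDimensional ℂ E] {A₁ A₂ : E →L[ℂ] E}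
    (hT : ∀ s t : ℝ, 0 ≤ s → 0 ≤ t → s + t = 1 → ∀ v, (s : ℂ) • A₁ v + (t : ℂ) • A₂ v = 0 → v = 0) :
    ∃ c : ℝ, 0 < c ∧ ∀ s t : ℝ, 0 ≤ s → 0 ≤ t → ∀ v,
      (s + t) * c * ‖v‖ ≤ ‖(s : ℂ) • A₁ v + (t : ℂ) • A₂ v‖ := by
  have : ProperSpace E := FiniteDimensional.proper ℂ E
  have hcpt : IsCompact (Icc (0 : ℝ) 1 ×ˢ sphere (0 : E) 1) := isCompact_Icc.prod (isCompact_sphere _ _)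
  let φ : ℝ × E → ℝ := fun p => ‖(p.1 : ℂ) • A₁ p.2 + ((1 - p.1 : ℝ) : ℂ) • A₂ p.2‖
  have hφ : Continuous φ := by
    simp only [φ]
    fun_prop
  obtain ⟨c, hc, hcφ⟩ : ∃ c : ℝ, 0 < c ∧ ∀ p ∈ Icc (0 : ℝ) 1 ×ˢ sphere (0 : E) 1, c ≤ φ p := by
    rcases (Icc (0 : ℝ) 1 ×ˢ sphere (0 : E) 1).eq_empty_or_nonempty with h | h
    · exact ⟨1, one_pos, by simp [h]⟩
    obtain ⟨p, hp, hmin⟩ := hcpt.exists_isMinOn h hφ.continuousOn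
    refine ⟨φ p, norm_pos_iff.2 fun h0 => ?_, fun p' hp' => hmin hp'⟩
    have := hT p.1 (1 - p.1) hp.1.1 (by linarith [hp.1.2]) (by ring) p.2 h0
    have h2 := hp.2
    rw [this, mem_sphere_iff_norm, sub_zero, norm_zero] at h2
    exact zero_ne_one h2
  refine ⟨c, hc, fun s t hs ht v => ?_⟩
  rcases eq_or_ne v 0 with rfl | hv
  · simp
  rcases (add_nonneg hs ht).eq_or_lt with h0 | h0
  · rw [← h0]; simp
  have hv0 : 0 < ‖v‖ := norm_pos_iff.2 hv
  have h1 := hcφ (s / (s + t), ((‖v‖⁻¹ : ℝ) : ℂ) • v) ⟨⟨by positivity, by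
    rw [div_le_one h0]; linarith⟩, by
      rw [mem_sphere_zero_iff_norm, norm_smul, Complex.norm_real, norm_inv, norm_norm]
      field_simp⟩
  have h2 : (((s / (s + t) : ℝ) : ℂ) • A₁ (((‖v‖⁻¹ : ℝ) : ℂ) • v) +
      ((1 - s / (s + t) : ℝ) : ℂ) • A₂ (((‖v‖⁻¹ : ℝ) : ℂ) • v)) =
      (((s + t)⁻¹ * ‖v‖⁻¹ : ℝ) : ℂ) • ((s : ℂ) • A₁ v + (t : ℂ) • A₂ v) := by
    have : (1 - s / (s + t)) = t / (s + t) := by field_simp; ring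
    rw [this]
    simp only [map_smul, smul_add, smul_smul, div_eq_mul_inv]
    push_cast
    congr 2 <;> ring
  simp only [φ] at h1
  rw [h2, norm_smul, Complex.norm_real, Real.norm_eq_abs, abs_of_pos (by positivity)] at h1
  calc (s + t) * c * ‖v‖ ≤ (s + t) * ((s + t)⁻¹ * ‖v‖⁻¹ *
        ‖(s : ℂ) • A₁ v + (t : ℂ) • A₂ v‖) * ‖v‖ := by gcongr
    _ = _ := by field_simp

end

/-! ### Merging in normalized position -/

section
variable {E : Type*} [NormedAddCommGroup E] [InnerProductSpace ℂ E]

/-- The vector from `G₁ (ρ e)` to `G₂ (-ρ e)`. -/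
def gapVec (e : E) (ρ : ℝ) (G₁ G₂ : E → E) : E := G₂ (-((ρ : ℂ) • e)) - G₁ ((ρ : ℂ) • e)

/-- The normalized position of two embedded balls which can be joined along the segment from
`G₁ (ρ e)` to `G₂ (-ρ e)`. The fields `seg`, `seg₁`, `seg₂` say that this segment stays in `U` and
misses both open balls; `lin₁` and `lin₂` are the first-order conditions for its end points to be
nearest points of the two images (the image spheres are orthogonal to the segment there); `inv`
says that no convex combination of the derivatives at the end points degenerates. -/
structure MergeData (U : Set E) (e : E) (ρ R : ℝ) (G₁ G₂ : E → E) : Prop where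
  he : ‖e‖ = 1
  hρ : 1 < ρ
  hρR : ρ < R
  hG₁ : DifferentiableOn ℂ G₁ (ball 0 R)
  hG₂ : DifferentiableOn ℂ G₂ (ball 0 R)
  inj₁ : InjOn G₁ (ball 0 R)
  inj₂ : InjOn G₂ (ball 0 R)
  hU : IsOpen U
  maps₁ : MapsTo G₁ (ball 0 ρ) U
  maps₂ : MapsTo G₂ (ball 0 ρ) U
  disj : ∀ x ∈ ball (0 : E) ρ, ∀ y ∈ ball (0 : E) ρ, G₁ x ≠ G₂ y
  seg : ∀ u : ℝ, 0 ≤ u → u ≤ 1 → G₁ ((ρ : ℂ) • e) + (u : ℂ) • gapVec e ρ G₁ G₂ ∈ U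
  seg₁ : ∀ u : ℝ, 0 ≤ u → u ≤ 1 → ∀ x ∈ ball (0 : E) ρ,
    G₁ x ≠ G₁ ((ρ : ℂ) • e) + (u : ℂ) • gapVec e ρ G₁ G₂
  seg₂ : ∀ u : ℝ, 0 ≤ u → u ≤ 1 → ∀ x ∈ ball (0 : E) ρ,
    G₂ x ≠ G₁ ((ρ : ℂ) • e) + (u : ℂ) • gapVec e ρ G₁ G₂
  gap : gapVec e ρ G₁ G₂ ≠ 0
  lin₁ : ∃ l : ℝ, 0 < l ∧ ∀ v,
    inner ℂ (gapVec e ρ G₁ G₂) (fderiv ℂ G₁ ((ρ : ℂ) • e) v) = l * inner ℂ e v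
  lin₂ : ∃ l : ℝ, 0 < l ∧ ∀ v,
    inner ℂ (gapVec e ρ G₁ G₂) (fderiv ℂ G₂ (-((ρ : ℂ) • e)) v) = l * inner ℂ e v
  inv : ∀ s t : ℝ, 0 ≤ s → 0 ≤ t → s + t = 1 → ∀ v,
    (s : ℂ) • fderiv ℂ G₁ ((ρ : ℂ) • e) v + (t : ℂ) • fderiv ℂ G₂ (-((ρ : ℂ) • e)) v = 0 → v = 0

/-- The merge map attached to a normalized pair. -/
noncomputable def mrg (e : E) (ρ : ℝ) (G₁ G₂ : E → E) (δ : ℝ) : E → E :=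
  mergeMap e ρ G₁ G₂ (gapVec e ρ G₁ G₂) (G₂ (-((ρ : ℂ) • e))) δ

variable {U : Set E} {e : E} {ρ R : ℝ} {G₁ G₂ : E → E}

lemma norm_real_smul_unit (he : ‖e‖ = 1) {x : ℝ} (hx : 0 ≤ x) : ‖(x : ℂ) • e‖ = x := by
  rw [norm_smul_unit he, Complex.norm_real, Real.norm_eq_abs, abs_of_nonneg hx]

lemma tendsto_alp_stick (he : ‖e‖ = 1) {x₀ : ℝ} (hx₀ : x₀ ∈ Icc ρ (ρ + 1)) :
    Tendsto (fun p : ℝ × ℝ => alp e ρ p.1 ((p.2 : ℂ) • e)) (𝓝[>] 0 ×ˢ 𝓝 x₀) (𝓝 ((ρ : ℂ) • e)) := by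
  simp only [alp_stick he]
  have h1 : Tendsto (fun p : ℝ × ℝ => p.2 - rsp p.1 (p.2 - ρ)) (𝓝[>] 0 ×ˢ 𝓝 x₀) (𝓝 ρ) := by
    have := (tendsto_snd (f := 𝓝[>] (0 : ℝ)) (g := 𝓝 x₀)).sub (tendsto_rsp ρ x₀)
    rwa [max_eq_left (by linarith [hx₀.1]), sub_sub_cancel] at this
  exact ((Complex.continuous_ofReal.tendsto ρ).comp h1).smul_const e

lemma tendsto_alp_stick' (he : ‖e‖ = 1) {x₀ : ℝ} (hx₀ : x₀ ∈ Icc ρ (ρ + 1)) :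
    Tendsto (fun p : ℝ × ℝ => -alp e ρ p.1 (((2 * ρ + 1 : ℝ) : ℂ) • e - (p.2 : ℂ) • e))
      (𝓝[>] 0 ×ˢ 𝓝 x₀) (𝓝 (-((ρ : ℂ) • e))) := by
  simp only [center_sub_stick]
  have h1 : Tendsto (fun p : ℝ × ℝ => (p.1, 2 * ρ + 1 - p.2)) (𝓝[>] 0 ×ˢ 𝓝 x₀)
      (𝓝[>] 0 ×ˢ 𝓝 (2 * ρ + 1 - x₀)) :=
    tendsto_fst.prodMk (tendsto_snd.const_sub _)
  exact ((tendsto_alp_stick he (x₀ := 2 * ρ + 1 - x₀)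
    ⟨by linarith [hx₀.2], by linarith [hx₀.1]⟩).comp h1).neg

lemma MergeData.mem₁ (D : MergeData U e ρ R G₁ G₂) : (ρ : ℂ) • e ∈ ball (0 : E) R := by
  rw [mem_ball_zero_iff, norm_real_smul_unit D.he (by linarith [D.hρ])]; exact D.hρR

lemma MergeData.mem₂ (D : MergeData U e ρ R G₁ G₂) : -((ρ : ℂ) • e) ∈ ball (0 : E) R := by
  rw [mem_ball_zero_iff, norm_neg, norm_real_smul_unit D.he (by linarith [D.hρ])]; exact D.hρR

lemma tendsto_mrg_stick (D : MergeData U e ρ R G₁ G₂) {x₀ : ℝ} (hx₀ : x₀ ∈ Icc ρ (ρ + 1)) :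
    Tendsto (fun p : ℝ × ℝ => mrg e ρ G₁ G₂ p.1 ((p.2 : ℂ) • e)) (𝓝[>] 0 ×ˢ 𝓝 x₀)
      (𝓝 (G₁ ((ρ : ℂ) • e) + ((x₀ - ρ : ℝ) : ℂ) • gapVec e ρ G₁ G₂)) := by
  have h1 := ((D.hG₁.continuousOn.continuousAt (isOpen_ball.mem_nhds D.mem₁)).tendsto).comp
    (tendsto_alp_stick D.he hx₀)
  have h2 := ((D.hG₂.continuousOn.continuousAt (isOpen_ball.mem_nhds D.mem₂)).tendsto).comp
    (tendsto_alp_stick' D.he hx₀)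
  have h3 := (tendsto_rsp ρ x₀).sub (tendsto_rsp (ρ + 1) x₀)
  rw [max_eq_left (by linarith [hx₀.1]), max_eq_right (by linarith [hx₀.2]), sub_zero] at h3
  have h4 := (((Complex.continuous_ofReal.tendsto _).comp h3).smul_const (gapVec e ρ G₁ G₂))
  have h5 := ((h1.add h4).add h2).sub_const (G₂ (-((ρ : ℂ) • e)))
  rw [add_sub_cancel_right] at h5
  refine h5.congr fun p => ?_
  simp only [mrg, mergeMap, Function.comp_def, inner_smul_self D.he]
  rw [← Complex.ofReal_sub, csp_ofReal, ← Complex.ofReal_one, ← Complex.ofReal_sub, csp_ofReal,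
    Complex.ofReal_sub, sub_add_eq_sub_sub]

lemma rspd_lt_one {δ : ℝ} (hδ : 0 < δ) (x : ℝ) : rspd δ x < 1 := by
  have := rspd_pos hδ (-x)
  rw [rspd_neg] at this
  linarith

/-- Behaviour of the derivative of the merge map along the stick. -/
lemma eventually_mrg_stick [FiniteDimensional ℂ E] (D : MergeData U e ρ R G₁ G₂) {x₀ : ℝ}
    (hx₀ : x₀ ∈ Icc ρ (ρ + 1)) :
    ∀ᶠ p : ℝ × ℝ in 𝓝[>] 0 ×ˢ 𝓝 x₀,
      (∀ᶠ y in 𝓝 ((p.2 : ℂ) • e), DifferentiableAt ℂ (mrg e ρ G₁ G₂ p.1) y) ∧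
      Function.Injective (fderiv ℂ (mrg e ρ G₁ G₂ p.1) ((p.2 : ℂ) • e)) ∧
      0 < (inner ℂ (gapVec e ρ G₁ G₂) (fderiv ℂ (mrg e ρ G₁ G₂ p.1) ((p.2 : ℂ) • e) e)).re := by
  obtain ⟨l₁, hl₁, hA₁⟩ := D.lin₁
  obtain ⟨l₂, hl₂, hA₂⟩ := D.lin₂
  obtain ⟨c, hc, hlow⟩ := exists_lower_bound D.inv
  have hee : inner ℂ e e = (1 : ℂ) := by rw [inner_self_eq_norm_sq_to_K, D.he]; simp
  set n := gapVec e ρ G₁ G₂ with hn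
  have t1 := tendsto_alp_stick D.he hx₀
  have t2 := tendsto_alp_stick' D.he hx₀
  have d1 : Tendsto (fderiv ℂ G₁) (𝓝 ((ρ : ℂ) • e)) (𝓝 (fderiv ℂ G₁ ((ρ : ℂ) • e))) :=
    (continuousOn_fderiv_of_holo isOpen_ball D.hG₁).continuousAt (isOpen_ball.mem_nhds D.mem₁)
  have d2 : Tendsto (fderiv ℂ G₂) (𝓝 (-((ρ : ℂ) • e))) (𝓝 (fderiv ℂ G₂ (-((ρ : ℂ) • e)))) :=
    (continuousOn_fderiv_of_holo isOpen_ball D.hG₂).continuousAt (isOpen_ball.mem_nhds D.mem₂)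
  have k1 := (d1.comp t1).eventually (closedBall_mem_nhds _ (show 0 < c / 3 by positivity))
  have k2 := (d2.comp t2).eventually (closedBall_mem_nhds _ (show 0 < c / 3 by positivity))
  have j1 : ∀ᶠ B : E →L[ℂ] E in 𝓝 (fderiv ℂ G₁ ((ρ : ℂ) • e)), 0 < (inner ℂ n (B e)).re := by
    have hcont : Continuous (fun B : E →L[ℂ] E => (inner ℂ n (B e)).re) := by fun_prop
    refine (hcont.tendsto _).eventually_const_lt ?_
    rw [hA₁, hee]; simpa using hl₁
  have j2 : ∀ᶠ B : E →L[ℂ] E in 𝓝 (fderiv ℂ G₂ (-((ρ : ℂ) • e))), 0 < (inner ℂ n (B e)).re := by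
    have hcont : Continuous (fun B : E →L[ℂ] E => (inner ℂ n (B e)).re) := by fun_prop
    refine (hcont.tendsto _).eventually_const_lt ?_
    rw [hA₂, hee]; simpa using hl₂
  have hpos : ∀ᶠ p : ℝ × ℝ in 𝓝[>] 0 ×ˢ 𝓝 x₀, 0 < p.1 :=
    tendsto_fst.eventually (eventually_mem_nhdsWithin)
  filter_upwards [hpos, k1, k2, (d1.comp t1).eventually j1, (d2.comp t2).eventually j2,
    t1.eventually (isOpen_ball.mem_nhds D.mem₁), t2.eventually (isOpen_ball.mem_nhds D.mem₂)]
    with ⟨δ, x⟩ hδ hk1 hk2 hj1 hj2 hm1 hm2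
  simp only [Function.comp_apply] at hδ hk1 hk2 hj1 hj2 hm1 hm2 ⊢
  have hF := hasFDerivAt_mergeMap_stick D.he hδ (n := n) (q := G₂ (-((ρ : ℂ) • e))) x
    (D.hG₁.differentiableAt (isOpen_ball.mem_nhds hm1)).hasFDerivAt
    (D.hG₂.differentiableAt (isOpen_ball.mem_nhds hm2)).hasFDerivAt
  set B₁ := fderiv ℂ G₁ (alp e ρ δ ((x : ℂ) • e))
  set B₂ := fderiv ℂ G₂ (-alp e ρ δ (((2 * ρ + 1 : ℝ) : ℂ) • e - (x : ℂ) • e))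
  have hfd : fderiv ℂ (mrg e ρ G₁ G₂ δ) ((x : ℂ) • e) = _ := hF.fderiv
  have hs1 : 0 < 1 - rspd δ (x - ρ) := by linarith [rspd_lt_one hδ (x - ρ)]
  have hs2 : 0 < rspd δ (x - ρ - 1) := rspd_pos hδ _
  have hs3 : 0 ≤ rspd δ (x - ρ) - rspd δ (x - ρ - 1) :=
    sub_nonneg.2 (rspd_mono hδ (by linarith))
  refine ⟨?_, ?_, ?_⟩
  · have hi : inner ℂ e ((x : ℂ) • e) = (x : ℂ) := inner_smul_self D.he _
    refine eventually_differentiableAt_mergeMap D.he D.hG₁ D.hG₂ ?_ ?_ hm1 hm2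
    · rw [hi, ← Complex.ofReal_sub]; exact slit_ofReal hδ _
    · rw [hi, ← Complex.ofReal_sub, ← Complex.ofReal_one, ← Complex.ofReal_sub]
      exact slit_ofReal hδ _
  · rw [hfd, injective_iff_map_eq_zero]
    intro v hv
    rw [dist_eq_norm] at hk1 hk2
    refine stick_linear hl₁.le hl₂.le hA₁ hA₂ hlow (by linarith) hk1 hk2 hs1 hs2 hs3
      (v := v) ?_
    simpa using hv
  · rw [hfd]
    simp only [add_apply, smul_apply, ContinuousLinearMap.smulRight_apply, innerSL_apply_apply,
      hee, one_smul, inner_add_right, inner_smul_right, Complex.add_re, Complex.re_ofReal_mul]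
    have hnn : 0 ≤ (inner ℂ n n).re := inner_self_nonneg (𝕜 := ℂ)
    have := mul_pos hs1 hj1
    have := mul_pos hs2 hj2
    have := mul_nonneg hs3 hnn
    linarith

end

section
variable {E : Type*} [NormedAddCommGroup E] [InnerProductSpace ℂ E]
variable {U : Set E} {e : E} {ρ R : ℝ} {G₁ G₂ : E → E}

/-- Local behaviour of the merge maps as `δ → 0` near a point `z₀` of a set `K`: convergence,
holomorphy and immersivity, and uniform local injectivity. -/
structure LocalMerge (K : Set E) (g : ℝ → E → E) (z₀ w₀ : E) : Prop where
  lim : Tendsto (fun p : ℝ × E => g p.1 p.2) (𝓝[>] 0 ×ˢ 𝓝[K] z₀) (𝓝 w₀)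
  imm : ∀ᶠ p : ℝ × E in 𝓝[>] 0 ×ˢ 𝓝[K] z₀, (∀ᶠ y in 𝓝 p.2, DifferentiableAt ℂ (g p.1) y) ∧
    Function.Injective (fderiv ℂ (g p.1) p.2)
  inj : ∃ V ∈ 𝓝[K] z₀, ∀ᶠ δ in 𝓝[>] (0 : ℝ), InjOn (g δ) V

lemma LocalMerge.mono {K K' : Set E} {g : ℝ → E → E} {z₀ w₀ : E} (h : LocalMerge K g z₀ w₀)
    (hK : K' ⊆ K) : LocalMerge K' g z₀ w₀ where
  lim := h.lim.mono_left (prod_mono_right _ (nhdsWithin_mono _ hK))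
  imm := h.imm.filter_mono (prod_mono_right _ (nhdsWithin_mono _ hK))
  inj := by
    obtain ⟨V, hV, h⟩ := h.inj
    exact ⟨V, nhdsWithin_mono _ hK hV, h⟩

lemma localMerge_left [FiniteDimensional ℂ E] (he : ‖e‖ = 1) (hρ : 0 < ρ) (hρR : ρ < R)
    (hG₁ : DifferentiableOn ℂ G₁ (ball 0 R)) (hG₂ : DifferentiableOn ℂ G₂ (ball 0 R))
    (inj₁ : InjOn G₁ (ball 0 R)) (n : E) {z₀ : E} (hz₀ : ‖z₀‖ < ρ) :
    LocalMerge univ (mergeMap e ρ G₁ G₂ n (G₂ (-((ρ : ℂ) • e)))) z₀ (G₁ z₀) := by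
  obtain ⟨ρ', h1, h2⟩ := exists_between hz₀
  obtain ⟨hd, hu⟩ := mergeMap_left he hρ hρR h2 hG₁ hG₂ n
  have hzb : z₀ ∈ ball (0 : E) ρ' := by rwa [mem_ball_zero_iff]
  have hzR : z₀ ∈ ball (0 : E) R := by rw [mem_ball_zero_iff]; linarith
  have himm : Function.Injective (fderiv ℂ G₁ z₀) :=
    osgood _ E E G₁ _ isOpen_ball hG₁ inj₁ rfl rfl z₀ hzR
  obtain ⟨V, hV, hloc⟩ := stable_local isOpen_ball
    (hG₁.mono (ball_subset_ball (by linarith))) hzb himm hd hu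
  constructor
  · rw [nhdsWithin_univ, Metric.tendsto_nhds]
    intro ε hε
    have hc : ContinuousAt G₁ z₀ := hG₁.continuousOn.continuousAt (isOpen_ball.mem_nhds hzR)
    filter_upwards [(Metric.tendstoUniformlyOn_iff.1 hu (ε / 2) (half_pos hε)).prod_mk
      ((Metric.tendsto_nhds.1 hc (ε / 2) (half_pos hε)).and (isOpen_ball.mem_nhds hzb))]
      with p hp
    have := hp.1 _ hp.2.2
    rw [dist_comm] at this
    linarith [dist_triangle (mergeMap e ρ G₁ G₂ n (G₂ (-((ρ : ℂ) • e))) p.1 p.2) (G₁ p.2) (G₁ z₀),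
      hp.2.1]
  · rw [nhdsWithin_univ]
    filter_upwards [(hd.and hloc).prod_mk ((eventually_mem_nhds_iff.2
      (isOpen_ball.mem_nhds hzb)).and hV)] with p hp
    refine ⟨?_, hp.1.2.2 _ hp.2.2⟩
    filter_upwards [isOpen_ball.mem_nhds (mem_of_mem_nhds hp.2.1)] with y hy
    exact hp.1.1.differentiableAt (isOpen_ball.mem_nhds hy)
  · exact ⟨V, by rwa [nhdsWithin_univ], hloc.mono fun δ h => h.1⟩

lemma differentiableOn_comp_neg {G : E → E} (hG : DifferentiableOn ℂ G (ball 0 R)) :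
    DifferentiableOn ℂ (fun w => G (-w)) (ball 0 R) :=
  hG.comp (differentiable_id.neg (𝕜 := ℂ)).differentiableOn fun w hw => by simpa using hw

lemma mrg_reflect (he : ‖e‖ = 1) (δ : ℝ) (z : E) :
    mrg e ρ G₁ G₂ δ z = mergeMap e ρ (fun w => G₂ (-w)) (fun w => G₁ (-w))
      (G₁ ((ρ : ℂ) • e) - G₂ (-((ρ : ℂ) • e))) ((fun w => G₁ (-w)) (-((ρ : ℂ) • e))) δ
      (((2 * ρ + 1 : ℝ) : ℂ) • e - z) := by
  have := mergeMap_reflect he ρ G₁ G₂ (G₁ ((ρ : ℂ) • e)) (G₂ (-((ρ : ℂ) • e))) δ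
    (((2 * ρ + 1 : ℝ) : ℂ) • e - z)
  rw [sub_sub_cancel] at this
  simp only [neg_neg]
  exact this

lemma localMerge_right [FiniteDimensional ℂ E] (D : MergeData U e ρ R G₁ G₂) {z₀ : E}
    (hz₀ : ‖((2 * ρ + 1 : ℝ) : ℂ) • e - z₀‖ < ρ) :
    LocalMerge univ (mrg e ρ G₁ G₂) z₀ (G₂ (z₀ - ((2 * ρ + 1 : ℝ) : ℂ) • e)) := by
  have key := localMerge_left D.he (by linarith [D.hρ]) D.hρR (differentiableOn_comp_neg D.hG₂)
    (differentiableOn_comp_neg D.hG₁) (fun x hx y hy hxy => neg_injective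
      (D.inj₂ (by simpa using hx) (by simpa using hy) hxy))
    (G₁ ((ρ : ℂ) • e) - G₂ (-((ρ : ℂ) • e))) hz₀
  set h := mergeMap e ρ (fun w => G₂ (-w)) (fun w => G₁ (-w))
      (G₁ ((ρ : ℂ) • e) - G₂ (-((ρ : ℂ) • e))) ((fun w => G₁ (-w)) (-((ρ : ℂ) • e)))
  set c := ((2 * ρ + 1 : ℝ) : ℂ) • e
  have heq : ∀ δ, mrg e ρ G₁ G₂ δ = fun z => h δ (c - z) := fun δ => funext (mrg_reflect D.he δ)
  have hσ : Tendsto (fun z : E => c - z) (𝓝 z₀) (𝓝 (c - z₀)) :=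
    (continuous_const.sub continuous_id).tendsto _
  have hσ2 : Tendsto (fun p : ℝ × E => (p.1, c - p.2)) (𝓝[>] 0 ×ˢ 𝓝 z₀)
      (𝓝[>] 0 ×ˢ 𝓝 (c - z₀)) := tendsto_fst.prodMk (hσ.comp tendsto_snd)
  obtain ⟨k1, k2, V, hV, k3⟩ := key
  rw [nhdsWithin_univ] at k1 k2 hV
  constructor
  · simp only [nhdsWithin_univ, heq]
    have := k1.comp hσ2
    rw [neg_sub] at this
    exact this
  · simp only [nhdsWithin_univ, heq]
    filter_upwards [hσ2.eventually k2] with p hp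
    have hder : HasFDerivAt (fun z : E => c - z) (-ContinuousLinearMap.id ℂ E) p.2 :=
      (hasFDerivAt_id p.2).const_sub _
    constructor
    · have : Tendsto (fun z : E => c - z) (𝓝 p.2) (𝓝 (c - p.2)) :=
        (continuous_const.sub continuous_id).tendsto _
      filter_upwards [this.eventually hp.1] with y hy
      exact DifferentiableAt.comp (g := h p.1) (f := fun z : E => c - z) y hy (by fun_prop)
    · have h9 := (HasFDerivAt.comp (g := h p.1) (f := fun z : E => c - z) p.2
        hp.1.self_of_nhds.hasFDerivAt hder).fderiv
      have h10 : fderiv ℂ (fun z => h p.1 (c - z)) p.2 = _ := h9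
      rw [h10]
      intro x y hxy
      have := hp.2 (by simpa using hxy)
      exact this
  · refine ⟨(fun z : E => c - z) ⁻¹' V, by rw [nhdsWithin_univ]; exact hσ hV, ?_⟩
    filter_upwards [k3] with δ hδ x hx y hy hxy
    simp only [heq] at hxy
    exact sub_right_injective (hδ hx hy hxy)

/-- Near a point of the stick at distance at least `ρ` from both centres, the dumbbell consists of
points of the stick only. -/
lemma eventually_stick (he : ‖e‖ = 1) (hρ : 1 < ρ) {x₀ : ℝ} (hx₀ : x₀ ∈ Icc ρ (ρ + 1)) :
    ∀ᶠ z in 𝓝[dumbbell e (2 * ρ - 1)] ((x₀ : ℂ) • e), z = (((inner ℂ e z).re : ℝ) : ℂ) • e := by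
  rw [eventually_nhdsWithin_iff]
  filter_upwards [ball_mem_nhds _ (show 0 < ρ - 1 by linarith)] with z hz hzK
  rw [mem_ball, dist_eq_norm] at hz
  rcases hzK with (h | ⟨x, -, rfl⟩) | h
  · rw [mem_closedBall_zero_iff] at h
    have := norm_sub_norm_le ((x₀ : ℂ) • e) z
    rw [norm_real_smul_unit he (by linarith [hx₀.1]), norm_sub_rev] at this
    linarith [hx₀.1]
  · simp only [inner_smul_self he, Complex.ofReal_re]
  · rw [mem_closedBall, dist_eq_norm] at h
    have h1 : ((2 + (2 * ρ - 1) : ℝ) : ℂ) • e - (x₀ : ℂ) • e =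
        ((2 * ρ + 1 - x₀ : ℝ) : ℂ) • e := by push_cast; module
    have h2 := norm_real_smul_unit he (x := 2 * ρ + 1 - x₀) (by linarith [hx₀.2])
    have h3 := norm_sub_le_norm_sub_add_norm_sub (((2 + (2 * ρ - 1) : ℝ) : ℂ) • e) z
      ((x₀ : ℂ) • e)
    rw [h1, h2, norm_sub_rev] at h3
    linarith [hx₀.2]

lemma localMerge_stick [FiniteDimensional ℂ E] (D : MergeData U e ρ R G₁ G₂) {x₀ : ℝ}
    (hx₀ : x₀ ∈ Icc ρ (ρ + 1)) :
    LocalMerge (dumbbell e (2 * ρ - 1)) (mrg e ρ G₁ G₂) ((x₀ : ℂ) • e)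
      (G₁ ((ρ : ℂ) • e) + ((x₀ - ρ : ℝ) : ℂ) • gapVec e ρ G₁ G₂) := by
  have hst := eventually_stick D.he D.hρ hx₀
  have hre : Tendsto (fun z : E => (inner ℂ e z).re) (𝓝[dumbbell e (2 * ρ - 1)] ((x₀ : ℂ) • e))
      (𝓝 x₀) := by
    have hc : Continuous (fun z : E => (inner ℂ e z).re) := by fun_prop
    have := hc.tendsto ((x₀ : ℂ) • e)
    rw [inner_smul_self D.he, Complex.ofReal_re] at this
    exact this.mono_left nhdsWithin_le_nhds
  have hre2 : Tendsto (fun p : ℝ × E => (p.1, (inner ℂ e p.2).re))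
      (𝓝[>] 0 ×ˢ 𝓝[dumbbell e (2 * ρ - 1)] ((x₀ : ℂ) • e)) (𝓝[>] 0 ×ˢ 𝓝 x₀) :=
    tendsto_fst.prodMk (hre.comp tendsto_snd)
  have hst2 : ∀ᶠ p : ℝ × E in 𝓝[>] 0 ×ˢ 𝓝[dumbbell e (2 * ρ - 1)] ((x₀ : ℂ) • e),
      p.2 = (((inner ℂ e p.2).re : ℝ) : ℂ) • e := tendsto_snd.eventually hst
  have hev := eventually_mrg_stick D hx₀
  constructor
  · refine ((tendsto_mrg_stick D hx₀).comp hre2).congr' ?_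
    filter_upwards [hst2] with p hp
    simp only [Function.comp_apply]
    rw [← hp]
  · filter_upwards [hst2, hre2.eventually hev] with p hp h
    rw [← hp] at h
    exact ⟨h.1, h.2.1⟩
  · obtain ⟨P, hP, Q, hQ, hPQ⟩ := eventually_prod_iff.1 hev
    obtain ⟨η, hη, hball⟩ := Metric.eventually_nhds_iff_ball.1 hQ
    refine ⟨{z | z = (((inner ℂ e z).re : ℝ) : ℂ) • e ∧ (inner ℂ e z).re ∈ ball x₀ η},
      hst.and (hre.eventually (ball_mem_nhds _ hη)), ?_⟩
    filter_upwards [hP] with δ hδ x hx y hy hxy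
    have hder : ∀ t ∈ ball x₀ η, HasDerivAt (fun t : ℝ =>
        (inner ℂ (gapVec e ρ G₁ G₂) (mrg e ρ G₁ G₂ δ ((t : ℂ) • e))).re)
        ((inner ℂ (gapVec e ρ G₁ G₂) (fderiv ℂ (mrg e ρ G₁ G₂ δ) ((t : ℂ) • e) e)).re) t := by
      intro t ht
      have h1 := (hPQ hδ (hball t ht)).1.self_of_nhds.hasFDerivAt
      have h2 : HasDerivAt (fun c : ℂ => c • e) ((1 : ℂ) • e) (t : ℂ) :=
        (hasDerivAt_id (t : ℂ)).smul_const e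
      have h3 := HasFDerivAt.comp_hasDerivAt (t : ℂ) (f := fun c : ℂ => c • e) h1 h2
      have h4 := ((innerSL ℂ (gapVec e ρ G₁ G₂)).hasFDerivAt
        (x := mrg e ρ G₁ G₂ δ ((t : ℂ) • e))).comp_hasDerivAt (t : ℂ)
        (f := mrg e ρ G₁ G₂ δ ∘ fun c : ℂ => c • e) h3
      rw [one_smul] at h4
      exact h4.real_of_complex
    have hmono : StrictMonoOn (fun t : ℝ =>
        (inner ℂ (gapVec e ρ G₁ G₂) (mrg e ρ G₁ G₂ δ ((t : ℂ) • e))).re) (ball x₀ η) := by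
      refine strictMonoOn_of_deriv_pos (convex_ball _ _)
        (fun t ht => (hder t ht).continuousAt.continuousWithinAt) fun t ht => ?_
      rw [isOpen_ball.interior_eq] at ht
      rw [(hder t ht).deriv]
      exact (hPQ hδ (hball t ht)).2.2
    have := hmono.injOn hx.2 hy.2 (by

      rw [← hx.1, ← hy.1, hxy])
    rw [hx.1, hy.1, this]

end

section
variable {E : Type*} [NormedAddCommGroup E] [InnerProductSpace ℂ E]
variable {U : Set E} {e : E} {ρ R : ℝ} {G₁ G₂ : E → E}

open Classical in
/-- The limit of the merge maps on the dumbbell as `δ → 0`. -/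
noncomputable def mrgLim (e : E) (ρ : ℝ) (G₁ G₂ : E → E) (z : E) : E :=
  if ‖z‖ < ρ then G₁ z else
    if ‖((2 * ρ + 1 : ℝ) : ℂ) • e - z‖ < ρ then G₂ (z - ((2 * ρ + 1 : ℝ) : ℂ) • e) else
      G₁ ((ρ : ℂ) • e) + (((inner ℂ e z).re - ρ : ℝ) : ℂ) • gapVec e ρ G₁ G₂

lemma not_both (he : ‖e‖ = 1) (hρ : 1 < ρ) {z : E} (h1 : ‖z‖ < ρ) :
    ¬ ‖((2 * ρ + 1 : ℝ) : ℂ) • e - z‖ < ρ := fun h2 => by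
  have := norm_sub_norm_le (((2 * ρ + 1 : ℝ) : ℂ) • e) z
  rw [norm_real_smul_unit he (by linarith)] at this
  linarith

lemma mrgLim_left {z : E} (h : ‖z‖ < ρ) : mrgLim e ρ G₁ G₂ z = G₁ z := if_pos h

lemma mrgLim_right (he : ‖e‖ = 1) (hρ : 1 < ρ) {z : E}
    (h : ‖((2 * ρ + 1 : ℝ) : ℂ) • e - z‖ < ρ) :
    mrgLim e ρ G₁ G₂ z = G₂ (z - ((2 * ρ + 1 : ℝ) : ℂ) • e) := by
  rw [mrgLim, if_neg fun h1 => not_both he hρ h1 h, if_pos h]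

lemma mrgLim_stick (he : ‖e‖ = 1) (hρ : 1 < ρ) {x : ℝ} (hx : x ∈ Icc ρ (ρ + 1)) :
    mrgLim e ρ G₁ G₂ ((x : ℂ) • e) =
      G₁ ((ρ : ℂ) • e) + ((x - ρ : ℝ) : ℂ) • gapVec e ρ G₁ G₂ := by
  rw [mrgLim, if_neg, if_neg, inner_smul_self he, Complex.ofReal_re]
  · rw [center_sub_stick, norm_real_smul_unit he (by linarith [hx.2])]; linarith [hx.2]
  · rw [norm_real_smul_unit he (by linarith [hx.1])]; linarith [hx.1]

lemma dumbbell_cases (he : ‖e‖ = 1) (hρ : 1 < ρ) {z : E} (hz : z ∈ dumbbell e (2 * ρ - 1)) :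
    ‖z‖ < ρ ∨ ‖((2 * ρ + 1 : ℝ) : ℂ) • e - z‖ < ρ ∨ ∃ x ∈ Icc ρ (ρ + 1), z = (x : ℂ) • e := by
  rcases hz with (h | ⟨x, hx, rfl⟩) | h
  · left
    rw [mem_closedBall_zero_iff] at h
    linarith
  · rcases lt_or_ge x ρ with h1 | h1
    · left
      rw [norm_real_smul_unit he (by linarith [hx.1])]; exact h1
    rcases lt_or_ge (ρ + 1) x with h2 | h2
    · right; left
      rw [center_sub_stick, norm_real_smul_unit he (by linarith [hx.2])]; linarith
    · exact Or.inr (Or.inr ⟨x, ⟨h1, h2⟩, rfl⟩)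
  · right; left
    rw [mem_closedBall, dist_eq_norm, norm_sub_rev] at h
    have h1 : (2 + (2 * ρ - 1) : ℝ) = 2 * ρ + 1 := by ring
    rw [h1] at h
    linarith

lemma localMerge_dumbbell [FiniteDimensional ℂ E] (D : MergeData U e ρ R G₁ G₂) {z : E}
    (hz : z ∈ dumbbell e (2 * ρ - 1)) :
    LocalMerge (dumbbell e (2 * ρ - 1)) (mrg e ρ G₁ G₂) z (mrgLim e ρ G₁ G₂ z) := by
  rcases dumbbell_cases D.he D.hρ hz with h | h | ⟨x, hx, rfl⟩
  · rw [mrgLim_left h]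
    exact (localMerge_left D.he (by linarith [D.hρ]) D.hρR D.hG₁ D.hG₂ D.inj₁ _ h).mono
      (subset_univ _)
  · rw [mrgLim_right D.he D.hρ h]
    exact (localMerge_right D h).mono (subset_univ _)
  · rw [mrgLim_stick D.he D.hρ hx]
    exact localMerge_stick D hx

lemma mrgLim_mem (D : MergeData U e ρ R G₁ G₂) {z : E} (hz : z ∈ dumbbell e (2 * ρ - 1)) :
    mrgLim e ρ G₁ G₂ z ∈ U := by
  rcases dumbbell_cases D.he D.hρ hz with h | h | ⟨x, hx, rfl⟩
  · rw [mrgLim_left h]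
    exact D.maps₁ (mem_ball_zero_iff.2 h)
  · rw [mrgLim_right D.he D.hρ h]
    exact D.maps₂ (mem_ball_zero_iff.2 (by rwa [norm_sub_rev]))
  · rw [mrgLim_stick D.he D.hρ hx]
    exact D.seg _ (by linarith [hx.1]) (by linarith [hx.2])

lemma injOn_mrgLim (D : MergeData U e ρ R G₁ G₂) :
    InjOn (mrgLim e ρ G₁ G₂) (dumbbell e (2 * ρ - 1)) := by
  have he := D.he
  have hρ := D.hρ
  have hsub : ∀ {x : E}, ‖x‖ < ρ → x ∈ ball (0 : E) R := fun h => by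
    rw [mem_ball_zero_iff]; linarith [D.hρR]
  intro a ha b hb hab
  rcases dumbbell_cases he hρ ha with h | h | ⟨x, hx, rfl⟩ <;>
  rcases dumbbell_cases he hρ hb with h' | h' | ⟨y, hy, rfl⟩
  · rw [mrgLim_left h, mrgLim_left h'] at hab
    exact D.inj₁ (hsub h) (hsub h') hab
  · rw [mrgLim_left h, mrgLim_right he hρ h'] at hab
    rw [norm_sub_rev] at h'
    exact absurd hab (D.disj _ (mem_ball_zero_iff.2 h) _ (mem_ball_zero_iff.2 h'))
  · rw [mrgLim_left h, mrgLim_stick he hρ hy] at hab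
    exact absurd hab (D.seg₁ _ (by linarith [hy.1]) (by linarith [hy.2]) _ (mem_ball_zero_iff.2 h))
  · rw [mrgLim_left h', mrgLim_right he hρ h] at hab
    rw [norm_sub_rev] at h
    exact absurd hab.symm (D.disj _ (mem_ball_zero_iff.2 h') _ (mem_ball_zero_iff.2 h))
  · rw [mrgLim_right he hρ h, mrgLim_right he hρ h'] at hab
    rw [norm_sub_rev] at h h'
    exact sub_left_injective (D.inj₂ (hsub h) (hsub h') hab)
  · rw [mrgLim_right he hρ h, mrgLim_stick he hρ hy] at hab
    rw [norm_sub_rev] at h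
    exact absurd hab (D.seg₂ _ (by linarith [hy.1]) (by linarith [hy.2]) _ (mem_ball_zero_iff.2 h))
  · rw [mrgLim_left h', mrgLim_stick he hρ hx] at hab
    exact absurd hab.symm (D.seg₁ _ (by linarith [hx.1]) (by linarith [hx.2]) _
      (mem_ball_zero_iff.2 h'))
  · rw [mrgLim_right he hρ h', mrgLim_stick he hρ hx] at hab
    rw [norm_sub_rev] at h'
    exact absurd hab.symm (D.seg₂ _ (by linarith [hx.1]) (by linarith [hx.2]) _
      (mem_ball_zero_iff.2 h'))
  · rw [mrgLim_stick he hρ hx, mrgLim_stick he hρ hy] at hab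
    have h1 := smul_left_injective ℂ D.gap (add_left_cancel hab)
    have h2 : x - ρ = y - ρ := Complex.ofReal_injective h1
    rw [show x = y by linarith]

/-- The two embedded balls of normalized data can be joined: some embedded unit ball in `U` covers
both concentric closed subballs of radius `t < 1`. The map is the merge map for small `δ`, which is
injective near the dumbbell, composed with a map from `exists_dumbbell_map`. -/
lemma merge_normalized [FiniteDimensional ℂ E] (D : MergeData U e ρ R G₁ G₂) {t : ℝ} (ht : t < 1) :
    ∃ F₀ : E → E, DifferentiableOn ℂ F₀ (ball 0 1) ∧ InjOn F₀ (ball 0 1) ∧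
      MapsTo F₀ (ball 0 1) U ∧ G₁ '' closedBall 0 t ⊆ F₀ '' ball 0 1 ∧
      G₂ '' closedBall 0 t ⊆ F₀ '' ball 0 1 := by
  have : ProperSpace E := FiniteDimensional.proper ℂ E
  have he := D.he
  have hρ := D.hρ
  set K := dumbbell e (2 * ρ - 1) with hK
  have hKc : IsCompact K := isCompact_dumbbell e _
  have loc := fun z (hz : z ∈ K) => localMerge_dumbbell D hz
  have e1 : ∀ᶠ δ in 𝓝[>] (0 : ℝ), InjOn (mrg e ρ G₁ G₂ δ) K :=
    eventually_injOn hKc (fun z hz => (loc z hz).lim) (injOn_mrgLim D) fun z hz => (loc z hz).inj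
  have e2 := eventually_forall_compact (l := 𝓝[>] (0 : ℝ)) (P := fun δ z =>
    ((∀ᶠ y in 𝓝 z, DifferentiableAt ℂ (mrg e ρ G₁ G₂ δ) y) ∧
      Function.Injective (fderiv ℂ (mrg e ρ G₁ G₂ δ) z)) ∧ mrg e ρ G₁ G₂ δ z ∈ U) hKc
    fun z hz => (loc z hz).imm.and ((loc z hz).lim.eventually (D.hU.mem_nhds (mrgLim_mem D hz)))
  obtain ⟨t₂, ht2, ht21⟩ := exists_between ht
  have cover : ∀ {H₁ H₂ : E → E} (n : E), DifferentiableOn ℂ H₁ (ball 0 R) →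
      DifferentiableOn ℂ H₂ (ball 0 R) → InjOn H₁ (ball 0 R) → ∀ᶠ δ in 𝓝[>] (0 : ℝ),
      H₁ '' closedBall 0 t ⊆ mergeMap e ρ H₁ H₂ n (H₂ (-((ρ : ℂ) • e))) δ '' ball 0 t₂ := by
    intro H₁ H₂ n h1 h2 hi
    obtain ⟨hd, hu⟩ := mergeMap_left he (by linarith) D.hρR (show t₂ < ρ by linarith) h1 h2 n
    refine stable_covering isOpen_ball (h1.mono (ball_subset_ball (by linarith [D.hρR])))
      (isCompact_closedBall _ _) (closedBall_subset_ball ht2) (fun x hx => ?_) hd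
      hu.tendstoLocallyUniformlyOn
    exact osgood _ E E H₁ _ isOpen_ball h1 hi rfl rfl x
      (closedBall_subset_ball (by linarith [D.hρR]) hx)
  have e3 := cover (gapVec e ρ G₁ G₂) D.hG₁ D.hG₂ D.inj₁
  have e4 := cover (G₁ ((ρ : ℂ) • e) - G₂ (-((ρ : ℂ) • e))) (differentiableOn_comp_neg D.hG₂)
    (differentiableOn_comp_neg D.hG₁) (fun x hx y hy hxy => neg_injective
      (D.inj₂ (by simpa using hx) (by simpa using hy) hxy))
  obtain ⟨δ, h1, h2, h3, h4⟩ := (e1.and (e2.and (e3.and e4))).exists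
  set Φ := mrg e ρ G₁ G₂ δ with hΦ
  have hloc : ∀ z ∈ K, ∃ u ∈ 𝓝 z, InjOn Φ u := fun z hz => by
    obtain ⟨W, hW, hWo, hzW⟩ := _root_.eventually_nhds_iff.1 (h2 z hz).1.1
    obtain ⟨V, hV, h⟩ := stable_local (l := (pure () : Filter Unit)) (g := fun _ => Φ) hWo
      (fun y hy => (hW y hy).differentiableWithinAt) hzW (h2 z hz).1.2
      (Eventually.of_forall fun _ y hy => (hW y hy).differentiableWithinAt)
      (Metric.tendstoUniformlyOn_iff.2 fun ε hε => Eventually.of_forall fun _ y _ => by simpa)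
    exact ⟨V, hV, h.1⟩
  obtain ⟨T, hT, hTinj⟩ := h1.exists_mem_nhdsSet hKc
    (fun z hz => (h2 z hz).1.1.self_of_nhds.continuousAt) hloc
  set N := interior (T ∩ {y | DifferentiableAt ℂ Φ y ∧ Φ y ∈ U}) with hN
  have hNsub : N ⊆ T ∩ {y | DifferentiableAt ℂ Φ y ∧ Φ y ∈ U} := interior_subset
  have hKN : K ⊆ N := fun z hz => by
    rw [hN, mem_interior_iff_mem_nhds]
    refine inter_mem (mem_nhdsSet_iff_forall.1 hT z hz) ((h2 z hz).1.1.and ?_)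
    exact (h2 z hz).1.1.self_of_nhds.continuousAt.eventually (D.hU.mem_nhds (h2 z hz).2)
  obtain ⟨S, hSd, hSi, hSm, hS1, hS2⟩ := exists_dumbbell_map he (show 0 < 2 * ρ - 1 by linarith)
    isOpen_interior hKN ht21
  refine ⟨Φ ∘ S, ?_, ?_, ?_, ?_, ?_⟩
  · exact DifferentiableOn.comp (t := N)
      (fun y hy => (hNsub hy).2.1.differentiableWithinAt) hSd hSm
  · exact (hTinj.mono fun y hy => (hNsub hy).1).comp hSi hSm
  · exact fun z hz => (hNsub (hSm hz)).2.2
  · rw [image_comp]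
    exact h3.trans (image_mono (ball_subset_closedBall.trans hS1))
  · rw [image_comp]
    rintro _ ⟨z, hz, rfl⟩
    obtain ⟨y, hy, hyz⟩ := h4 ⟨-z, by simpa using hz, rfl⟩
    refine ⟨((2 * ρ + 1 : ℝ) : ℂ) • e - y, hS2 ?_, ?_⟩
    · have h5 : (2 + (2 * ρ - 1) : ℝ) = 2 * ρ + 1 := by ring
      rw [h5, mem_closedBall, dist_eq_norm, sub_sub_cancel_left, norm_neg]
      exact (mem_ball_zero_iff.1 hy).le
    · rw [hΦ, mrg_reflect he, sub_sub_cancel]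
      exact hyz.trans (congrArg G₂ (neg_neg z))

end

/-! ### Merging nearby balls along nearest points -/

section
variable {E : Type*} [NormedAddCommGroup E] [InnerProductSpace ℂ E]

/-- First-order condition at a point of a closed ball whose image under a local
biholomorphism is nearest to `b`. -/
lemma nearest_point_condition [FiniteDimensional ℂ E] {f : E → E} {A : E →L[ℂ] E} {x₀ b : E}
    {ρ : ℝ} (hρ : 0 < ρ) (hx₀ : ‖x₀‖ ≤ ρ) (hf : HasFDerivAt f A x₀) (hA : Function.Injective A)
    (hb : f x₀ ≠ b) (hmin : ∀ x, ‖x‖ ≤ ρ → ‖f x₀ - b‖ ≤ ‖f x - b‖) :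
    ‖x₀‖ = ρ ∧ ∃ l : ℝ, 0 < l ∧ ∀ v, inner ℂ (b - f x₀) (A v) = l * inner ℂ x₀ v := by
  have : CompleteSpace E := FiniteDimensional.complete ℂ E
  let _ : InnerProductSpace ℝ E := InnerProductSpace.rclikeToReal ℂ E
  set n := b - f x₀ with hn
  have hn0 : n ≠ 0 := sub_ne_zero.2 hb.symm
  set g := ContinuousLinearMap.adjoint A n with hg
  have hgA : ∀ v, inner ℂ n (A v) = inner ℂ g v := fun v =>
    (ContinuousLinearMap.adjoint_inner_left A v n).symm
  have hg0 : g ≠ 0 := fun h0 => by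
    have hs : Function.Surjective A :=
      LinearMap.surjective_of_injective (f := (A : E →ₗ[ℂ] E)) hA
    obtain ⟨v, hv⟩ := hs n
    have := hgA v
    rw [hv, h0, inner_zero_left] at this
    exact hn0 (inner_self_eq_zero.1 this)
  have hgpos : 0 < ‖g‖ := norm_pos_iff.2 hg0
  have key : ∀ z : E, ‖z‖ ≤ ρ → (inner ℂ g z).re ≤ (inner ℂ g x₀).re := by
    intro z hz
    have h1 : HasFDerivAt (fun x => ‖f x - b‖ ^ 2) _ x₀ :=
      ((hf.restrictScalars ℝ).sub_const b).norm_sq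
    have h2 : IsLocalMinOn (fun x => ‖f x - b‖ ^ 2) (closedBall 0 ρ) x₀ := by
      filter_upwards [self_mem_nhdsWithin] with x hx
      have := hmin x (mem_closedBall_zero_iff.1 hx)
      gcongr
    have h3 := h2.hasFDerivWithinAt_nonneg h1.hasFDerivWithinAt
      (sub_mem_posTangentConeAt_of_segment_subset (y := z) ((convex_closedBall 0 ρ).segment_subset
        (mem_closedBall_zero_iff.2 hx₀) (mem_closedBall_zero_iff.2 hz)))
    have h4 : (inner ℂ (f x₀ - b) (A (z - x₀))).re ≥ 0 := by
      have h6 : 0 ≤ 2 * inner ℝ (f x₀ - b) (A (z - x₀)) := by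
        simpa [inner_sub_left] using h3
      rw [real_inner_eq_re_inner ℂ] at h6
      exact (mul_nonneg_iff_of_pos_left two_pos).1 h6
    have h5 : f x₀ - b = -n := by rw [hn]; abel
    rw [h5, inner_neg_left, hgA, inner_sub_right, Complex.neg_re, Complex.sub_re] at h4
    linarith
  have h1 := key (((ρ / ‖g‖ : ℝ) : ℂ) • g) (by
    rw [norm_smul, Complex.norm_real, Real.norm_eq_abs, abs_of_pos (by positivity),
      div_mul_cancel₀ _ hgpos.ne'])
  rw [inner_smul_right, inner_self_eq_norm_sq_to_K, Complex.re_ofReal_mul] at h1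
  have h2 : ρ * ‖g‖ ≤ (inner ℂ g x₀).re := by
    refine le_trans (le_of_eq ?_) h1
    have : ((‖g‖ : ℂ) ^ 2).re = ‖g‖ ^ 2 := by rw [← Complex.ofReal_pow, Complex.ofReal_re]
    refine Eq.trans ?_ (congrArg (ρ / ‖g‖ * ·) this.symm)
    field_simp
  have h3 : ‖x₀ - ((ρ / ‖g‖ : ℝ) : ℂ) • g‖ ^ 2 ≤ 0 := by
    rw [norm_sub_sq (𝕜 := ℂ), inner_smul_right, norm_smul, Complex.norm_real, Real.norm_eq_abs,
      abs_of_pos (by positivity), div_mul_cancel₀ _ hgpos.ne', RCLike.re_eq_complex_re,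
      Complex.re_ofReal_mul]
    have h4 : (inner ℂ x₀ g).re = (inner ℂ g x₀).re := by
      rw [← inner_conj_symm, Complex.conj_re]
    rw [h4]
    have h5 : ρ ^ 2 ≤ ρ / ‖g‖ * (inner ℂ g x₀).re := by
      calc ρ ^ 2 = ρ / ‖g‖ * (ρ * ‖g‖) := by field_simp
        _ ≤ _ := by gcongr
    nlinarith [norm_nonneg x₀]
  have h4 : x₀ = ((ρ / ‖g‖ : ℝ) : ℂ) • g := by
    rw [← sub_eq_zero, ← norm_eq_zero]
    exact pow_eq_zero_iff two_ne_zero |>.1 (le_antisymm h3 (by positivity))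
  refine ⟨?_, ‖g‖ / ρ, by positivity, fun v => ?_⟩
  · rw [h4, norm_smul, Complex.norm_real, Real.norm_eq_abs, abs_of_pos (by positivity),
      div_mul_cancel₀ _ hgpos.ne']
  · rw [hgA, h4, inner_smul_left, Complex.conj_ofReal, ← mul_assoc, ← Complex.ofReal_mul]
    have : ‖g‖ / ρ * (ρ / ‖g‖) = 1 := by field_simp
    rw [this, Complex.ofReal_one, one_mul]

/-- A nonzero solution `v` makes `-1 / (r c)` an eigenvalue of `M`, which for all but finitely many
directions `c` is impossible. -/
lemma exists_unit_avoid (M : E →ₗ[ℂ] E) [FiniteDimensional ℂ E] :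
    ∃ c : ℂ, ‖c‖ = 1 ∧ ∀ (r : ℝ) (v : E), 0 < r → v + (r : ℂ) • c • M v = 0 → v = 0 := by
  have hfin : {μ : ℂ | Module.End.HasEigenvalue M μ}.Finite := Module.End.finite_hasEigenvalue M
  have hinf : (sphere (0 : ℂ) 1).Infinite := by
    refine (isPreconnected_sphere (by rw [Complex.rank_real_complex]; norm_num) 0 1).infinite_of_nontrivial
      ⟨1, by simp, -1, by simp, by norm_num⟩
  obtain ⟨c, hc, hcn⟩ := (hinf.sdiff (hfin.image fun μ => -(μ / (‖μ‖ : ℂ))⁻¹)).nonempty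
  have hc1 : ‖c‖ = 1 := by simpa using hc
  have hc0 : c ≠ 0 := fun h => by simp [h] at hc1
  refine ⟨c, hc1, fun r v hr hv => ?_⟩
  by_contra hv0
  refine hcn ⟨-((r : ℂ) * c)⁻¹, ?_, ?_⟩
  · have hr0 : (r : ℂ) * c ≠ 0 := mul_ne_zero (by exact_mod_cast hr.ne') hc0
    refine Module.End.hasEigenvalue_of_hasEigenvector (x := v)
      ⟨Module.End.mem_eigenspace_iff.2 ?_, hv0⟩
    rw [smul_smul] at hv
    have h1 : ((r : ℂ) * c) • M v = -v := by rw [eq_neg_iff_add_eq_zero, add_comm]; exact hv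
    rw [neg_smul, ← smul_neg, ← h1, smul_smul, inv_mul_cancel₀ hr0, one_smul]
  · have h1 : ‖-((r : ℂ) * c)⁻¹‖ = r⁻¹ := by
      rw [norm_neg, norm_inv, norm_mul, hc1, Complex.norm_real, Real.norm_eq_abs, abs_of_pos hr,
        mul_one]
    simp only [h1]
    have hr0 : (r : ℂ) ≠ 0 := by exact_mod_cast hr.ne'
    push_cast
    field_simp

lemma exists_isometry_unit [FiniteDimensional ℂ E] {e w : E} (he : ‖e‖ = 1) (hw : ‖w‖ = 1) :
    ∃ J : E →ₗᵢ[ℂ] E, J e = w := by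
  let L : (ℂ ∙ e) →ₗᵢ[ℂ] E := (LinearIsometry.toSpanSingleton ℂ E hw).comp
    (LinearIsometryEquiv.toSpanUnitSingleton e he).symm.toLinearIsometry
  refine ⟨L.extend, ?_⟩
  have h1 : (LinearIsometryEquiv.toSpanUnitSingleton e he) (1 : ℂ) =
      (⟨e, Submodule.mem_span_singleton_self e⟩ : ℂ ∙ e) := by
    ext; simp
  have h2 := L.extend_apply ⟨e, Submodule.mem_span_singleton_self e⟩
  refine h2.trans ?_
  rw [← h1]
  change LinearIsometry.toSpanSingleton ℂ E hw
    ((LinearIsometryEquiv.toSpanUnitSingleton e he).symm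
      (LinearIsometryEquiv.toSpanUnitSingleton e he 1)) = w
  rw [LinearIsometryEquiv.symm_apply_apply]
  simp

/-- The isometry fixing `e` and multiplying its orthogonal complement by `c`. -/
lemma exists_isometry_twist {e : E} (he : ‖e‖ = 1) {c : ℂ} (hc : ‖c‖ = 1) :
    ∃ J : E →ₗᵢ[ℂ] E, J e = e ∧ ∀ v, inner ℂ e v = 0 → J v = c • v := by
  let L : E →ₗ[ℂ] E := c • LinearMap.id + (1 - c) • (innerSL ℂ e : E →ₗ[ℂ] ℂ).smulRight e
  have hL : ∀ v, L v = c • v + (1 - c) • (inner ℂ e v • e) := fun v => by simp [L]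
  have hdec : ∀ v, L v = inner ℂ e v • e + c • (v - inner ℂ e v • e) := fun v => by
    rw [hL]; module
  refine ⟨⟨L, fun v => ?_⟩, ?_, fun v hv => ?_⟩
  · rw [← sq_eq_sq₀ (norm_nonneg _) (norm_nonneg _), hdec]
    have hp : inner ℂ e (c • (v - inner ℂ e v • e)) = 0 := by
      rw [inner_smul_right, inner_perp he, mul_zero]
    rw [norm_sq_smul_add he _ hp, norm_smul, hc, one_mul, norm_sq_decomp he v]
  · change L e = e
    have hee : inner ℂ e e = (1 : ℂ) := by rw [inner_self_eq_norm_sq_to_K, he]; simp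
    rw [hL, hee]; module
  · change L v = c • v
    rw [hL, hv]; simp
end

section
variable {E : Type*} [NormedAddCommGroup E] [InnerProductSpace ℂ E]

/-- Two disjoint embedded balls which are closer to each other than the second one is to the
complement of `U` can be joined inside `U`: join them along the segment between nearest points. -/
lemma merge_close [FiniteDimensional ℂ E] {U : Set E} (hU : IsOpen U) {ρ R : ℝ} (hρ : 1 < ρ)
    (hρR : ρ < R) {G₁ G₂ : E → E} (hG₁ : DifferentiableOn ℂ G₁ (ball 0 R))
    (hG₂ : DifferentiableOn ℂ G₂ (ball 0 R)) (inj₁ : InjOn G₁ (ball 0 R))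
    (inj₂ : InjOn G₂ (ball 0 R)) (m₁ : MapsTo G₁ (closedBall 0 ρ) U)
    (hdisj : ∀ x ∈ closedBall (0 : E) ρ, ∀ y ∈ closedBall (0 : E) ρ, G₁ x ≠ G₂ y) {r : ℝ}
    (hr : ∀ y ∈ closedBall (0 : E) ρ, ball (G₂ y) r ⊆ U)
    (hclose : ∃ x ∈ closedBall (0 : E) ρ, ∃ y ∈ closedBall (0 : E) ρ, ‖G₁ x - G₂ y‖ < r)
    {t : ℝ} (ht : t < 1) :
    ∃ F₀ : E → E, DifferentiableOn ℂ F₀ (ball 0 1) ∧ InjOn F₀ (ball 0 1) ∧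
      MapsTo F₀ (ball 0 1) U ∧ G₁ '' closedBall 0 t ⊆ F₀ '' ball 0 1 ∧
      G₂ '' closedBall 0 t ⊆ F₀ '' ball 0 1 := by
  have : ProperSpace E := FiniteDimensional.proper ℂ E
  have hρ0 : 0 < ρ := by linarith
  have hsub : closedBall (0 : E) ρ ⊆ ball 0 R := closedBall_subset_ball hρR
  have hcont : ContinuousOn (fun p : E × E => ‖G₁ p.1 - G₂ p.2‖)
      (closedBall 0 ρ ×ˢ closedBall 0 ρ) :=
    (((hG₁.continuousOn.mono hsub).comp continuousOn_fst fun p hp => hp.1).sub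
      ((hG₂.continuousOn.mono hsub).comp continuousOn_snd fun p hp => hp.2)).norm
  obtain ⟨x₁, hx₁, y₁, hy₁, hclose⟩ := hclose
  obtain ⟨⟨x₀, y₀⟩, ⟨hx₀, hy₀⟩, hmin'⟩ := ((isCompact_closedBall (0 : E) ρ).prod
    (isCompact_closedBall (0 : E) ρ)).exists_isMinOn ⟨(x₁, y₁), hx₁, hy₁⟩ hcont
  simp only at hx₀ hy₀
  have hmin : ∀ x ∈ closedBall (0 : E) ρ, ∀ y ∈ closedBall (0 : E) ρ,
      ‖G₁ x₀ - G₂ y₀‖ ≤ ‖G₁ x - G₂ y‖ := fun x hx y hy => hmin' (a := (x, y)) ⟨hx, hy⟩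
  set n := G₂ y₀ - G₁ x₀ with hn
  have hnr : ‖n‖ < r := by
    rw [hn, norm_sub_rev]; exact (hmin x₁ hx₁ y₁ hy₁).trans_lt hclose
  have hd₁ := (hG₁.differentiableAt (isOpen_ball.mem_nhds (hsub hx₀))).hasFDerivAt
  have hd₂ := (hG₂.differentiableAt (isOpen_ball.mem_nhds (hsub hy₀))).hasFDerivAt
  have hA₁ := osgood _ E E G₁ _ isOpen_ball hG₁ inj₁ rfl rfl x₀ (hsub hx₀)
  have hA₂ := osgood _ E E G₂ _ isOpen_ball hG₂ inj₂ rfl rfl y₀ (hsub hy₀)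
  set A₁ := fderiv ℂ G₁ x₀
  set A₂ := fderiv ℂ G₂ y₀
  obtain ⟨hxn, l₁, hl₁, hlin₁⟩ := nearest_point_condition hρ0 (mem_closedBall_zero_iff.1 hx₀) hd₁
    hA₁ (hdisj x₀ hx₀ y₀ hy₀) fun x hx => hmin x (mem_closedBall_zero_iff.2 hx) y₀ hy₀
  obtain ⟨hyn, l₂, hl₂, hlin₂⟩ := nearest_point_condition hρ0 (mem_closedBall_zero_iff.1 hy₀) hd₂
    hA₂ (hdisj x₀ hx₀ y₀ hy₀).symm fun y hy => by
      rw [norm_sub_rev, norm_sub_rev (G₂ y)]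
      exact hmin x₀ hx₀ y (mem_closedBall_zero_iff.2 hy)
  have hρC : (ρ : ℂ) ≠ 0 := by exact_mod_cast hρ0.ne'
  have hunit : ∀ {v : E}, ‖v‖ = ρ → ‖(ρ : ℂ)⁻¹ • v‖ = 1 := fun {v} hv => by
    rw [norm_smul, norm_inv, Complex.norm_real, Real.norm_eq_abs, abs_of_pos hρ0, hv,
      inv_mul_cancel₀ hρ0.ne']
  set e := (ρ : ℂ)⁻¹ • x₀ with he_def
  have he : ‖e‖ = 1 := hunit hxn
  have hρe : (ρ : ℂ) • e = x₀ := smul_inv_smul₀ hρC x₀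
  -- The second ball is precomposed with a unitary map `J` which moves `-e` to the direction of `y₀`
  -- and is twisted by a generic unit `c` on the complement of `e`, so that no convex combination of
  -- the derivatives at the two nearest points degenerates.
  obtain ⟨J₁, hJ₁⟩ := exists_isometry_unit he (w := -((ρ : ℂ)⁻¹ • y₀))
    (by rw [norm_neg]; exact hunit hyn)
  obtain ⟨B, hB⟩ := exists_equiv_of_injective A₁ hA₁ rfl
  have hBA : ∀ v, B v = A₁ v := fun v => by rw [← hB]; rfl
  obtain ⟨c, hc, hcM⟩ := exists_unit_avoid
    ((B.symm : E →L[ℂ] E) ∘L A₂ ∘L J₁.toContinuousLinearMap : E →L[ℂ] E).toLinearMap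
  obtain ⟨J₂, hJ₂, hJ₂'⟩ := exists_isometry_twist he hc
  set J : E ≃ₗᵢ[ℂ] E := (J₁.comp J₂).toLinearIsometryEquiv rfl with hJdef
  have hJ : ∀ v, J v = J₁ (J₂ v) := fun v => rfl
  have hJe : J (-((ρ : ℂ) • e)) = y₀ := by
    rw [hJ, map_neg, map_neg, map_smul, map_smul, hJ₂, hJ₁, smul_neg, neg_neg,
      smul_inv_smul₀ hρC]
  have hJball : ∀ {s : ℝ} {v : E}, v ∈ ball 0 s → J v ∈ ball (0 : E) s := fun hv => by
    simpa using hv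
  have hJinj : InjOn (G₂ ∘ J) (ball 0 R) :=
    inj₂.comp J.injective.injOn fun v hv => hJball hv
  have hgap : gapVec e ρ G₁ (G₂ ∘ J) = n := by
    rw [gapVec, Function.comp_apply, hJe, hρe]
  have hfd : fderiv ℂ (G₂ ∘ J) (-((ρ : ℂ) • e)) =
      A₂ ∘L (J.toContinuousLinearEquiv : E →L[ℂ] E) := by
    refine HasFDerivAt.fderiv ?_
    refine HasFDerivAt.comp (g := G₂) (f := J) _ ?_
      (J.toContinuousLinearEquiv : E →L[ℂ] E).hasFDerivAt
    rw [hJe]; exact hd₂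
  have hlin₁' : ∀ v, inner ℂ n (A₁ v) = ((l₁ * ρ : ℝ) : ℂ) * inner ℂ e v := fun v => by
    rw [hlin₁, ← hρe, inner_smul_left, Complex.conj_ofReal]; push_cast; ring
  have hlin₂' : ∀ v, inner ℂ n (A₂ (J v)) = ((l₂ * ρ : ℝ) : ℂ) * inner ℂ e v := fun v => by
    have h1 := hlin₂ (J v)
    have h2 : G₁ x₀ - G₂ y₀ = -n := by rw [hn, neg_sub]
    rw [h2, inner_neg_left, ← hJe, J.inner_map_map, inner_neg_left, inner_smul_left,
      Complex.conj_ofReal] at h1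
    push_cast
    linear_combination -h1
  have D : MergeData U e ρ R G₁ (G₂ ∘ J) := {
    he := he
    hρ := hρ
    hρR := hρR
    hG₁ := hG₁
    hG₂ := hG₂.comp J.toContinuousLinearEquiv.differentiable.differentiableOn
      fun v hv => hJball hv
    inj₁ := inj₁
    inj₂ := hJinj
    hU := hU
    maps₁ := m₁.mono_left ball_subset_closedBall
    maps₂ := fun v hv => hr _ (ball_subset_closedBall (hJball hv))
      (mem_ball_self ((norm_nonneg n).trans_lt hnr))
    disj := fun x hx y hy => hdisj x (ball_subset_closedBall hx) _
      (ball_subset_closedBall (hJball hy))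
    seg := fun u h0 h1 => by
      rw [hgap, hρe]
      refine hr y₀ hy₀ ?_
      rw [mem_ball, dist_eq_norm]
      have h2 : G₁ x₀ + (u : ℂ) • n - G₂ y₀ = ((u - 1 : ℝ) : ℂ) • n := by
        have h3 : G₂ y₀ = G₁ x₀ + n := by rw [hn]; abel
        rw [h3]; push_cast; module
      rw [h2, norm_smul, Complex.norm_real, Real.norm_eq_abs, abs_of_nonpos (by linarith)]
      nlinarith [norm_nonneg n]
    seg₁ := fun u h0 h1 x hx hxu => by
      rw [hgap, hρe] at hxu
      have h2 := hmin x (ball_subset_closedBall hx) y₀ hy₀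
      have h3 : G₁ x - G₂ y₀ = ((u - 1 : ℝ) : ℂ) • n := by
        have h3 : G₂ y₀ = G₁ x₀ + n := by rw [hn]; abel
        rw [hxu, h3]; push_cast; module
      rw [h3, norm_smul, Complex.norm_real, Real.norm_eq_abs, abs_of_nonpos (by linarith),
        norm_sub_rev, ← hn] at h2
      have hnpos : 0 < ‖n‖ := norm_pos_iff.2 (sub_ne_zero.2 (hdisj x₀ hx₀ y₀ hy₀).symm)
      have hu : u = 0 := by nlinarith
      rw [hu, Complex.ofReal_zero, zero_smul, add_zero] at hxu
      have := inj₁ (hsub (ball_subset_closedBall hx)) (hsub hx₀) hxu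
      rw [this, mem_ball_zero_iff, hxn] at hx
      exact lt_irrefl _ hx
    seg₂ := fun u h0 h1 x hx hxu => by
      rw [hgap, hρe, Function.comp_apply] at hxu
      have h2 := hmin x₀ hx₀ (J x) (ball_subset_closedBall (hJball hx))
      have h3 : G₁ x₀ - G₂ (J x) = -((u : ℂ) • n) := by rw [hxu]; abel
      rw [h3, norm_neg, norm_smul, Complex.norm_real, Real.norm_eq_abs, abs_of_nonneg h0,
        norm_sub_rev, ← hn] at h2
      have hnpos : 0 < ‖n‖ := norm_pos_iff.2 (sub_ne_zero.2 (hdisj x₀ hx₀ y₀ hy₀).symm)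
      have hu : u = 1 := by nlinarith
      have h4 : G₂ (J x) = G₂ y₀ := by
        rw [hxu, hu, Complex.ofReal_one, one_smul, hn]; abel
      have := inj₂ (hsub (ball_subset_closedBall (hJball hx))) (hsub hy₀) h4
      have hx' := hJball hx
      rw [this, mem_ball_zero_iff, hyn] at hx'
      exact lt_irrefl _ hx'
    gap := by rw [hgap]; exact sub_ne_zero.2 (hdisj x₀ hx₀ y₀ hy₀).symm
    lin₁ := ⟨l₁ * ρ, by positivity, fun v => by rw [hgap, hρe]; exact hlin₁' v⟩
    lin₂ := ⟨l₂ * ρ, by positivity, fun v => by rw [hgap, hfd]; exact hlin₂' v⟩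
    inv := fun s t hs ht hst v hv => by
      rw [hfd, hρe] at hv
      change (s : ℂ) • A₁ v + (t : ℂ) • A₂ (J v) = 0 at hv
      have h1 := congrArg (fun w => inner ℂ n w) hv
      simp only [inner_add_right, inner_smul_right, hlin₁', hlin₂', inner_zero_right] at h1
      have h2 : (((s * (l₁ * ρ) + t * (l₂ * ρ)) : ℝ) : ℂ) * inner ℂ e v = 0 := by
        push_cast; push_cast at h1; linear_combination h1
      have hpos : 0 < s * (l₁ * ρ) + t * (l₂ * ρ) := by
        rcases hs.eq_or_lt with h | h
        · have : t = 1 := by linarith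
          rw [← h, this]; positivity
        · positivity
      have hev : inner ℂ e v = 0 :=
        (mul_eq_zero.1 h2).resolve_left (by exact_mod_cast hpos.ne')
      rw [hJ, hJ₂' v hev, map_smul, map_smul] at hv
      have hc0 : c ≠ 0 := fun h => by simp [h] at hc
      rcases hs.eq_or_lt with h | h
      · have ht1 : t = 1 := by linarith
        rw [← h, ht1, Complex.ofReal_zero, zero_smul, zero_add, Complex.ofReal_one, one_smul] at hv
        have h3 := (smul_eq_zero.1 hv).resolve_left hc0
        have h4 : J₁ v = 0 := hA₂ (by rw [h3, map_zero])
        exact J₁.injective (by rw [h4, map_zero])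
      rcases ht.eq_or_lt with h' | h'
      · have hs1 : s = 1 := by linarith
        rw [← h', hs1, Complex.ofReal_zero, zero_smul, add_zero, Complex.ofReal_one, one_smul] at hv
        exact hA₁ (by rw [hv, map_zero])
      · refine hcM (t / s) v (by positivity) ?_
        change v + ((t / s : ℝ) : ℂ) • c • B.symm (A₂ (J₁ v)) = 0
        apply B.injective
        rw [map_add, map_smul, map_smul, B.apply_symm_apply, map_zero, hBA]
        have hs0 : (s : ℂ) ≠ 0 := by exact_mod_cast h.ne'
        have h5 : A₁ v + ((t / s : ℝ) : ℂ) • c • A₂ (J₁ v) =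
            (s : ℂ)⁻¹ • ((s : ℂ) • A₁ v + (t : ℂ) • c • A₂ (J₁ v)) := by
          rw [smul_add, inv_smul_smul₀ hs0, smul_smul (s : ℂ)⁻¹]
          push_cast
          rw [div_eq_inv_mul]
        rw [h5, hv, smul_zero] }
  obtain ⟨F₀, h1, h2, h3, h4, h5⟩ := merge_normalized D ht
  refine ⟨F₀, h1, h2, h3, h4, ?_⟩
  rintro _ ⟨z, hz, rfl⟩
  refine h5 ⟨J.symm z, by simpa using hz, by simp⟩

end

/-! ### Embedded balls -/

section
variable {E : Type u} [NormedAddCommGroup E] [InnerProductSpace ℂ E]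

/-- `F` is an injective holomorphic map from the unit ball into `U`. -/
structure BallEmb (U : Set E) (F : E → E) : Prop where
  holo : DifferentiableOn ℂ F (ball 0 1)
  inj : InjOn F (ball 0 1)
  maps : MapsTo F (ball 0 1) U

lemma BallEmb.mono {U V : Set E} {F : E → E} (h : BallEmb U F) (hUV : U ⊆ V) : BallEmb V F :=
  ⟨h.holo, h.inj, fun _ hx => hUV (h.maps hx)⟩

lemma BallEmb.isOpen_image [FiniteDimensional ℂ E] {U : Set E} {F : E → E} (h : BallEmb U F)
    {V : Set E} (hV : IsOpen V) (hV1 : V ⊆ ball 0 1) : IsOpen (F '' V) :=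
  isOpen_image_of_injOn isOpen_ball h.holo h.inj hV hV1

lemma BallEmb.isCompact_image [FiniteDimensional ℂ E] {U : Set E} {F : E → E} (h : BallEmb U F)
    {ρ : ℝ} (hρ : ρ < 1) : IsCompact (F '' closedBall 0 ρ) := by
  have : ProperSpace E := FiniteDimensional.proper ℂ E
  exact (isCompact_closedBall 0 ρ).image_of_continuousOn
    (h.holo.continuousOn.mono (closedBall_subset_ball hρ))

/-- A compact subset of the image of the open unit ball is covered by a smaller closed ball. -/
lemma BallEmb.exists_closedBall [FiniteDimensional ℂ E] {U : Set E} {F : E → E}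
    (h : BallEmb U F) {K : Set E} (hK : IsCompact K) (hKF : K ⊆ F '' ball 0 1) :
    ∃ τ, 0 < τ ∧ τ < 1 ∧ K ⊆ F '' closedBall 0 τ := by
  have hsub : ∀ τ : Ioo (0 : ℝ) 1, ball (0 : E) τ ⊆ ball 0 1 :=
    fun τ => ball_subset_ball τ.2.2.le
  have : Nonempty (Ioo (0 : ℝ) 1) := ⟨⟨1 / 2, by norm_num, by norm_num⟩⟩
  obtain ⟨τ, hτ⟩ := hK.elim_directed_cover (fun τ : Ioo (0 : ℝ) 1 => F '' ball 0 τ)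
    (fun τ => h.isOpen_image isOpen_ball (hsub τ)) (by
      intro x hx
      obtain ⟨z, hz, rfl⟩ := hKF hx
      obtain ⟨τ, h1, h2⟩ := exists_between (mem_ball_zero_iff.1 hz)
      exact mem_iUnion.2 ⟨⟨τ, (norm_nonneg z).trans_lt h1, h2⟩, z, mem_ball_zero_iff.2 h1, rfl⟩)
    (Monotone.directed_le fun a b hab => image_mono (ball_subset_ball hab))
  exact ⟨τ, τ.2.1, τ.2.2, hτ.trans (image_mono ball_subset_closedBall)⟩

lemma smul_mem_ball_of {a R c : ℝ} (ha : 0 < a) (h : a * R ≤ c) {z : E}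
    (hz : z ∈ ball (0 : E) R) : (a : ℂ) • z ∈ ball (0 : E) c := by
  rw [mem_ball_zero_iff] at hz ⊢
  rw [norm_smul, Complex.norm_real, Real.norm_of_nonneg ha.le]
  exact (mul_lt_mul_of_pos_left hz ha).trans_le h

lemma smul_mem_closedBall_of {a R c : ℝ} (ha : 0 < a) (h : a * R ≤ c) {z : E}
    (hz : z ∈ closedBall (0 : E) R) : (a : ℂ) • z ∈ closedBall (0 : E) c := by
  rw [mem_closedBall_zero_iff] at hz ⊢
  rw [norm_smul, Complex.norm_real, Real.norm_of_nonneg ha.le]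
  exact (mul_le_mul_of_nonneg_left hz ha.le).trans h

lemma smul_inv_mem_closedBall_of {a t c : ℝ} (ha : 0 < a) (h : t ≤ a * c) {z : E}
    (hz : z ∈ closedBall (0 : E) t) :
    ∃ w ∈ closedBall (0 : E) c, (a : ℂ) • w = z := by
  have ha' : (a : ℂ) ≠ 0 := by exact_mod_cast ha.ne'
  refine ⟨(a : ℂ)⁻¹ • z, ?_, smul_inv_smul₀ ha' z⟩
  rw [mem_closedBall_zero_iff] at hz ⊢
  rw [norm_smul, norm_inv, Complex.norm_real, Real.norm_of_nonneg ha.le, inv_mul_le_iff₀ ha]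
  exact hz.trans h

lemma differentiableOn_comp_smul {a R c : ℝ} (ha : 0 < a) (h : a * R ≤ c) {F : E → E}
    (hF : DifferentiableOn ℂ F (ball 0 c)) :
    DifferentiableOn ℂ (fun z => F ((a : ℂ) • z)) (ball 0 R) :=
  hF.comp (g := F) (f := fun z : E => (a : ℂ) • z)
    (differentiable_id.const_smul (a : ℂ)).differentiableOn
    fun _ hz => smul_mem_ball_of ha h hz

lemma injOn_comp_smul {a R c : ℝ} (ha : 0 < a) (h : a * R ≤ c) {F : E → E}
    (hF : InjOn F (ball 0 c)) : InjOn (fun z => F ((a : ℂ) • z)) (ball 0 R) := by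
  intro x hx y hy hxy
  have ha' : (a : ℂ) ≠ 0 := by exact_mod_cast ha.ne'
  exact smul_right_injective E ha' (hF (smul_mem_ball_of ha h hx) (smul_mem_ball_of ha h hy) hxy)

/-- `merge_close` after rescaling, with different radii for the two balls. -/
lemma merge_balls [FiniteDimensional ℂ E] {U V W : Set E} (hU : IsOpen U) {G₁ G₂ : E → E}
    (h₁ : BallEmb V G₁) (h₂ : BallEmb W G₂) {t₁ ρ₁ t₂ ρ₂ r : ℝ}
    (ht₁ : 0 < t₁) (htρ₁ : t₁ < ρ₁) (hρ₁ : ρ₁ < 1) (ht₂ : 0 < t₂) (htρ₂ : t₂ < ρ₂)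
    (hρ₂ : ρ₂ < 1) (m₁ : MapsTo G₁ (closedBall 0 ρ₁) U)
    (hdisj : ∀ x ∈ closedBall (0 : E) ρ₁, ∀ y ∈ closedBall (0 : E) ρ₂, G₁ x ≠ G₂ y)
    (hr : ∀ y ∈ closedBall (0 : E) ρ₂, ball (G₂ y) r ⊆ U)
    (hclose : ∃ x ∈ closedBall (0 : E) ρ₁, ∃ y ∈ closedBall (0 : E) ρ₂, ‖G₁ x - G₂ y‖ < r) :
    ∃ F₀, BallEmb U F₀ ∧ G₁ '' closedBall 0 t₁ ⊆ F₀ '' ball 0 1 ∧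
      G₂ '' closedBall 0 t₂ ⊆ F₀ '' ball 0 1 := by
  have hρ₁0 : 0 < ρ₁ := ht₁.trans htρ₁
  have hρ₂0 : 0 < ρ₂ := ht₂.trans htρ₂
  -- The common factor by which the inner balls `closedBall 0 (ρᵢ / L) ⊇ closedBall 0 tᵢ` shrink.
  obtain ⟨L, hL1, hL⟩ := exists_between
    (lt_min ((one_lt_div ht₁).2 htρ₁) ((one_lt_div ht₂).2 htρ₂))
  have hL0 : 0 < L := by linarith
  have hLt₁ : L * t₁ < ρ₁ := (lt_div_iff₀ ht₁).1 (hL.trans_le (min_le_left _ _))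
  have hLt₂ : L * t₂ < ρ₂ := (lt_div_iff₀ ht₂).1 (hL.trans_le (min_le_right _ _))
  have ha₁ : 0 < ρ₁ / L := by positivity
  have ha₂ : 0 < ρ₂ / L := by positivity
  have hR₁ : ρ₁ / L * min (L / ρ₁) (L / ρ₂) ≤ 1 := by
    calc ρ₁ / L * min (L / ρ₁) (L / ρ₂) ≤ ρ₁ / L * (L / ρ₁) := by gcongr; exact min_le_left _ _
      _ = 1 := by field_simp
  have hR₂ : ρ₂ / L * min (L / ρ₁) (L / ρ₂) ≤ 1 := by
    calc ρ₂ / L * min (L / ρ₁) (L / ρ₂) ≤ ρ₂ / L * (L / ρ₂) := by gcongr; exact min_le_right _ _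
      _ = 1 := by field_simp
  have e₁ : ρ₁ / L * L = ρ₁ := div_mul_cancel₀ _ hL0.ne'
  have e₂ : ρ₂ / L * L = ρ₂ := div_mul_cancel₀ _ hL0.ne'
  obtain ⟨x, hx, y, hy, hxy⟩ := hclose
  obtain ⟨x', hx', rfl⟩ := smul_inv_mem_closedBall_of ha₁ e₁.ge hx
  obtain ⟨y', hy', rfl⟩ := smul_inv_mem_closedBall_of ha₂ e₂.ge hy
  obtain ⟨F₀, f1, f2, f3, f4, f5⟩ := merge_close hU hL1
    (lt_min ((lt_div_iff₀ hρ₁0).2 (by nlinarith)) ((lt_div_iff₀ hρ₂0).2 (by nlinarith)))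
    (differentiableOn_comp_smul ha₁ hR₁ h₁.holo) (differentiableOn_comp_smul ha₂ hR₂ h₂.holo)
    (injOn_comp_smul ha₁ hR₁ h₁.inj) (injOn_comp_smul ha₂ hR₂ h₂.inj)
    (fun z hz => m₁ (smul_mem_closedBall_of ha₁ e₁.le hz))
    (fun x hx y hy => hdisj _ (smul_mem_closedBall_of ha₁ e₁.le hx) _
      (smul_mem_closedBall_of ha₂ e₂.le hy))
    (fun y hy => hr _ (smul_mem_closedBall_of ha₂ e₂.le hy))
    ⟨x', hx', y', hy', hxy⟩
    (t := max (L * t₁ / ρ₁) (L * t₂ / ρ₂))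
    (max_lt ((div_lt_one hρ₁0).2 hLt₁) ((div_lt_one hρ₂0).2 hLt₂))
  refine ⟨F₀, ⟨f1, f2, f3⟩, ?_, ?_⟩
  · rintro _ ⟨z, hz, rfl⟩
    obtain ⟨w, hw, rfl⟩ := smul_inv_mem_closedBall_of ha₁ (c := max (L * t₁ / ρ₁) (L * t₂ / ρ₂)) (by
      calc t₁ = ρ₁ / L * (L * t₁ / ρ₁) := by field_simp
        _ ≤ _ := by gcongr; exact le_max_left _ _) hz
    exact f4 ⟨w, hw, rfl⟩
  · rintro _ ⟨z, hz, rfl⟩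
    obtain ⟨w, hw, rfl⟩ := smul_inv_mem_closedBall_of ha₂ (c := max (L * t₁ / ρ₁) (L * t₂ / ρ₂)) (by
      calc t₂ = ρ₂ / L * (L * t₂ / ρ₂) := by field_simp
        _ ≤ _ := by gcongr; exact le_max_right _ _) hz
    exact f5 ⟨w, hw, rfl⟩

end

/-! ### Merging in a connected open set -/

section
variable {E : Type u} [NormedAddCommGroup E] [InnerProductSpace ℂ E]

lemma one_lt_rank_real [Nontrivial E] : 1 < Module.rank ℝ E := by
  rw [rank_real_of_complex]
  have h : 1 ≤ Module.rank ℂ E := Cardinal.one_le_iff_pos.2 rank_pos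
  calc (1 : Cardinal) < 2 * 1 := by norm_num
    _ ≤ 2 * Module.rank ℂ E := by gcongr

lemma isPreconnected_annulus [Nontrivial E] {ρ : ℝ} (hρ : 0 < ρ) :
    IsPreconnected (ball (0 : E) 1 \ closedBall 0 ρ) := by
  have h : IsPreconnected ((fun p : E × ℝ => p.2 • p.1) '' (sphere (0 : E) 1 ×ˢ Ioo ρ 1)) :=
    ((isPreconnected_sphere one_lt_rank_real 0 1).prod isPreconnected_Ioo).image _
      (continuous_snd.smul continuous_fst).continuousOn
  convert h using 1
  ext z
  simp only [Set.mem_sdiff, mem_ball_zero_iff, mem_closedBall_zero_iff, not_le, mem_image, mem_prod,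
    mem_sphere_zero_iff_norm, mem_Ioo, Prod.exists]
  constructor
  · rintro ⟨h1, h2⟩
    have hz : ‖z‖ ≠ 0 := (hρ.trans h2).ne'
    refine ⟨‖z‖⁻¹ • z, ‖z‖, ⟨?_, h2, h1⟩, smul_inv_smul₀ hz z⟩
    rw [norm_smul, norm_inv, norm_norm, inv_mul_cancel₀ hz]
  · rintro ⟨x, c, ⟨hx, h2, h1⟩, rfl⟩
    rw [norm_smul, hx, mul_one, Real.norm_of_nonneg (hρ.trans h2).le]
    exact ⟨h1, h2⟩

/-- Removing a closed embedded ball does not disconnect `U`, because the collar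
`F '' (ball 0 1 \ closedBall 0 ρ)` around it is connected. -/
lemma BallEmb.isPreconnected_diff [FiniteDimensional ℂ E] [Nontrivial E] {U : Set E}
    (hU : IsOpen U) (hUc : IsPreconnected U) {F : E → E} (h : BallEmb U F) {ρ : ℝ} (hρ0 : 0 < ρ)
    (hρ : ρ < 1) : IsPreconnected (U \ F '' closedBall 0 ρ) := by
  have hs : IsOpen (U \ F '' closedBall 0 ρ) := hU.sdiff (h.isCompact_image hρ).isClosed
  have hmem : ∀ z ∈ ball (0 : E) 1, F z ∈ U \ F '' closedBall 0 ρ → F z ∈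
      F '' (ball 0 1 \ closedBall 0 ρ) := fun z hz hFz =>
    ⟨z, ⟨hz, fun hz' => hFz.2 ⟨z, hz', rfl⟩⟩, rfl⟩
  have hcol : F '' (ball 0 1 \ closedBall 0 ρ) ⊆ U \ F '' closedBall 0 ρ := by
    rintro _ ⟨z, ⟨hz, hz'⟩, rfl⟩
    refine ⟨h.maps hz, ?_⟩
    rintro ⟨w, hw, hwz⟩
    exact hz' (h.inj (closedBall_subset_ball hρ hw) hz hwz ▸ hw)
  have key : ∀ u v : Set E, IsOpen u → IsOpen v → U \ F '' closedBall 0 ρ ⊆ u ∪ v →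
      U \ F '' closedBall 0 ρ ∩ (u ∩ v) = ∅ → F '' (ball 0 1 \ closedBall 0 ρ) ⊆ u →
      U \ F '' closedBall 0 ρ ⊆ u := by
    intro u v hu hv huv hdis hann
    have hdis' : ∀ x ∈ U \ F '' closedBall 0 ρ, x ∈ u → x ∉ v := fun x hx hxu hxv => by
      have : x ∈ (∅ : Set E) := hdis ▸ ⟨hx, hxu, hxv⟩
      exact this
    have hFv : ∀ z ∈ ball (0 : E) 1, F z ∈ U \ F '' closedBall 0 ρ → F z ∉ v := fun z hz hFz =>
      hdis' _ hFz (hann (hmem z hz hFz))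
    have := isPreconnected_iff_subset_of_disjoint.1 hUc
      ((u ∩ (U \ F '' closedBall 0 ρ)) ∪ F '' ball 0 1) (v ∩ (U \ F '' closedBall 0 ρ))
      ((hu.inter hs).union (h.isOpen_image isOpen_ball subset_rfl)) (hv.inter hs) (by
        intro x hx
        by_cases hx' : x ∈ F '' closedBall 0 ρ
        · exact Or.inl (Or.inr (image_mono (closedBall_subset_ball hρ) hx'))
        · rcases huv ⟨hx, hx'⟩ with hne | hne
          · exact Or.inl (Or.inl ⟨hne, hx, hx'⟩)
          · exact Or.inr ⟨hne, hx, hx'⟩)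
      (by
        rw [eq_empty_iff_forall_notMem]
        rintro x ⟨-, h1 | ⟨z, hz, rfl⟩, hxv, hxs⟩
        · exact hdis' x hxs h1.1 hxv
        · exact hFv z hz hxs hxv)
    rcases this with hne | hne
    · intro x hx
      rcases hne hx.1 with h1 | ⟨z, hz, rfl⟩
      · exact h1.1
      · exact hann (hmem z hz hx)
    · exact absurd ⟨0, mem_closedBall_self hρ0.le, rfl⟩
        (hne (h.maps (mem_ball_self one_pos))).2.2
  rw [isPreconnected_iff_subset_of_disjoint]
  intro u v hu hv huv hdis
  have hpc : IsPreconnected (F '' (ball 0 1 \ closedBall 0 ρ)) :=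
    (isPreconnected_annulus hρ0).image F (h.holo.continuousOn.mono sdiff_subset)
  rcases isPreconnected_iff_subset_of_disjoint.1 hpc u v hu hv (hcol.trans huv)
    (subset_eq_empty (inter_subset_inter_left _ hcol) hdis) with hne | hne
  · exact Or.inl (key u v hu hv huv hdis hne)
  · exact Or.inr (key v u hv hu (by rwa [union_comm]) (by rwa [inter_comm v]) hne)

/-- In a connected open set, any point can be absorbed by an embedded ball covering a prescribed
embedded compact ball: the points which can be absorbed form an open set, and one relatively closed
by merging with tiny round balls. -/
lemma BallEmb.exists_absorb [FiniteDimensional ℂ E] {U : Set E} (hU : IsOpen U)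
    (hUc : IsPreconnected U) {F : E → E} (h : BallEmb U F) {t : ℝ} (ht : t < 1)
    {q : E} (hq : q ∈ U) :
    ∃ F₀, BallEmb U F₀ ∧ F '' closedBall 0 t ⊆ F₀ '' ball 0 1 ∧ q ∈ F₀ '' ball 0 1 := by
  set S : Set E := {q | ∃ F₀, BallEmb U F₀ ∧ F '' closedBall 0 t ⊆ F₀ '' ball 0 1 ∧
    q ∈ F₀ '' ball 0 1} with hS
  have hSo : IsOpen S := by
    rw [isOpen_iff_mem_nhds]
    rintro x ⟨F₀, h0, h1, h2⟩
    exact mem_of_superset ((h0.isOpen_image isOpen_ball subset_rfl).mem_nhds h2)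
      fun y hy => ⟨F₀, h0, h1, hy⟩
  refine hUc.subset_of_closure_inter_subset hSo ⟨F 0, h.maps (mem_ball_self one_pos), F, h,
    image_mono (closedBall_subset_ball ht), 0, mem_ball_self one_pos, rfl⟩ ?_ hq
  rintro q ⟨hqS, hqU⟩
  obtain ⟨r, hr, hrU⟩ := Metric.isOpen_iff.1 hU q hqU
  obtain ⟨q', ⟨F₀, h0, hcov, hq'⟩, hqq'⟩ := Metric.mem_closure_iff.1 hqS (r / 2) (by positivity)
  obtain ⟨τ, hτ0, hτ1, hτ⟩ := h0.exists_closedBall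
    ((h.isCompact_image ht).union isCompact_singleton)
    (union_subset hcov (singleton_subset_iff.2 hq'))
  by_cases hqF : q ∈ F₀ '' ball 0 1
  · exact ⟨F₀, h0, hcov, hqF⟩
  obtain ⟨ρ, hτρ, hρ1⟩ := exists_between hτ1
  have hqc : q ∈ (F₀ '' closedBall 0 ρ)ᶜ := fun hc =>
    hqF (image_mono (closedBall_subset_ball hρ1) hc)
  obtain ⟨δ, hδ, hδs⟩ := Metric.isOpen_iff.1
    (h0.isCompact_image hρ1).isClosed.isOpen_compl q hqc
  set ε : ℝ := min (r / 2) δ with hε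
  have hε0 : 0 < ε := lt_min (by positivity) hδ
  have hε' : (ε : ℂ) ≠ 0 := by exact_mod_cast hε0.ne'
  -- The tiny round ball `z ↦ q + ε z` avoids `F₀ '' closedBall 0 ρ`.
  have hnorm : ∀ z ∈ ball (0 : E) 1, dist (q + (ε : ℂ) • z) q < ε := fun z hz => by
    rw [dist_eq_norm, add_sub_cancel_left]
    exact mem_ball_zero_iff.1 (smul_mem_ball_of hε0 (mul_one ε).le hz)
  have hG : BallEmb univ (fun z : E => q + (ε : ℂ) • z) :=
    ⟨((differentiable_id.const_smul (ε : ℂ)).const_add q).differentiableOn,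
      fun x _ y _ hxy => smul_right_injective E hε' (add_left_cancel hxy), fun _ _ => mem_univ _⟩
  obtain ⟨x', hx', rfl⟩ := hτ (Or.inr rfl)
  obtain ⟨F₁, h1, h2, h3⟩ := merge_balls hU h0 hG hτ0 hτρ hρ1 hτ0 hτρ hρ1
    (fun z hz => h0.maps (closedBall_subset_ball hρ1 hz))
    (fun x hx y hy hxy => hδs (mem_ball.2 ((hnorm y (closedBall_subset_ball hρ1 hy)).trans_le
      (min_le_right _ _))) ⟨x, hx, hxy⟩)
    (r := r / 2) (fun y hy z hz => hrU (by
      have e1 := (hnorm y (closedBall_subset_ball hρ1 hy)).trans_le (min_le_left _ _)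
      have e2 := mem_ball.1 hz
      have e3 := dist_triangle z (q + (ε : ℂ) • y) q
      rw [mem_ball]; linarith))
    ⟨x', closedBall_subset_closedBall hτρ.le hx', 0, mem_closedBall_self (hτ0.trans hτρ).le, by
      rw [smul_zero, add_zero, ← dist_eq_norm, dist_comm]; exact hqq'⟩
  exact ⟨F₁, h1, (subset_union_left.trans hτ).trans h2,
    h3 ⟨0, mem_closedBall_self hτ0.le, by simp⟩⟩

/-- Two disjoint embedded balls in a connected open set, slightly shrunk, lie in a single one. -/
lemma BallEmb.merge_two [FiniteDimensional ℂ E] [Nontrivial E] {U : Set E} (hU : IsOpen U)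
    (hUc : IsPreconnected U) {F G : E → E} (hF : BallEmb U F) (hG : BallEmb U G)
    (hdisj : Disjoint (F '' ball 0 1) (G '' ball 0 1)) {t : ℝ} (ht0 : 0 < t) (ht : t < 1) :
    ∃ F₀, BallEmb U F₀ ∧ F '' closedBall 0 t ⊆ F₀ '' ball 0 1 ∧
      G '' closedBall 0 t ⊆ F₀ '' ball 0 1 := by
  obtain ⟨ρ, htρ, hρ1⟩ := exists_between ht
  have hρ0 : 0 < ρ := ht0.trans htρ
  have hcpt := hG.isCompact_image hρ1
  have hUo : IsOpen (U \ G '' closedBall 0 ρ) := hU.sdiff hcpt.isClosed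
  have hF' : BallEmb (U \ G '' closedBall 0 ρ) F := ⟨hF.holo, hF.inj, fun z hz =>
    ⟨hF.maps hz, fun hc => disjoint_left.1 hdisj ⟨z, hz, rfl⟩
      (image_mono (closedBall_subset_ball hρ1) hc)⟩⟩
  obtain ⟨r, hr, hrU⟩ := hcpt.exists_thickening_subset_open hU
    ((image_mono (closedBall_subset_ball hρ1)).trans hG.maps.image_subset)
  have hr' : ∀ y ∈ closedBall (0 : E) ρ, ball (G y) r ⊆ U := fun y hy z hz =>
    hrU (mem_thickening_iff.2 ⟨G y, ⟨y, hy, rfl⟩, mem_ball.1 hz⟩)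
  obtain ⟨e, he⟩ := exists_norm_eq E zero_le_one
  -- A point of `G '' ball 0 1` just outside `G '' closedBall 0 ρ`.
  have hnorm : ∀ c : ℝ, 0 < c → ‖(c : ℂ) • e‖ = c := fun c hc => by
    rw [norm_smul, he, Complex.norm_real, Real.norm_of_nonneg hc.le, mul_one]
  have hcont : ContinuousAt (fun c : ℝ => G ((c : ℂ) • e)) ρ := by
    refine ContinuousAt.comp (g := G) (f := fun c : ℝ => (c : ℂ) • e) ?_
      (Complex.continuous_ofReal.smul continuous_const).continuousAt
    exact hG.holo.continuousOn.continuousAt (isOpen_ball.mem_nhds (by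
      rw [mem_ball_zero_iff, hnorm ρ hρ0]; exact hρ1))
  have hev : ∀ᶠ c : ℝ in 𝓝[>] ρ, dist (G ((c : ℂ) • e)) (G ((ρ : ℂ) • e)) < r ∧ c < 1 ∧ ρ < c :=
    ((hcont.eventually (ball_mem_nhds _ hr)).filter_mono nhdsWithin_le_nhds).and
      (((eventually_lt_nhds hρ1).filter_mono nhdsWithin_le_nhds).and self_mem_nhdsWithin)
  obtain ⟨c, hc, hc1, hρc⟩ := hev.exists
  have hcb : (c : ℂ) • e ∈ ball (0 : E) 1 := by
    rw [mem_ball_zero_iff, hnorm c (hρ0.trans hρc)]; exact hc1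
  have hqU : G ((c : ℂ) • e) ∈ U \ G '' closedBall 0 ρ := by
    refine ⟨hG.maps hcb, ?_⟩
    rintro ⟨w, hw, hwc⟩
    have := hG.inj (closedBall_subset_ball hρ1 hw) hcb hwc
    rw [this, mem_closedBall_zero_iff, hnorm c (hρ0.trans hρc)] at hw
    exact absurd hw (not_le.2 hρc)
  obtain ⟨F₀, h0, hcov, hq⟩ := hF'.exists_absorb hUo (hG.isPreconnected_diff hU hUc hρ0 hρ1) ht hqU
  obtain ⟨τ, hτ0, hτ1, hτ⟩ := h0.exists_closedBall
    ((hF.isCompact_image ht).union isCompact_singleton)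
    (union_subset hcov (singleton_subset_iff.2 hq))
  obtain ⟨ρ', hτρ, hρ'⟩ := exists_between hτ1
  obtain ⟨x', hx', hx'q⟩ := hτ (Or.inr rfl)
  obtain ⟨F₁, h1, h2, h3⟩ := merge_balls hU h0 hG hτ0 hτρ hρ' ht0 htρ hρ1
    (fun z hz => (h0.maps (closedBall_subset_ball hρ' hz)).1)
    (fun x hx y hy hxy => (h0.maps (closedBall_subset_ball hρ' hx)).2 ⟨y, hy, hxy.symm⟩)
    hr' ⟨x', closedBall_subset_closedBall hτρ.le hx', (ρ : ℂ) • e, by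
      rw [mem_closedBall_zero_iff, hnorm ρ hρ0], by
      rw [hx'q, ← dist_eq_norm]; exact hc⟩
  exact ⟨F₁, h1, (subset_union_left.trans hτ).trans h2, h3⟩

end

/-! ### Finitely many balls -/

section
variable {E : Type u} [NormedAddCommGroup E] [InnerProductSpace ℂ E]

/-- Finitely many disjoint embedded unit balls, slightly shrunk, lie in a single one. The induction
removes the last ball from `U`, merges the others in what remains, then merges with the last. -/
lemma exists_merge_all [FiniteDimensional ℂ E] (N : ℕ) : ∀ {U : Set E}, IsOpen U →
    IsPreconnected U → ∀ {F : Fin (N + 1) → E → E}, (∀ j, BallEmb U (F j)) →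
    (∀ i j, i ≠ j → Disjoint (F i '' ball 0 1) (F j '' ball 0 1)) → ∀ {t : ℝ}, 0 < t → t < 1 →
    ∃ F₀, BallEmb U F₀ ∧ ∀ j, F j '' closedBall 0 t ⊆ F₀ '' ball 0 1 := by
  induction N with
  | zero =>
    intro U _ _ F hF _ t _ ht
    refine ⟨F 0, hF 0, fun j => ?_⟩
    rw [Fin.fin_one_eq_zero j]
    exact image_mono (closedBall_subset_ball ht)
  | succ N ih =>
    intro U hU hUc F hF hdisj t ht0 ht
    have hlast : ∀ i : Fin (N + 1), i.castSucc ≠ Fin.last (N + 1) :=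
      fun i => (Fin.castSucc_lt_last i).ne
    -- In dimension zero two embedded balls cannot be disjoint.
    have : Nontrivial E := ⟨F (Fin.castSucc 0) 0, F (Fin.last (N + 1)) 0, fun heq =>
      disjoint_left.1 (hdisj _ _ (hlast 0)) ⟨0, mem_ball_self one_pos, rfl⟩
        ⟨0, mem_ball_self one_pos, heq.symm⟩⟩
    obtain ⟨t', htt', ht'⟩ := exists_between ht
    have ht'0 : 0 < t' := ht0.trans htt'
    set L := F (Fin.last (N + 1)) with hL
    have hLe : BallEmb U L := hF _
    obtain ⟨F₀, h0, hcov⟩ := ih (U := U \ L '' closedBall 0 t')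
      (hU.sdiff (hLe.isCompact_image ht').isClosed) (hLe.isPreconnected_diff hU hUc ht'0 ht')
      (F := fun i => F i.castSucc)
      (fun i => ⟨(hF _).holo, (hF _).inj, fun z hz => ⟨(hF _).maps hz, fun hc =>
        disjoint_left.1 (hdisj _ _ (hlast i)) ⟨z, hz, rfl⟩
          (image_mono (closedBall_subset_ball ht') hc)⟩⟩)
      (fun i j hij => hdisj _ _ fun h => hij (Fin.castSucc_injective _ h)) ht0 ht
    have hm : t' * 1 ≤ 1 := by linarith
    have hG : BallEmb U (fun z => L ((t' : ℂ) • z)) :=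
      ⟨differentiableOn_comp_smul ht'0 hm hLe.holo, injOn_comp_smul ht'0 hm hLe.inj,
        fun z hz => hLe.maps (smul_mem_ball_of ht'0 hm hz)⟩
    obtain ⟨τ, hτ0, hτ1, hτ⟩ := h0.exists_closedBall
      (isCompact_iUnion fun i : Fin (N + 1) => (hF i.castSucc).isCompact_image ht)
      (iUnion_subset hcov)
    obtain ⟨F₁, h1, h2, h3⟩ := (h0.mono sdiff_subset).merge_two hU hUc hG (by
        rw [disjoint_left]
        rintro _ ⟨x, hx, rfl⟩ ⟨y, hy, hxy⟩
        exact (h0.maps hx).2 ⟨_, smul_mem_closedBall_of ht'0 (mul_one t').le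
          (ball_subset_closedBall hy), hxy⟩)
      (t := max τ (t / t')) (lt_max_of_lt_left hτ0) (max_lt hτ1 ((div_lt_one ht'0).2 htt'))
    refine ⟨F₁, h1, fun j => ?_⟩
    induction j using Fin.lastCases with
    | last =>
      rintro _ ⟨z, hz, rfl⟩
      obtain ⟨w, hw, rfl⟩ := smul_inv_mem_closedBall_of ht'0 (c := max τ (t / t')) (by
        calc t = t' * (t / t') := by field_simp
          _ ≤ _ := by gcongr; exact le_max_right _ _) hz
      exact h3 ⟨w, hw, rfl⟩
    | cast i =>
      exact (((subset_iUnion (fun i : Fin (N + 1) => F i.castSucc '' closedBall 0 t) i).trans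
        hτ).trans (image_mono (closedBall_subset_closedBall (le_max_left _ _)))).trans h2

end

/-- **Corollary 2.2.** Given finitely many injective holomorphic maps
`F_j : B^m(0,r_j) → U`, `j = 0,…,N` (so `N + 1 ≥ 1` maps), into a connected open set
`U ⊆ ℂ^m` with pairwise disjoint images, and `0 < s < 1`, there is an injective holomorphic
map `F₀ : B^m(0,1) → U` whose image contains `F_0(B^m(0, s·r_0))` together with
`F_j(B^m(0, s·r_j/32))` for every `j ≠ 0`. -/
theorem exists_injective_holomorphic_ball_containing_finitely_many {m N : ℕ}
    (U : Set (EuclideanSpace ℂ (Fin m))) (hUopen : IsOpen U) (hUconn : IsConnected U)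
    (r : Fin (N + 1) → ℝ) (hr : ∀ j, 0 < r j)
    (F : Fin (N + 1) → EuclideanSpace ℂ (Fin m) → EuclideanSpace ℂ (Fin m))
    (hF : ∀ j, DifferentiableOn ℂ (F j) (ball 0 (r j)))
    (hFinj : ∀ j, Set.InjOn (F j) (ball 0 (r j)))
    (hFU : ∀ j, F j '' ball 0 (r j) ⊆ U)
    (hdisj : ∀ i j, i ≠ j → Disjoint (F i '' ball 0 (r i)) (F j '' ball 0 (r j)))
    (s : ℝ) (hs0 : 0 < s) (hs1 : s < 1) :
    ∃ F₀ : EuclideanSpace ℂ (Fin m) → EuclideanSpace ℂ (Fin m),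
      DifferentiableOn ℂ F₀ (ball 0 1) ∧ Set.InjOn F₀ (ball 0 1) ∧
      F₀ '' ball 0 1 ⊆ U ∧
      F 0 '' ball 0 (s * r 0) ⊆ F₀ '' ball 0 1 ∧
      ∀ j, j ≠ 0 → F j '' ball 0 (s * r j / 32) ⊆ F₀ '' ball 0 1 := by
  have hm : ∀ j, r j * 1 ≤ r j := fun j => (mul_one _).le
  obtain ⟨F₀, h0, hcov⟩ := exists_merge_all N hUopen hUconn.isPreconnected
    (F := fun j z => F j ((r j : ℂ) • z))
    (fun j => ⟨differentiableOn_comp_smul (hr j) (hm j) (hF j),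
      injOn_comp_smul (hr j) (hm j) (hFinj j),
      fun z hz => hFU j ⟨_, smul_mem_ball_of (hr j) (hm j) hz, rfl⟩⟩)
    (fun i j hij => (hdisj i j hij).mono
      (by rintro _ ⟨z, hz, rfl⟩; exact ⟨_, smul_mem_ball_of (hr i) (hm i) hz, rfl⟩)
      (by rintro _ ⟨z, hz, rfl⟩; exact ⟨_, smul_mem_ball_of (hr j) (hm j) hz, rfl⟩))
    hs0 hs1
  have hcov' : ∀ j, F j '' ball 0 (s * r j) ⊆ F₀ '' ball 0 1 := by
    rintro j _ ⟨z, hz, rfl⟩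
    obtain ⟨w, hw, rfl⟩ := smul_inv_mem_closedBall_of (hr j) (mul_comm s (r j)).le
      (ball_subset_closedBall hz)
    exact hcov j ⟨w, hw, rfl⟩
  refine ⟨F₀, h0.holo, h0.inj, h0.maps.image_subset, hcov' 0, fun j _ => ?_⟩
  -- The factor `1 / 32` is not needed: the full balls of radius `s * r j` are covered.
  refine (Set.image_mono (ball_subset_ball ?_)).trans (hcov' j)
  have := mul_pos hs0 (hr j)
  linarith
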